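/- Suppose the ODE γ' = V(t,γ) is uniquely solved by a flow X. Then for each S ∈ [0,T] and each probability measure μ on ℝ^d, the curve μ_t = (X_S^t)_♯ μ is the unique solution of the continuity equation in C([0,T], M⁺(ℝ^d)) with μ_S = μ. -/

import Mathlib

open MeasureTheory Set
open scoped ENNReal NNReal Topology

noncomputable section

/-- A solution of the ODE `γ' = V(t,γ)` on `[0,T]`, in integral form. -/
def IsSolution {d : ℕ} (T : ℝ) (hT : 0 ≤ T)
    (V : ℝ → EuclideanSpace ℝ (Fin d) → EuclideanSpace ℝ (Fin d))
    (γ : C(Set.Icc (0:ℝ) T, EuclideanSpace ℝ (Fin d))) : Prop :=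
  ∀ t : Set.Icc (0:ℝ) T,
    γ t - γ ⟨0, Set.left_mem_Icc.mpr hT⟩ =
      ∫ s in (0:ℝ)..(t:ℝ), V s (γ (Set.projIcc 0 T hT s))

/-- `X` is a flow of solutions of the ODE. -/
def IsFlow {d : ℕ} (T : ℝ) (hT : 0 ≤ T)
    (V : ℝ → EuclideanSpace ℝ (Fin d) → EuclideanSpace ℝ (Fin d))
    (X : ℝ → ℝ → EuclideanSpace ℝ (Fin d) → EuclideanSpace ℝ (Fin d)) : Prop :=
  ∀ (t : ℝ) (ht : t ∈ Set.Icc (0:ℝ) T) (x : EuclideanSpace ℝ (Fin d)),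
    ∃ γ : C(Set.Icc (0:ℝ) T, EuclideanSpace ℝ (Fin d)),
      IsSolution T hT V γ ∧ γ ⟨t, ht⟩ = x ∧
      (∀ s : Set.Icc (0:ℝ) T, X t s x = γ s) ∧
      (∀ γ' : C(Set.Icc (0:ℝ) T, EuclideanSpace ℝ (Fin d)),
        IsSolution T hT V γ' → γ' ⟨t, ht⟩ = x → γ' = γ)

/-- A (nonnegative-)measure-valued solution of the continuity equation,
in weak (integral) form. -/
def IsMeasureSolution {d : ℕ} (T : ℝ)
    (V : ℝ → EuclideanSpace ℝ (Fin d) → EuclideanSpace ℝ (Fin d))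
    (μ : ℝ → Measure (EuclideanSpace ℝ (Fin d))) : Prop :=
  ∀ u : EuclideanSpace ℝ (Fin d) → ℝ, ContDiff ℝ (⊤ : ℕ∞) u → HasCompactSupport u →
    ∀ s ∈ Set.Icc (0:ℝ) T, ∀ t ∈ Set.Icc (0:ℝ) T,
      (∫ x, u x ∂μ t) - (∫ x, u x ∂μ s) =
        ∫ σ in s..t, ∫ x, fderiv ℝ u x (V σ x) ∂μ σ

/-!
The pushforward solves the continuity equation by the chain rule along the flow. Uniqueness is the
superposition principle in dual form: if a constant `c` is at most `f (γ A) + g (γ B)` for every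
integral curve `γ`, then `c ≤ ∫ f dν_A + ∫ g dν_B` for every weak solution `ν`. For
`f = K - g ∘ Φ` and `c = K`, where `Φ` is the flow map from time `A` to time `B`, this reads
`∫ g ∘ Φ dν_A ≤ ∫ g dν_B`, so that `Φ_♯ ν_A ≤ ν_B`; both measures have mass one (the mass of a
solution is constant, by testing against moving cutoffs), hence they are equal.

To prove the dual form, reparametrise time by the clock `dτ = m dt`, where `m ≥ 1` dominates the
speed of `V`, so that all velocities are at most one. Consider the control problem on a grid of
times whose running cost penalises the deviation of the velocity from continuous approximations of
the field, and adds `f` and `g` at the times `A` and `B`. Its mollified value function is, up to a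
small error, a subsolution of the transport equation along `ν`. Hence if
`∫ f dν_A + ∫ g dν_B < c`, then some controlled curve has total cost less than `c`, on arbitrarily
fine grids. By Arzelà–Ascoli, a subsequence converges to a curve of finite penalty. The penalty is
infinite on the null set where the approximations fail to converge to the field, so this limit
is an integral curve of the field, which contradicts the choice of `c`.
-/

section BoundedLipschitz

variable {α F : Type*} [PseudoMetricSpace α] [NormedAddCommGroup F] {f g : α → F} {K K' : ℝ}

/-- A function which is both bounded by `K` and `K`-Lipschitz. Only uniform bounds matter here, so
one constant serves for both. -/
structure IsBoundedLipschitz (f : α → F) (K : ℝ) : Prop where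
  norm_le : ∀ x, ‖f x‖ ≤ K
  norm_sub_le : ∀ x y, ‖f x - f y‖ ≤ K * dist x y

namespace IsBoundedLipschitz

lemma bound_nonneg [Nonempty α] (hf : IsBoundedLipschitz f K) : 0 ≤ K :=
  (norm_nonneg _).trans (hf.norm_le (Classical.arbitrary α))

lemma mono (hf : IsBoundedLipschitz f K) (h : K ≤ K') : IsBoundedLipschitz f K' where
  norm_le x := (hf.norm_le x).trans h
  norm_sub_le x y := (hf.norm_sub_le x y).trans (by gcongr)

lemma add (hf : IsBoundedLipschitz f K) (hg : IsBoundedLipschitz g K') :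
    IsBoundedLipschitz (fun x => f x + g x) (K + K') where
  norm_le x := (norm_add_le _ _).trans (add_le_add (hf.norm_le x) (hg.norm_le x))
  norm_sub_le x y := by
    rw [add_sub_add_comm, add_mul]
    exact (norm_add_le _ _).trans (add_le_add (hf.norm_sub_le x y) (hg.norm_sub_le x y))

lemma lipschitzWith (hf : IsBoundedLipschitz f K) : LipschitzWith K.toNNReal f :=
  .of_dist_le_mul fun x y => by
    rw [dist_eq_norm]
    exact (hf.norm_sub_le x y).trans (by gcongr; exact Real.le_coe_toNNReal K)

lemma continuous (hf : IsBoundedLipschitz f K) : Continuous f := hf.lipschitzWith.continuous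

lemma integrable_comp [SecondCountableTopologyEither α F] [MeasurableSpace α]
    [OpensMeasurableSpace α] {β : Type*} [MeasurableSpace β] {μ : Measure β} [IsFiniteMeasure μ]
    (hf : IsBoundedLipschitz f K) {φ : β → α} (hφ : Measurable φ) :
    Integrable (fun x => f (φ x)) μ :=
  .of_bound (hf.continuous.stronglyMeasurable.comp_measurable hφ).aestronglyMeasurable K
    (.of_forall fun x => hf.norm_le (φ x))

lemma integrable [SecondCountableTopologyEither α F] [MeasurableSpace α] [OpensMeasurableSpace α]
    {μ : Measure α} [IsFiniteMeasure μ] (hf : IsBoundedLipschitz f K) : Integrable f μ :=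
  hf.integrable_comp measurable_id

end IsBoundedLipschitz

end BoundedLipschitz

section Mollification

open scoped Convolution

lemma norm_convolution_le {E F G : Type*} [NormedAddCommGroup E] [MeasurableSpace E]
    [NormedAddCommGroup F] [NormedSpace ℝ F] [NormedAddCommGroup G] [NormedSpace ℝ G]
    {μ : Measure E} (L : F →L[ℝ] ℝ →L[ℝ] G) {ψ : E → F} {f : E → ℝ} {K : ℝ}
    (hψ : Integrable ψ μ) (hK : ∀ x, |f x| ≤ K) (x : E) :
    ‖(ψ ⋆[L, μ] f) x‖ ≤ ‖L‖ * (∫ z, ‖ψ z‖ ∂μ) * K := by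
  calc ‖(ψ ⋆[L, μ] f) x‖ ≤ ∫ z, ‖L‖ * ‖ψ z‖ * K ∂μ := by
        refine norm_integral_le_of_norm_le ((hψ.norm.const_mul _).mul_const _)
          (.of_forall fun z => (L.le_opNorm₂ _ _).trans ?_)
        gcongr
        exact hK _
    _ = ‖L‖ * (∫ z, ‖ψ z‖ ∂μ) * K := by rw [integral_mul_const, integral_const_mul]

variable {E : Type*} [NormedAddCommGroup E] [NormedSpace ℝ E] [FiniteDimensional ℝ E]
  [MeasurableSpace E] [BorelSpace E]

/-- The convolution of `f` with the normalized bump function `φ`, a smooth probability density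
supported in the ball of radius `φ.rOut`: it turns a bounded Lipschitz function into a test function
which differs from it by at most `φ.rOut` times the Lipschitz constant. -/
def mollify (φ : ContDiffBump (0 : E)) (f : E → ℝ) : E → ℝ :=
  φ.normed Measure.addHaar ⋆[ContinuousLinearMap.lsmul ℝ ℝ, Measure.addHaar] f

variable {φ : ContDiffBump (0 : E)} {f g : E → ℝ} {K : ℝ}

lemma mollify_apply (φ : ContDiffBump (0 : E)) (f : E → ℝ) (x : E) :
    mollify φ f x = ∫ z, φ.normed Measure.addHaar z * f (x - z) ∂Measure.addHaar := rfl

lemma integrable_normed_mul (hf : Continuous f) (x : E) :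
    Integrable (fun z => φ.normed Measure.addHaar z * f (x - z)) Measure.addHaar :=
  (φ.continuous_normed.mul (hf.comp (by fun_prop))).integrable_of_hasCompactSupport
    φ.hasCompactSupport_normed.mul_right

lemma mollify_const (c : ℝ) (x : E) : mollify φ (fun _ => c) x = c := by
  rw [mollify_apply, integral_mul_const, φ.integral_normed, one_mul]

lemma mollify_sub (hf : Continuous f) (hg : Continuous g) (x : E) :
    mollify φ (fun y => f y - g y) x = mollify φ f x - mollify φ g x := by
  simp only [mollify_apply, mul_sub]
  exact integral_sub (integrable_normed_mul hf x) (integrable_normed_mul hg x)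

lemma mollify_add (hf : Continuous f) (hg : Continuous g) (x : E) :
    mollify φ (fun y => f y + g y) x = mollify φ f x + mollify φ g x := by
  simp only [mollify_apply, mul_add]
  exact integral_add (integrable_normed_mul hf x) (integrable_normed_mul hg x)

lemma mollify_le_of_forall (hf : Continuous f) (hg : Continuous g) {x y : E} {c : ℝ}
    (h : ∀ z, ‖z‖ ≤ φ.rOut → f (x - z) ≤ g (y - z) + c) :
    mollify φ f x ≤ mollify φ g y + c := by
  rw [← mollify_const (φ := φ) c y, ← mollify_add hg continuous_const]
  refine integral_mono (integrable_normed_mul hf x)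
    (integrable_normed_mul (hg.add continuous_const) y) fun z => ?_
  by_cases hz : z ∈ Function.support (φ.normed Measure.addHaar)
  · rw [φ.support_normed_eq, mem_ball_zero_iff] at hz
    exact mul_le_mul_of_nonneg_left (h z hz.le) (φ.nonneg_normed z)
  · simp [Function.notMem_support.1 hz]

lemma mollify_le_of_le (hf : Continuous f) {c : ℝ} (h : ∀ x, f x ≤ c) (x : E) :
    mollify φ f x ≤ c := by
  simpa [mollify_const] using mollify_le_of_forall (φ := φ) (x := x) (y := x) (c := 0) hf
    continuous_const fun z _ => (h (x - z)).trans_eq (add_zero c).symm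

lemma abs_mollify_le (hf : Continuous f) (hK : ∀ x, |f x| ≤ K) (x : E) : |mollify φ f x| ≤ K := by
  refine abs_le.2 ⟨?_, mollify_le_of_le hf (fun y => (abs_le.1 (hK y)).2) x⟩
  have h := mollify_le_of_forall (φ := φ) (x := x) (y := x) (c := 0) continuous_const hf
    fun z _ => by simpa using (abs_le.1 (hK (x - z))).1
  rwa [mollify_const, add_zero] at h

lemma contDiff_mollify (hf : Continuous f) : ContDiff ℝ (⊤ : ℕ∞) (mollify φ f) :=
  φ.hasCompactSupport_normed.contDiff_convolution_left _ φ.contDiff_normed hf.locallyIntegrable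

lemma IsBoundedLipschitz.abs_mollify_sub_le (hf : IsBoundedLipschitz f K) (x : E) :
    |mollify φ f x - f x| ≤ K * φ.rOut := by
  rw [← Real.dist_eq]
  refine φ.dist_normed_convolution_le hf.continuous.aestronglyMeasurable fun y hy => ?_
  exact (hf.norm_sub_le y x).trans
    (mul_le_mul_of_nonneg_left (Metric.mem_ball.1 hy).le hf.bound_nonneg)

lemma IsBoundedLipschitz.mollify (hf : IsBoundedLipschitz f K) (φ : ContDiffBump (0 : E)) :
    IsBoundedLipschitz (mollify φ f) K where
  norm_le := abs_mollify_le hf.continuous hf.norm_le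
  norm_sub_le x y := by
    have key (x y : E) : _root_.mollify φ f x ≤ _root_.mollify φ f y + K * dist x y :=
      mollify_le_of_forall hf.continuous hf.continuous fun z _ => by
        have := (abs_le.1 (hf.norm_sub_le (x - z) (y - z))).2
        rw [dist_sub_right] at this
        linarith
    have hyx := key y x
    rw [dist_comm] at hyx
    exact abs_le.2 ⟨by linarith, by linarith [key x y]⟩

lemma IsBoundedLipschitz.abs_integral_mollify_sub_le (hf : IsBoundedLipschitz f K)
    (φ : ContDiffBump (0 : E)) (μ : Measure E) [IsProbabilityMeasure μ] :
    |∫ y, _root_.mollify φ f y ∂μ - ∫ y, f y ∂μ| ≤ K * φ.rOut := by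
  rw [← integral_sub (hf.mollify φ).integrable hf.integrable, ← Real.norm_eq_abs]
  exact (norm_integral_le_of_norm_le_const (.of_forall hf.abs_mollify_sub_le)).trans (by simp)

set_option maxSynthPendingDepth 3 in
/-- A constant `C` such that, for every function bounded by `K`, the mollification, its derivative
and the Lipschitz constant of its derivative are bounded by `C * K`. -/
def mollifyBound (φ : ContDiffBump (0 : E)) : ℝ :=
  max 1 (max (‖(ContinuousLinearMap.lsmul ℝ ℝ (E := ℝ)).precompL E‖ *
      ∫ z, ‖fderiv ℝ (φ.normed Measure.addHaar) z‖ ∂Measure.addHaar)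
    (‖((ContinuousLinearMap.lsmul ℝ ℝ (E := ℝ)).precompL E).precompL E‖ *
      ∫ z, ‖fderiv ℝ (fderiv ℝ (φ.normed Measure.addHaar)) z‖ ∂Measure.addHaar))

lemma one_le_mollifyBound (φ : ContDiffBump (0 : E)) : 1 ≤ mollifyBound φ := le_max_left _ _

lemma integrable_fderiv_normed (φ : ContDiffBump (0 : E)) :
    Integrable (fderiv ℝ (φ.normed Measure.addHaar)) Measure.addHaar :=
  (φ.contDiff_normed.continuous_fderiv (n := 1) one_ne_zero).integrable_of_hasCompactSupport
    (φ.hasCompactSupport_normed.fderiv ℝ)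

lemma fderiv_mollify (hf : Continuous f) : fderiv ℝ (mollify φ f) =
    fderiv ℝ (φ.normed Measure.addHaar)
      ⋆[(ContinuousLinearMap.lsmul ℝ ℝ).precompL E, Measure.addHaar] f :=
  funext fun x => (φ.hasCompactSupport_normed.hasFDerivAt_convolution_left _ φ.contDiff_normed
    hf.locallyIntegrable x).fderiv

lemma isBoundedLipschitz_mollify (hf : Continuous f) (hK : ∀ x, |f x| ≤ K) :
    IsBoundedLipschitz (mollify φ f) (mollifyBound φ * K) := by
  have hK0 : 0 ≤ K := (abs_nonneg _).trans (hK 0)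
  refine ⟨fun x => (abs_mollify_le hf hK x).trans
    (le_mul_of_one_le_left hK0 (one_le_mollifyBound φ)), fun x y => ?_⟩
  rw [dist_eq_norm]
  refine convex_univ.norm_image_sub_le_of_norm_fderiv_le (𝕜 := ℝ) (s := univ)
    (fun z _ => (contDiff_mollify hf).differentiable (by simp) z) (fun z _ => ?_)
    (mem_univ y) (mem_univ x)
  rw [fderiv_mollify hf]
  refine (norm_convolution_le _ (integrable_fderiv_normed φ) hK z).trans ?_
  gcongr
  exact (le_max_left _ _).trans (le_max_right _ _)

set_option maxSynthPendingDepth 3 in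
lemma norm_fderiv_mollify_sub_le (hf : Continuous f) (hK : ∀ x, |f x| ≤ K) (x y : E) :
    ‖fderiv ℝ (mollify φ f) x - fderiv ℝ (mollify φ f) y‖ ≤ mollifyBound φ * K * ‖x - y‖ := by
  have hK0 : 0 ≤ K := (abs_nonneg _).trans (hK 0)
  have hρ : ContDiff ℝ 2 (φ.normed Measure.addHaar) := φ.contDiff_normed
  have hρ' : ContDiff ℝ 1 (fderiv ℝ (φ.normed Measure.addHaar)) := hρ.fderiv_right (by norm_num)
  have hs := φ.hasCompactSupport_normed (μ := Measure.addHaar) |>.fderiv ℝ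
  have hint : Integrable (fderiv ℝ (fderiv ℝ (φ.normed Measure.addHaar))) Measure.addHaar :=
    (hρ'.continuous_fderiv one_ne_zero).integrable_of_hasCompactSupport (hs.fderiv ℝ)
  rw [fderiv_mollify hf]
  refine Convex.norm_image_sub_le_of_norm_hasFDerivWithin_le (𝕜 := ℝ) (s := univ)
    (fun z _ => (hs.hasFDerivAt_convolution_left _ hρ' hf.locallyIntegrable z).hasFDerivWithinAt)
    (fun z _ => ?_) convex_univ (mem_univ y) (mem_univ x)
  refine (norm_convolution_le _ hint hK z).trans ?_
  gcongr
  exact (le_max_right _ _).trans (le_max_right _ _)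

end Mollification

section Kernel

open ProbabilityTheory

variable {α β : Type*} [MeasurableSpace α] [MeasurableSpace β] {κ : Kernel α β}
  {f : α → β → ℝ} {K : ℝ}

lemma integrable_integral_kernel [IsMarkovKernel κ] {τ : Measure α} [IsFiniteMeasure τ]
    (hf : Measurable (Function.uncurry f)) (hK : ∀ r y, |f r y| ≤ K) :
    Integrable (fun r => ∫ y, f r y ∂κ r) τ :=
  .of_bound (hf.stronglyMeasurable.integral_kernel_prod_right (κ := κ)).aestronglyMeasurable K
    (.of_forall fun r => (norm_integral_le_of_norm_le_const
      (.of_forall fun y => hK r y)).trans (by simp))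

lemma integrable_kernel_apply [IsMarkovKernel κ] (hf : Measurable (Function.uncurry f))
    (hK : ∀ r y, |f r y| ≤ K) (r : α) : Integrable (f r) (κ r) :=
  .of_bound (hf.comp measurable_prodMk_left).aestronglyMeasurable K (.of_forall (hK r))

lemma integral_sub_add_const {μ : Measure α} [IsFiniteMeasure μ] {f g : α → ℝ}
    (hf : Integrable f μ) (hg : Integrable g μ) (c : ℝ) :
    ∫ x, (f x - g x + c) ∂μ = ∫ x, f x ∂μ - ∫ x, g x ∂μ + μ.real univ * c := by
  rw [integral_add (f := fun x => f x - g x) (hf.sub hg) (integrable_const c), integral_sub hf hg,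
    integral_const, smul_eq_mul]

end Kernel

section Transport

open ProbabilityTheory

variable {E : Type*} [NormedAddCommGroup E] [NormedSpace ℝ E]

lemma taylor_le_of_norm_fderiv_sub_le {u : E → ℝ} (hu : Differentiable ℝ u) {C : ℝ} (hC0 : 0 ≤ C)
    (hC : ∀ x y, ‖fderiv ℝ u x - fderiv ℝ u y‖ ≤ C * ‖x - y‖) (y h : E) :
    u (y - h) ≤ u y - fderiv ℝ u y h + C * ‖h‖ ^ 2 := by
  have key := Convex.norm_image_sub_le_of_norm_hasFDerivWithin_le' (𝕜 := ℝ) (f := u)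
    (f' := fderiv ℝ u) (φ := fderiv ℝ u y) (C := C * ‖h‖) (s := Metric.closedBall y ‖h‖)
    (x := y) (y := y - h) (fun z _ => (hu z).hasFDerivAt.hasFDerivWithinAt)
    (fun z hz => (hC z y).trans (by gcongr; simpa [dist_eq_norm] using hz))
    (convex_closedBall _ _) (by simp) (by simp)
  have := (le_abs_self _).trans key
  simp only [sub_sub_cancel_left, map_neg, norm_neg] at this
  linarith

lemma IsBoundedLipschitz.norm_fderiv_le {u : E → ℝ} {K : ℝ} (hu : IsBoundedLipschitz u K) (y : E) :
    ‖fderiv ℝ u y‖ ≤ K := by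
  simpa [hu.bound_nonneg] using norm_fderiv_le_of_lipschitz ℝ hu.lipschitzWith (x₀ := y)

lemma IsBoundedLipschitz.abs_fderiv_le {u : E → ℝ} {K : ℝ}
    (hu : IsBoundedLipschitz u K) (y : E) {v : E} (hv : ‖v‖ ≤ 1) : |fderiv ℝ u y v| ≤ K :=
  ((fderiv ℝ u y).le_of_opNorm_le_of_le (hu.norm_fderiv_le y) hv).trans_eq (mul_one K)

lemma measurable_fderiv_apply [FiniteDimensional ℝ E] [MeasurableSpace E] [BorelSpace E]
    {α : Type*} [MeasurableSpace α] {u : E → ℝ} (hu : ContDiff ℝ (⊤ : ℕ∞) u) {f g : α → E}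
    (hf : Measurable f) (hg : Measurable g) : Measurable fun a => fderiv ℝ u (f a) (g a) := by
  have h : Continuous fun p : E × E => fderiv ℝ u p.1 p.2 :=
    ((hu.continuous_fderiv (by simp)).comp continuous_fst).clm_apply continuous_snd
  exact h.measurable.comp (hf.prodMk hg)

variable [MeasurableSpace E] {τ : Measure ℝ} {κ : Kernel ℝ E} {b : ℝ → E → E} {T K : ℝ}
  {u w : E → ℝ} {f : ℝ → E → ℝ}

/-- A curve of probability measures solving the continuity equation for the velocity field `b`,
bounded by one, when time is measured by `τ`; the test functions are all bounded smooth functions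
with bounded derivative. -/
structure IsTransport (τ : Measure ℝ) (κ : Kernel ℝ E) (b : ℝ → E → E) (T : ℝ) : Prop where
  measurable : Measurable (Function.uncurry b)
  norm_le : ∀ r y, ‖b r y‖ ≤ 1
  integral_sub : ∀ (u : E → ℝ) (K : ℝ), ContDiff ℝ (⊤ : ℕ∞) u → IsBoundedLipschitz u K →
    ∀ s t, 0 ≤ s → s ≤ t → t ≤ T →
      ∫ y, u y ∂κ t - ∫ y, u y ∂κ s = ∫ r in Ioc s t, ∫ y, fderiv ℝ u y (b r y) ∂κ r ∂τ

namespace IsTransport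

lemma abs_integral_sub_le_of_contDiff [IsFiniteMeasure τ] [IsMarkovKernel κ]
    (h : IsTransport τ κ b T) (hu : ContDiff ℝ (⊤ : ℕ∞) u) (huK : IsBoundedLipschitz u K)
    {s t : ℝ} (hs : 0 ≤ s) (hst : s ≤ t) (htT : t ≤ T) :
    |∫ y, u y ∂κ t - ∫ y, u y ∂κ s| ≤ K * τ.real (Ioc s t) := by
  rw [h.integral_sub u K hu huK s t hs hst htT, ← Real.norm_eq_abs]
  refine norm_setIntegral_le_of_norm_le_const (measure_lt_top τ _) fun r _ => ?_
  refine (norm_integral_le_of_norm_le_const (C := K) (.of_forall fun y => ?_)).trans (by simp)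
  exact huK.abs_fderiv_le y (h.norm_le r y)

lemma integral_le_of_forall_le [IsFiniteMeasure τ] [IsMarkovKernel κ] [OpensMeasurableSpace E]
    (h : IsTransport τ κ b T) (hu : ContDiff ℝ (⊤ : ℕ∞) u) {s t C : ℝ} (hs : 0 ≤ s)
    (hst : s < t) (htT : t ≤ T)
    (huC : IsBoundedLipschitz u (C * τ.real (Ioc s t)))
    (hf : Measurable (Function.uncurry f)) (hK : ∀ r y, |f r y| ≤ K)
    (hle : ∀ r ∈ Ioc s t, ∀ y, u y ≤ τ.real (Ioc s t) * f r y) :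
    ∫ y, u y ∂κ t ≤ ∫ r in Ioc s t, ∫ y, f r y ∂κ r ∂τ + C * τ.real (Ioc s t) ^ 2 := by
  set θ := τ.real (Ioc s t) with hθ
  have hpoint (r : ℝ) (hr : r ∈ Ioc s t) : ∫ y, u y ∂κ t ≤ θ * ∫ y, f r y ∂κ r + C * θ ^ 2 := by
    have hmove : ∫ y, u y ∂κ t - ∫ y, u y ∂κ r ≤ C * θ * θ :=
      (le_abs_self _).trans ((h.abs_integral_sub_le_of_contDiff hu huC (hs.trans hr.1.le) hr.2
        htT).trans (mul_le_mul_of_nonneg_left (measureReal_mono (Ioc_subset_Ioc_left hr.1.le))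
          huC.bound_nonneg))
    have hval : ∫ y, u y ∂κ r ≤ θ * ∫ y, f r y ∂κ r := by
      rw [← integral_const_mul]
      exact integral_mono huC.integrable ((integrable_kernel_apply hf hK r).const_mul θ) (hle r hr)
    linarith
  rcases (measureReal_nonneg (μ := τ) (s := Ioc s t)).eq_or_lt with h0 | hpos
  · have hτ : τ.restrict (Ioc s t) = 0 :=
      Measure.restrict_eq_zero.2 ((measureReal_eq_zero_iff).1 h0.symm)
    simpa [hτ, hθ, ← h0] using hpoint t ⟨hst, le_rfl⟩
  · have hF := integrable_integral_kernel (τ := τ.restrict (Ioc s t)) (κ := κ) hf hK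
    have hmean := setIntegral_mono_on (μ := τ) (f := fun _ => ∫ y, u y ∂κ t) (integrable_const _)
      ((hF.const_mul θ).add (integrable_const (C * θ ^ 2))) measurableSet_Ioc hpoint
    rw [integral_add' (hF.const_mul θ) (integrable_const _), integral_const_mul, setIntegral_const,
      setIntegral_const, smul_eq_mul, smul_eq_mul, ← mul_add, ← hθ] at hmean
    exact le_of_mul_le_mul_left hmean hpos

variable [BorelSpace E] [FiniteDimensional ℝ E]

lemma integral_le_of_step [IsFiniteMeasure τ] [IsMarkovKernel κ] (h : IsTransport τ κ b T)
    (hu : ContDiff ℝ (⊤ : ℕ∞) u) (hw : ContDiff ℝ (⊤ : ℕ∞) w) {M : ℝ}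
    (huM : IsBoundedLipschitz u M) {s t C C' : ℝ} (hs : 0 ≤ s) (hst : s < t) (htT : t ≤ T)
    (hwu : IsBoundedLipschitz (fun y => w y - u y) (C * τ.real (Ioc s t))) (hC' : 0 ≤ C')
    (hu' : ∀ x y, ‖fderiv ℝ u x - fderiv ℝ u y‖ ≤ C' * ‖x - y‖)
    (hf : Measurable (Function.uncurry f)) (hK : ∀ r y, |f r y| ≤ K)
    (hstep : ∀ r ∈ Ioc s t, ∀ y,
      w y ≤ u (y - τ.real (Ioc s t) • b r y) + τ.real (Ioc s t) * f r y) :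
    ∫ y, w y ∂κ t ≤ ∫ y, u y ∂κ s + ∫ r in Ioc s t, ∫ y, f r y ∂κ r ∂τ
      + (C + C') * τ.real (Ioc s t) ^ 2 := by
  set θ := τ.real (Ioc s t)
  have hθ : 0 ≤ θ := measureReal_nonneg
  have hDm : Measurable (Function.uncurry fun r y => fderiv ℝ u y (b r y)) :=
    measurable_fderiv_apply hu measurable_snd h.measurable
  have hDM (r : ℝ) (y : E) : |fderiv ℝ u y (b r y)| ≤ M := huM.abs_fderiv_le y (h.norm_le r y)
  let D (r : ℝ) (y : E) : ℝ := f r y - fderiv ℝ u y (b r y) + C' * θ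
  have hwu_le : ∀ r ∈ Ioc s t, ∀ y, w y - u y ≤ θ * D r y := fun r hr y => by
    have htaylor := taylor_le_of_norm_fderiv_sub_le (hu.differentiable (by simp)) hC' hu' y
      (θ • b r y)
    have hsq : C' * ‖θ • b r y‖ ^ 2 ≤ C' * θ ^ 2 := by
      rw [norm_smul, Real.norm_of_nonneg hθ]
      gcongr
      exact mul_le_of_le_one_right hθ (h.norm_le r y)
    rw [map_smul, smul_eq_mul] at htaylor
    linear_combination hstep r hr y + htaylor + hsq
  have hDmeas : Measurable (Function.uncurry D) := (hf.sub hDm).add_const (C' * θ)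
  have hmain := h.integral_le_of_forall_le (hw.sub hu) hs hst htT hwu hDmeas
    (K := K + M + C' * θ) (fun r y => (abs_add_le _ _).trans (add_le_add ((abs_sub _ _).trans
      (add_le_add (hK r y) (hDM r y))) (abs_of_nonneg (by positivity)).le)) hwu_le
  have hsplit (r : ℝ) : ∫ y, D r y ∂κ r =
      ∫ y, f r y ∂κ r - ∫ y, fderiv ℝ u y (b r y) ∂κ r + C' * θ := by
    rw [integral_sub_add_const (integrable_kernel_apply hf hK r)
      (integrable_kernel_apply hDm hDM r), probReal_univ, one_mul]
  simp only [hsplit] at hmain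
  rw [integral_sub_add_const (integrable_integral_kernel hf hK)
    (integrable_integral_kernel hDm hDM), measureReal_restrict_apply_univ,
    ← h.integral_sub u M hu huM s t hs hst.le htT] at hmain
  have hwi : Integrable w (κ t) :=
    (hwu.integrable.add huM.integrable).congr (.of_forall fun y => sub_add_cancel (w y) (u y))
  rw [MeasureTheory.integral_sub hwi huM.integrable] at hmain
  linarith

lemma abs_integral_sub_le [IsFiniteMeasure τ] [IsMarkovKernel κ] (h : IsTransport τ κ b T)
    (hu : IsBoundedLipschitz u K) {s t : ℝ} (hs : 0 ≤ s) (hst : s ≤ t) (htT : t ≤ T) :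
    |∫ y, u y ∂κ t - ∫ y, u y ∂κ s| ≤ K * τ.real (Ioc s t) := by
  refine le_of_forall_pos_le_add fun ε hε => ?_
  have hK := hu.bound_nonneg
  let φ : ContDiffBump (0 : E) :=
    ⟨ε / (2 * K + 1) / 2, ε / (2 * K + 1), by positivity, half_lt_self (by positivity)⟩
  have hφ : 2 * (K * φ.rOut) ≤ ε := by
    have : (2 * K + 1) * φ.rOut = ε := mul_div_cancel₀ _ (by positivity)
    linarith [φ.rOut_pos]
  have hsmooth := h.abs_integral_sub_le_of_contDiff (contDiff_mollify hu.continuous)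
    (hu.mollify φ) hs hst htT
  have hs' := hu.abs_integral_mollify_sub_le φ (κ s)
  have ht' := hu.abs_integral_mollify_sub_le φ (κ t)
  rw [abs_le] at *
  constructor <;> linarith

end IsTransport

end Transport

section DynamicProgramming

open ProbabilityTheory Metric

variable {E : Type*} [NormedAddCommGroup E]

/-- A running cost `ℓ x v`, for a state `x` and a velocity `v`, which is continuous, nonnegative
and, for speeds at most one, bounded and Lipschitz in the state. The states are the points of `E`
or, when the cost depends on time, of `ℝ × E`. -/
structure IsLagrangian {X : Type*} [PseudoMetricSpace X] (ℓ : X → E → ℝ) (K : ℝ) : Prop where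
  continuous : Continuous (Function.uncurry ℓ)
  nonneg : ∀ x v, 0 ≤ ℓ x v
  isBoundedLipschitz : ∀ v, ‖v‖ ≤ 1 → IsBoundedLipschitz (fun x => ℓ x v) K

namespace IsLagrangian

variable {X : Type*} [PseudoMetricSpace X] {K : ℝ} {v : E}

lemma le {ℓ : X → E → ℝ} (hℓ : IsLagrangian ℓ K) (x : X) (hv : ‖v‖ ≤ 1) : ℓ x v ≤ K :=
  (le_abs_self _).trans ((hℓ.isBoundedLipschitz v hv).norm_le x)

lemma bound_nonneg [Nonempty X] {ℓ : X → E → ℝ} (hℓ : IsLagrangian ℓ K) : 0 ≤ K :=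
  (hℓ.isBoundedLipschitz 0 (by simp)).bound_nonneg

lemma le_add {ℓ : X → E → ℝ} (hℓ : IsLagrangian ℓ K) (x y : X) (hv : ‖v‖ ≤ 1) :
    ℓ x v ≤ ℓ y v + K * dist x y := by
  linarith [(le_abs_self _).trans ((hℓ.isBoundedLipschitz v hv).norm_sub_le x y)]

lemma freeze {L : ℝ × E → E → ℝ} (hL : IsLagrangian L K) (t : ℝ) :
    IsLagrangian (fun x => L (t, x)) K where
  continuous := hL.continuous.comp (f := fun p : E × E => ((t, p.1), p.2)) (by fun_prop)
  nonneg x v := hL.nonneg (t, x) v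
  isBoundedLipschitz v hv :=
    ⟨fun x => (hL.isBoundedLipschitz v hv).norm_le (t, x), fun x y => by
      simpa using (hL.isBoundedLipschitz v hv).norm_sub_le (t, x) (t, y)⟩

end IsLagrangian

variable [NormedSpace ℝ E]

/-- The least cost of reaching `x` in time `θ` along a straight line, at speed at most one and with
running cost `ℓ`, when starting at a point `y` costs `U y`. -/
def costStep (θ : ℝ) (ℓ : E → E → ℝ) (U : E → ℝ) (x : E) : ℝ :=
  sInf ((fun v => θ * ℓ x v + U (x - θ • v)) '' closedBall 0 1)

/-- The value function of the discrete control problem with running cost `L i` on the `i`-th step,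
of length `θ i`, and point costs `g i`: the least total cost of a path ending at the given point. -/
def valueFn (θ : ℕ → ℝ) (L : ℕ → E → E → ℝ) (g : ℕ → E → ℝ) : ℕ → E → ℝ
  | 0 => g 0
  | i + 1 => fun x => g (i + 1) x + costStep (θ i) (L i) (valueFn θ L g i) x

variable [FiniteDimensional ℝ E]

lemma isLeast_costStep {ℓ : E → E → ℝ} {U : E → ℝ} (hℓ : Continuous (Function.uncurry ℓ))
    (hU : Continuous U) (θ : ℝ) (x : E) :
    IsLeast ((fun v => θ * ℓ x v + U (x - θ • v)) '' closedBall 0 1) (costStep θ ℓ U x) :=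
  ((isCompact_closedBall (0 : E) 1).image (by fun_prop)).isLeast_sInf
    ((nonempty_closedBall.2 zero_le_one).image _)

section costStep

variable {θ K M : ℝ} {ℓ : E → E → ℝ} {U : E → ℝ}

lemma costStep_le (hℓ : IsLagrangian ℓ K) (hU : IsBoundedLipschitz U M) (θ : ℝ) (x : E) {v : E}
    (hv : ‖v‖ ≤ 1) : costStep θ ℓ U x ≤ θ * ℓ x v + U (x - θ • v) :=
  (isLeast_costStep hℓ.continuous hU.continuous θ x).2 ⟨v, by simpa using hv, rfl⟩

lemma exists_costStep_eq (hℓ : IsLagrangian ℓ K) (hU : IsBoundedLipschitz U M) (θ : ℝ) (x : E) :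
    ∃ v, ‖v‖ ≤ 1 ∧ costStep θ ℓ U x = θ * ℓ x v + U (x - θ • v) := by
  obtain ⟨v, hv, h⟩ := (isLeast_costStep hℓ.continuous hU.continuous θ x).1
  exact ⟨v, by simpa using hv, h.symm⟩

lemma IsBoundedLipschitz.costStep (hU : IsBoundedLipschitz U M) (hℓ : IsLagrangian ℓ K)
    (hθ : 0 ≤ θ) : IsBoundedLipschitz (costStep θ ℓ U) (M + K * θ) where
  norm_le x := by
    obtain ⟨v, hv, h⟩ := exists_costStep_eq hℓ hU θ x
    have hℓv := mul_le_mul_of_nonneg_left (hℓ.le x hv) hθ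
    rw [h, Real.norm_eq_abs, abs_le]
    have hUv := abs_le.1 (hU.norm_le (x - θ • v))
    have := mul_nonneg hθ (hℓ.nonneg x v)
    constructor <;> linarith
  norm_sub_le x y := by
    have key (x y : E) :
        _root_.costStep θ ℓ U x - _root_.costStep θ ℓ U y ≤ (M + K * θ) * dist x y := by
      obtain ⟨v, hv, h⟩ := exists_costStep_eq hℓ hU θ y
      have hUv := (abs_le.1 (hU.norm_sub_le (x - θ • v) (y - θ • v))).2
      rw [dist_sub_right] at hUv
      linear_combination costStep_le hℓ hU θ x hv - h + hUv + θ * hℓ.le_add x y hv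
    refine abs_sub_le_iff.2 ⟨key x y, ?_⟩
    rw [dist_comm]
    exact key y x

lemma abs_costStep_sub_le (hU : IsBoundedLipschitz U M) (hℓ : IsLagrangian ℓ K) (hθ : 0 ≤ θ)
    (x : E) : |costStep θ ℓ U x - U x| ≤ (K + M) * θ := by
  have hK := mul_nonneg hℓ.bound_nonneg hθ
  have hM := mul_nonneg hU.bound_nonneg hθ
  refine abs_sub_le_iff.2 ⟨?_, ?_⟩
  · have hstay := costStep_le hℓ hU θ x (v := 0) (by simp)
    rw [smul_zero, sub_zero] at hstay
    linear_combination hstay + hM + θ * hℓ.le x (v := 0) (by simp)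
  · obtain ⟨v, hv, h⟩ := exists_costStep_eq hℓ hU θ x
    have hUv := (abs_le.1 (hU.norm_sub_le x (x - θ • v))).2
    rw [dist_self_sub_right, norm_smul, Real.norm_of_nonneg hθ] at hUv
    have hMv : M * (θ * ‖v‖) ≤ M * θ :=
      mul_le_mul_of_nonneg_left (mul_le_of_le_one_right hθ hv) hU.bound_nonneg
    linarith [mul_nonneg hθ (hℓ.nonneg x v)]

end costStep

section valueFn

variable {θ c : ℕ → ℝ} {L : ℕ → E → E → ℝ} {g : ℕ → E → ℝ} {K : ℝ}

lemma isBoundedLipschitz_valueFn (hθ : ∀ i, 0 ≤ θ i) (hL : ∀ i, IsLagrangian (L i) K)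
    (hg : ∀ i, IsBoundedLipschitz (g i) (c i)) (n : ℕ) : IsBoundedLipschitz (valueFn θ L g n)
      (∑ i ∈ Finset.range (n + 1), c i + K * ∑ i ∈ Finset.range n, θ i) := by
  induction n with
  | zero => simpa [valueFn] using hg 0
  | succ n ih =>
    refine ((hg (n + 1)).add (ih.costStep (hL n) (hθ n))).mono (le_of_eq ?_)
    rw [Finset.sum_range_succ c (n + 1), Finset.sum_range_succ θ n]
    ring

lemma exists_path_cost_eq_valueFn (hθ : ∀ i, 0 ≤ θ i) (hL : ∀ i, IsLagrangian (L i) K)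
    (hg : ∀ i, IsBoundedLipschitz (g i) (c i)) (n : ℕ) (x : E) :
    ∃ p v : ℕ → E, p n = x ∧ (∀ i, ‖v i‖ ≤ 1) ∧ (∀ i < n, p (i + 1) = p i + θ i • v i) ∧
      ∑ i ∈ Finset.range (n + 1), g i (p i) + ∑ i ∈ Finset.range n, θ i * L i (p (i + 1)) (v i) =
        valueFn θ L g n x := by
  induction n generalizing x with
  | zero => exact ⟨fun _ => x, fun _ => 0, rfl, by simp, by simp, by simp [valueFn]⟩
  | succ n ih =>
    obtain ⟨w, hw, hstep⟩ :=
      exists_costStep_eq (hL n) (isBoundedLipschitz_valueFn hθ hL hg n) (θ n) x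
    obtain ⟨p, v, hp, hv, hpv, hcost⟩ := ih (x - θ n • w)
    let p' (i : ℕ) : E := if i ≤ n then p i else x
    let v' (i : ℕ) : E := if i < n then v i else w
    have hpoint : ∑ i ∈ Finset.range (n + 1), g i (p' i) = ∑ i ∈ Finset.range (n + 1), g i (p i) :=
      Finset.sum_congr rfl fun i hi => by simp [p', Nat.lt_succ_iff.1 (Finset.mem_range.1 hi)]
    have hrun : ∑ i ∈ Finset.range n, θ i * L i (p' (i + 1)) (v' i) =
        ∑ i ∈ Finset.range n, θ i * L i (p (i + 1)) (v i) := Finset.sum_congr rfl fun i hi => by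
      simp [p', v', Nat.succ_le_of_lt (Finset.mem_range.1 hi), Finset.mem_range.1 hi]
    have hp' : p' (n + 1) = x := by simp [p']
    have hv' : v' n = w := by simp [v']
    refine ⟨p', v', hp', fun i => ?_, fun i hi => ?_, ?_⟩
    · unfold v'
      split_ifs
      exacts [hv i, hw]
    · rcases Nat.lt_succ_iff_lt_or_eq.1 hi with hi | rfl
      · simp [p', v', hi, hi.le, Nat.succ_le_of_lt hi, hpv i hi]
      · simp [p', v', hp]
    · rw [Finset.sum_range_succ _ (n + 1), hpoint, Finset.sum_range_succ (fun i => θ i * _), hrun,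
        hp', hv']
      simp only [valueFn, hstep, ← hcost]
      ring

lemma valueFn_nonneg (hθ : ∀ i, 0 ≤ θ i) (hL : ∀ i, IsLagrangian (L i) K)
    (hg : ∀ i, IsBoundedLipschitz (g i) (c i)) (hg0 : ∀ i x, 0 ≤ g i x) (n : ℕ) (x : E) :
    0 ≤ valueFn θ L g n x := by
  obtain ⟨p, v, -, -, -, hcost⟩ := exists_path_cost_eq_valueFn hθ hL hg n x
  rw [← hcost]
  exact add_nonneg (Finset.sum_nonneg fun i _ => hg0 i _)
    (Finset.sum_nonneg fun i _ => mul_nonneg (hθ i) ((hL i).nonneg _ _))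

end valueFn

variable [MeasurableSpace E] [BorelSpace E] {τ : Measure ℝ} {κ : Kernel ℝ E} {b : ℝ → E → E}
  {T K M : ℝ} {f : ℝ → E → ℝ} {φ : ContDiffBump (0 : E)} [IsFiniteMeasure τ] [IsMarkovKernel κ]

namespace IsTransport

lemma integral_mollify_costStep_le (h : IsTransport τ κ b T) {ℓ : E → E → ℝ} {U : E → ℝ}
    (hℓ : IsLagrangian ℓ K) (hU : IsBoundedLipschitz U M) {s t Kf : ℝ} (hs : 0 ≤ s) (hst : s < t)
    (htT : t ≤ T) (hf : Measurable (Function.uncurry f)) (hKf : ∀ r y, |f r y| ≤ Kf)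
    (hℓf : ∀ r ∈ Ioc s t, ∀ y, ℓ y (b r y) + K * φ.rOut ≤ f r y) :
    ∫ y, mollify φ (costStep (τ.real (Ioc s t)) ℓ U) y ∂κ t ≤ ∫ y, mollify φ U y ∂κ s +
      ∫ r in Ioc s t, ∫ y, f r y ∂κ r ∂τ +
      mollifyBound φ * (K + 2 * M) * τ.real (Ioc s t) ^ 2 := by
  set θ := τ.real (Ioc s t)
  have hθ : 0 ≤ θ := measureReal_nonneg
  have hφ := zero_le_one.trans (one_le_mollifyBound φ)
  set W := costStep θ ℓ U
  have hWc : Continuous W := (hU.costStep hℓ hθ).continuous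
  have hUc := hU.continuous
  have hWU : IsBoundedLipschitz (fun y => mollify φ W y - mollify φ U y)
      (mollifyBound φ * (K + M) * θ) := by
    simp only [← mollify_sub hWc hUc]
    rw [mul_assoc]
    exact isBoundedLipschitz_mollify (hWc.sub hUc) (abs_costStep_sub_le hU hℓ hθ)
  refine (h.integral_le_of_step (contDiff_mollify hUc) (contDiff_mollify hWc) (hU.mollify φ) hs hst
    htT hWU (mul_nonneg hφ hU.bound_nonneg) (norm_fderiv_mollify_sub_le hUc hU.norm_le) hf hKf
    fun r hr y => ?_).trans_eq (by ring)
  refine mollify_le_of_forall hWc hUc fun z hz => ?_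
  have hmove := costStep_le hℓ hU θ (y - z) (h.norm_le r y)
  have hℓz := hℓ.le_add (y - z) y (h.norm_le r y)
  rw [dist_self_sub_left] at hℓz
  have hKz := mul_le_mul_of_nonneg_left hz hℓ.bound_nonneg
  rw [sub_right_comm] at hmove
  linear_combination hmove + θ * (hℓz + hKz + hℓf r hr y)

lemma integral_mollify_valueFn_le (h : IsTransport τ κ b T) {t : ℕ → ℝ} (ht : StrictMono t)
    (ht0 : 0 ≤ t 0) {L : ℕ → E → E → ℝ} {g : ℕ → E → ℝ} {c θ : ℕ → ℝ} {Kf e : ℝ}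
    (hL : ∀ i, IsLagrangian (L i) K) (hg : ∀ i, IsBoundedLipschitz (g i) (c i))
    (hθ : ∀ i, θ i = τ.real (Ioc (t i) (t (i + 1)))) (hθe : ∀ i, θ i ≤ e)
    (hf : Measurable (Function.uncurry f)) (hKf : ∀ r y, |f r y| ≤ Kf)
    (hLf : ∀ i, ∀ r ∈ Ioc (t i) (t (i + 1)), ∀ y, L i y (b r y) + K * φ.rOut ≤ f r y)
    {n : ℕ} (htn : t n ≤ T) (hM : ∀ i ≤ n, IsBoundedLipschitz (valueFn θ L g i) M) :
    ∫ y, mollify φ (valueFn θ L g n) y ∂κ (t n) ≤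
      ∑ i ∈ Finset.range (n + 1), ∫ y, mollify φ (g i) y ∂κ (t i) +
      ∫ r in Ioc (t 0) (t n), ∫ y, f r y ∂κ r ∂τ +
      mollifyBound φ * (K + 2 * M) * e * τ.real (Ioc (t 0) (t n)) := by
  induction n with
  | zero => simp [valueFn]
  | succ n ih =>
    have ht0n : t 0 ≤ t n := ht.monotone n.zero_le
    have htn' : t n < t (n + 1) := ht n.lt_succ_self
    have hUM := hM n n.le_succ
    have hθ0 : 0 ≤ θ n := hθ n ▸ measureReal_nonneg
    have hW : IsBoundedLipschitz (costStep (θ n) (L n) (valueFn θ L g n)) (M + K * θ n) :=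
      hUM.costStep (hL n) hθ0
    have hstep := h.integral_mollify_costStep_le (hL n) hUM (ht0.trans ht0n) htn' htn hf hKf (hLf n)
    rw [← hθ n] at hstep
    have hsq : mollifyBound φ * (K + 2 * M) * θ n ^ 2 ≤
        mollifyBound φ * (K + 2 * M) * e * θ n := by
      have := zero_le_one.trans (one_le_mollifyBound φ)
      have := (hL n).bound_nonneg
      have := hUM.bound_nonneg
      rw [sq, mul_assoc _ e]
      gcongr
      exact hθe n
    have hsplit : ∫ y, mollify φ (valueFn θ L g (n + 1)) y ∂κ (t (n + 1)) =
        ∫ y, mollify φ (g (n + 1)) y ∂κ (t (n + 1)) +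
        ∫ y, mollify φ (costStep (θ n) (L n) (valueFn θ L g n)) y ∂κ (t (n + 1)) := by
      rw [← integral_add ((hg _).mollify φ).integrable (hW.mollify φ).integrable]
      exact integral_congr_ae (.of_forall fun y => mollify_add (hg _).continuous hW.continuous y)
    have hint := integrable_integral_kernel (τ := τ) (κ := κ) hf hKf
    rw [hsplit, Finset.sum_range_succ _ (n + 1), ← Ioc_union_Ioc_eq_Ioc ht0n htn'.le,
      setIntegral_union (Ioc_disjoint_Ioc_of_le le_rfl) measurableSet_Ioc hint.integrableOn
        hint.integrableOn,
      measureReal_union (Ioc_disjoint_Ioc_of_le le_rfl) measurableSet_Ioc, ← hθ n]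
    linarith [ih (htn'.le.trans htn) fun i hi => hM i (hi.trans n.le_succ)]

end IsTransport

end DynamicProgramming

section Grid

variable {τ : Measure ℝ} {h : ℝ} {n : ℕ}

/-- Short intervals have uniformly small measure: the time `τ` has no jumps, so that the steps of a
fine grid are short. -/
def IsContinuousClock (τ : Measure ℝ) : Prop :=
  ∀ ε > 0, ∃ ρ > 0, ∀ s t, t - s ≤ ρ → τ.real (Ioc s t) ≤ ε

/-- The lengths, measured by `τ`, of the intervals of the grid with mesh `h`: these are the step
lengths of the control problem. -/
def gridStep (τ : Measure ℝ) (h : ℝ) (i : ℕ) : ℝ := τ.real (Ioc (i * h) ((i + 1 : ℕ) * h))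

lemma gridStep_nonneg (i : ℕ) : 0 ≤ gridStep τ h i := measureReal_nonneg

lemma sum_gridStep_le [IsFiniteMeasure τ] (hh : 0 ≤ h) (n : ℕ) :
    ∑ i ∈ Finset.range n, gridStep τ h i ≤ τ.real univ := by
  have hmono : Monotone fun i : ℕ => (i : ℝ) * h := fun i j hij => by dsimp only; gcongr
  have hdisj : Pairwise (Function.onFun Disjoint fun i : ℕ => Ioc (i * h) ((i + 1 : ℕ) * h)) :=
    hmono.pairwise_disjoint_on_Ioc_succ
  unfold gridStep
  rw [← measureReal_biUnion_finset (fun i _ j _ hij => hdisj hij) fun i _ => measurableSet_Ioc]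
  exact measureReal_mono (subset_univ _)

lemma IsContinuousClock.eventually_gridStep_le (hτ : IsContinuousClock τ) (T : ℝ) {ε : ℝ}
    (hε : 0 < ε) : ∀ᶠ n : ℕ in Filter.atTop, ∀ i, gridStep τ (T / n) i ≤ ε := by
  obtain ⟨ρ, hρ, hτρ⟩ := hτ ε hε
  filter_upwards [(tendsto_const_div_atTop_nhds_zero_nat T).eventually_le_const hρ] with n hn i
  exact hτρ _ _ (by push_cast; linarith)

/-- The grid point below `t`, as an index, of the grid with mesh `T / n`; the index is zero when
`n = 0`. -/
def gridIndex (T : ℝ) (n : ℕ) (t : ℝ) : ℕ := ⌊t / (T / n)⌋₊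

lemma gridIndex_le {T t : ℝ} (hT : 0 < T) (ht : t ≤ T) : gridIndex T n t ≤ n := by
  rcases n.eq_zero_or_pos with rfl | hn
  · simp [gridIndex]
  · have hn' : (0 : ℝ) < n := Nat.cast_pos.2 hn
    refine Nat.floor_le_of_le ?_
    rwa [div_le_iff₀ (by positivity), mul_div_cancel₀ _ hn'.ne']

lemma gridIndex_mul_le {T t : ℝ} (hT : 0 < T) (ht : 0 ≤ t) (n : ℕ) :
    gridIndex T n t * (T / n) ≤ t := by
  rcases n.eq_zero_or_pos with rfl | hn
  · simpa using ht
  · have : (0 : ℝ) < n := Nat.cast_pos.2 hn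
    exact (le_div_iff₀ (by positivity)).1 (Nat.floor_le (by positivity))

lemma sub_gridIndex_mul_le {T t : ℝ} (hT : 0 < T) (hn : 0 < n) :
    t - gridIndex T n t * (T / n) ≤ T / n := by
  have : (0 : ℝ) < n := Nat.cast_pos.2 hn
  have := (div_lt_iff₀ (by positivity)).1 (Nat.lt_floor_add_one (t / (T / n)))
  unfold gridIndex
  linarith

end Grid

section Duality

open ProbabilityTheory

variable {E : Type*} {G g : E → ℝ} {K : ℝ} {a b n : ℕ}

/-- The point costs of the control problem: cost `G` at the grid point `a` and cost `g` at the grid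
point `b`, which add up when `a = b`. -/
def pointCost (a b : ℕ) (G g : E → ℝ) (i : ℕ) (x : E) : ℝ :=
  (if i = a then G x else 0) + (if i = b then g x else 0)

lemma sum_pointCost (ha : a ≤ n) (hb : b ≤ n) (p : ℕ → E) :
    ∑ i ∈ Finset.range (n + 1), pointCost a b G g i (p i) = G (p a) + g (p b) := by
  simp [pointCost, Finset.sum_add_distrib, ha, hb]

lemma pointCost_nonneg (hG : ∀ x, 0 ≤ G x) (hg : ∀ x, 0 ≤ g x) (i : ℕ) (x : E) :
    0 ≤ pointCost a b G g i x := by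
  unfold pointCost
  split_ifs <;> simp [hG x, hg x, add_nonneg]

variable [NormedAddCommGroup E]

lemma isBoundedLipschitz_pointCost (hG : IsBoundedLipschitz G K) (hg : IsBoundedLipschitz g K)
    (i : ℕ) : IsBoundedLipschitz (pointCost a b G g i)
      ((if i = a then K else 0) + (if i = b then K else 0)) := by
  refine IsBoundedLipschitz.add ?_ ?_
  · split_ifs
    exacts [hG, ⟨by simp, by simp⟩]
  · split_ifs
    exacts [hg, ⟨by simp, by simp⟩]

lemma IsLagrangian.grid_le {L : ℝ × E → E → ℝ} (hL : IsLagrangian L K) {h r : ℝ} {i : ℕ}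
    (hr : r ∈ Ioc (i * h) ((i + 1 : ℕ) * h)) (y : E) {w : E} (hw : ‖w‖ ≤ 1) :
    L (i * h, y) w ≤ L (r, y) w + K * h := by
  have hdist : dist ((i * h, y) : ℝ × E) (r, y) ≤ h := by
    have := hr.2
    push_cast at this
    rw [Prod.dist_eq, dist_self, Real.dist_eq, abs_sub_comm, abs_of_pos (sub_pos.2 hr.1)]
    exact max_le (by linarith) (by linarith [hr.1])
  exact (hL.le_add _ _ hw).trans (by gcongr; exact hL.bound_nonneg)

lemma isBoundedLipschitz_valueFn_gridStep [NormedSpace ℝ E] [FiniteDimensional ℝ E]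
    {τ : Measure ℝ} [IsFiniteMeasure τ] {L : ℝ × E → E → ℝ} (hL : IsLagrangian L K)
    {g : ℕ → E → ℝ} {c : ℕ → ℝ} (hg : ∀ i, IsBoundedLipschitz (g i) (c i)) {h M : ℝ} (hh : 0 ≤ h)
    (hM : ∑ i ∈ Finset.range (n + 1), c i + K * τ.real univ ≤ M) (i : ℕ) (hi : i ≤ n) :
    IsBoundedLipschitz (valueFn (gridStep τ h) (fun i x => L (i * h, x)) g i) M :=
  (isBoundedLipschitz_valueFn (gridStep_nonneg ·) (fun i => hL.freeze (i * h)) hg i).mono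
    ((add_le_add
      (Finset.sum_le_sum_of_subset_of_nonneg (by gcongr) fun j _ _ => (hg j).bound_nonneg)
      (mul_le_mul_of_nonneg_left (sum_gridStep_le hh i) hL.bound_nonneg)).trans hM)

variable [MeasurableSpace E]

lemma sum_integral_pointCost [OpensMeasurableSpace E] (hG : IsBoundedLipschitz G K)
    (hg : IsBoundedLipschitz g K) (ha : a ≤ n) (hb : b ≤ n) (μ : ℕ → Measure E)
    [∀ i, IsFiniteMeasure (μ i)] :
    ∑ i ∈ Finset.range (n + 1), ∫ y, pointCost a b G g i y ∂μ i =
      ∫ y, G y ∂μ a + ∫ y, g y ∂μ b := by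
  have hi (i : ℕ) : ∫ y, pointCost a b G g i y ∂μ i =
      (if i = a then ∫ y, G y ∂μ i else 0) + (if i = b then ∫ y, g y ∂μ i else 0) := by
    have hGi : Integrable G (μ i) := hG.integrable
    have hgi : Integrable g (μ i) := hg.integrable
    unfold pointCost
    split_ifs <;> simp [integral_add hGi hgi]
  simp [hi, Finset.sum_add_distrib, ha, hb]

variable [NormedSpace ℝ E] [FiniteDimensional ℝ E] [BorelSpace E] {τ : Measure ℝ}
  [IsFiniteMeasure τ] {κ : Kernel ℝ E} [IsMarkovKernel κ] {v : ℝ → E → E} {T : ℝ}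
  {L : ℝ × E → E → ℝ}

namespace IsTransport

lemma integral_integral_add_const (htr : IsTransport τ κ v T) (hL : IsLagrangian L K) (C : ℝ)
    (s : Set ℝ) : ∫ r in s, ∫ y, (L (r, y) (v r y) + C) ∂κ r ∂τ =
      ∫ r in s, ∫ y, L (r, y) (v r y) ∂κ r ∂τ + C * τ.real s := by
  have hm : Measurable (Function.uncurry fun r y => L (r, y) (v r y)) :=
    hL.continuous.measurable.comp (measurable_id.prodMk htr.measurable)
  have hK (r : ℝ) (y : E) : |L (r, y) (v r y)| ≤ K :=
    (abs_of_nonneg (hL.nonneg _ _)).trans_le (hL.le _ (htr.norm_le r y))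
  have hinner (r : ℝ) : ∫ y, (L (r, y) (v r y) + C) ∂κ r = ∫ y, L (r, y) (v r y) ∂κ r + C := by
    rw [integral_add (integrable_kernel_apply hm hK r) (integrable_const C)]
    simp
  simp only [hinner]
  rw [integral_add (integrable_integral_kernel hm hK) (integrable_const C)]
  simp [mul_comm]

lemma integral_valueFn_le (htr : IsTransport τ κ v T) (φ : ContDiffBump (0 : E)) {h e M : ℝ}
    (hL : IsLagrangian L K) {g : ℕ → E → ℝ} {c : ℕ → ℝ} (hg : ∀ i, IsBoundedLipschitz (g i) (c i))
    (hh : 0 < h) (he : ∀ i, gridStep τ h i ≤ e) (hn : n * h = T)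
    (hM : ∑ i ∈ Finset.range (n + 1), c i + K * τ.real univ ≤ M) :
    ∫ y, valueFn (gridStep τ h) (fun i x => L (i * h, x)) g n y ∂κ T ≤
      ∑ i ∈ Finset.range (n + 1), ∫ y, g i y ∂κ (i * h) +
      ∫ r in Ioc 0 T, ∫ y, L (r, y) (v r y) ∂κ r ∂τ +
      (2 * M * φ.rOut + K * τ.real univ * h +
        mollifyBound φ * (K + 2 * M) * e * τ.real univ) := by
  have hK : 0 ≤ K := hL.bound_nonneg
  have hvalue := isBoundedLipschitz_valueFn_gridStep hL hg hh.le hM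
  have hmesh (i : ℕ) (r : ℝ) (hr : r ∈ Ioc (i * h) ((i + 1 : ℕ) * h)) (y : E) :
      L (i * h, y) (v r y) + K * φ.rOut ≤ L (r, y) (v r y) + K * (h + φ.rOut) := by
    linarith [hL.grid_le hr y (htr.norm_le r y)]
  have hbound (r : ℝ) (y : E) :
      |L (r, y) (v r y) + K * (h + φ.rOut)| ≤ K + K * (h + φ.rOut) := by
    have := φ.rOut_pos
    rw [abs_of_nonneg (add_nonneg (hL.nonneg _ _) (by positivity))]
    linarith [hL.le (r, y) (htr.norm_le r y)]
  have hmain := htr.integral_mollify_valueFn_le (t := fun i : ℕ => i * h) (φ := φ)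
    (θ := gridStep τ h)
    (fun i j hij => by dsimp only; gcongr) (by simp) (fun i => hL.freeze (i * h)) hg
    (fun i => rfl) he
    ((hL.continuous.measurable.comp (measurable_id.prodMk htr.measurable)).add_const _)
    hbound hmesh hn.le hvalue
  simp only [Nat.cast_zero, zero_mul, hn, htr.integral_integral_add_const hL] at hmain
  have hV := (abs_le.1 ((hvalue n le_rfl).abs_integral_mollify_sub_le φ (κ T))).1
  have hpoint : ∑ i ∈ Finset.range (n + 1), ∫ y, mollify φ (g i) y ∂κ (i * h) ≤
      ∑ i ∈ Finset.range (n + 1), ∫ y, g i y ∂κ (i * h) +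
        (∑ i ∈ Finset.range (n + 1), c i) * φ.rOut := by
    rw [Finset.sum_mul, ← Finset.sum_add_distrib]
    exact Finset.sum_le_sum fun i _ => by
      linarith [(abs_le.1 ((hg i).abs_integral_mollify_sub_le φ (κ (i * h)))).2]
  have herr : K * (h + φ.rOut) * τ.real (Ioc 0 T) + mollifyBound φ * (K + 2 * M) * e *
      τ.real (Ioc 0 T) ≤ (K * (h + φ.rOut) + mollifyBound φ * (K + 2 * M) * e) * τ.real univ := by
    have := zero_le_one.trans (one_le_mollifyBound φ)
    have := (gridStep_nonneg 0).trans (he 0)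
    have := (hvalue n le_rfl).bound_nonneg
    have := φ.rOut_pos
    rw [← add_mul]
    gcongr
    all_goals simp
  linarith [mul_le_mul_of_nonneg_right hM φ.rOut_pos.le]

lemma eventually_integral_valueFn_le (htr : IsTransport τ κ v T) (hτ : IsContinuousClock τ)
    (hT : 0 < T) (hL : IsLagrangian L K) (M : ℝ) {ε : ℝ} (hε : 0 < ε) :
    ∀ᶠ n : ℕ in Filter.atTop, ∀ (g : ℕ → E → ℝ) (c : ℕ → ℝ), (∀ i, IsBoundedLipschitz (g i) (c i)) →
      ∑ i ∈ Finset.range (n + 1), c i + K * τ.real univ ≤ M →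
      ∫ y, valueFn (gridStep τ (T / n)) (fun i x => L (i * (T / n), x)) g n y ∂κ T ≤
        ∑ i ∈ Finset.range (n + 1), ∫ y, g i y ∂κ (i * (T / n)) +
        ∫ r in Ioc 0 T, ∫ y, L (r, y) (v r y) ∂κ r ∂τ + ε := by
  obtain ⟨δ, hδ0, hδ⟩ : ∃ δ > 0, 2 * M * δ < ε / 3 := exists_pos_mul_lt (by positivity) _
  let φ : ContDiffBump (0 : E) := ⟨δ / 2, δ, half_pos hδ0, half_lt_self hδ0⟩
  obtain ⟨ρ, hρ0, hρ⟩ : ∃ ρ > 0, K * τ.real univ * ρ < ε / 3 := exists_pos_mul_lt (by positivity) _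
  obtain ⟨e, he0, he⟩ : ∃ e > 0, mollifyBound φ * (K + 2 * M) * τ.real univ * e < ε / 3 :=
    exists_pos_mul_lt (by positivity) _
  filter_upwards [hτ.eventually_gridStep_le T he0, Filter.eventually_gt_atTop 0,
    (tendsto_const_div_atTop_nhds_zero_nat T).eventually_le_const hρ0] with n hne hn0 hnρ g c hg hM
  have hn : (0 : ℝ) < n := Nat.cast_pos.2 hn0
  have hmain := htr.integral_valueFn_le φ hL hg (div_pos hT hn) hne (mul_div_cancel₀ T hn.ne') hM
  have hK : 0 ≤ K * τ.real univ := mul_nonneg hL.bound_nonneg measureReal_nonneg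
  have hφ : φ.rOut = δ := rfl
  rw [hφ] at hmain
  linarith [mul_le_mul_of_nonneg_left hnρ hK]

lemma eventually_integral_valueFn_lt (htr : IsTransport τ κ v T) (hτ : IsContinuousClock τ)
    (hT : 0 < T) (hL : IsLagrangian L K) (hG : IsBoundedLipschitz G K)
    (hg : IsBoundedLipschitz g K) {A B : ℝ} (hA : A ∈ Icc 0 T) (hB : B ∈ Icc 0 T) {c : ℝ}
    (hc : ∫ r in Ioc 0 T, ∫ y, L (r, y) (v r y) ∂κ r ∂τ + ∫ y, G y ∂κ A + ∫ y, g y ∂κ B < c) :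
    ∀ᶠ n : ℕ in Filter.atTop,
      ∫ y, valueFn (gridStep τ (T / n)) (fun i x => L (i * (T / n), x))
        (pointCost (gridIndex T n A) (gridIndex T n B) G g) n y ∂κ T < c := by
  have hK := hL.bound_nonneg
  obtain ⟨ε, hε0, hε⟩ : ∃ ε > 0, (1 + 2 * K) * ε < c - (∫ r in Ioc 0 T,
      ∫ y, L (r, y) (v r y) ∂κ r ∂τ + ∫ y, G y ∂κ A + ∫ y, g y ∂κ B) :=
    exists_pos_mul_lt (sub_pos.2 hc) _
  obtain ⟨ρ, hρ0, hρ⟩ := hτ ε hε0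
  filter_upwards [htr.eventually_integral_valueFn_le hτ hT hL (2 * K + K * τ.real univ) hε0,
    Filter.eventually_gt_atTop 0,
    (tendsto_const_div_atTop_nhds_zero_nat T).eventually_le_const hρ0] with n hn hn0 hnρ
  have hmove {D : ℝ} {u : E → ℝ} (hD : D ∈ Icc 0 T) (hu : IsBoundedLipschitz u K) :
      ∫ y, u y ∂κ (gridIndex T n D * (T / n)) ≤ ∫ y, u y ∂κ D + K * ε := by
    have := (abs_le.1 (htr.abs_integral_sub_le hu (by positivity)
      (gridIndex_mul_le hT hD.1 n) hD.2)).1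
    linarith [mul_le_mul_of_nonneg_left (hρ _ D ((sub_gridIndex_mul_le hT hn0).trans hnρ)) hK]
  have hmain := hn _ _
    (isBoundedLipschitz_pointCost (a := gridIndex T n A) (b := gridIndex T n B) hG hg)
    (by simp [Finset.sum_add_distrib, gridIndex_le hT hA.2, gridIndex_le hT hB.2, two_mul])
  rw [sum_integral_pointCost hG hg (gridIndex_le hT hA.2) (gridIndex_le hT hB.2)
    (fun i => κ (i * (T / n)))] at hmain
  linarith [hmove hA hG, hmove hB hg]

end IsTransport

end Duality

section ControlledCurve

variable {E : Type*} [NormedAddCommGroup E] [NormedSpace ℝ E] [MeasurableSpace E]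
  {τ : Measure ℝ} {h : ℝ} {n : ℕ} {γ w : ℝ → E} {p v : ℕ → E}

/-- When time is measured by `τ`, the curve `γ` has velocity `w`, of norm at most one: these are the
competitors of the control problem. -/
structure IsControlledCurve (τ : Measure ℝ) (γ w : ℝ → E) : Prop where
  measurable : Measurable w
  norm_le : ∀ r, ‖w r‖ ≤ 1
  sub_eq : ∀ s t, s ≤ t → γ t - γ s = ∫ r in Ioc s t, w r ∂τ

lemma IsControlledCurve.norm_sub_le [IsFiniteMeasure τ] (hγ : IsControlledCurve τ γ w)
    {s t : ℝ} (hst : s ≤ t) : ‖γ t - γ s‖ ≤ τ.real (Ioc s t) := by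
  rw [hγ.sub_eq s t hst]
  exact (norm_setIntegral_le_of_norm_le_const (measure_lt_top τ _)
    fun r _ => hγ.norm_le r).trans_eq (one_mul _)

lemma IsContinuousClock.exists_dist_lt [IsFiniteMeasure τ] (hτ : IsContinuousClock τ) {ε : ℝ}
    (hε : 0 < ε) : ∃ ρ > 0, ∀ {γ w : ℝ → E}, IsControlledCurve τ γ w →
      ∀ {s t : ℝ}, dist s t < ρ → dist (γ s) (γ t) < ε := by
  obtain ⟨ρ, hρ, hτρ⟩ := hτ (ε / 2) (half_pos hε)
  refine ⟨ρ, hρ, fun {γ w} hγ {s t} hst => ?_⟩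
  rw [Real.dist_eq, abs_lt] at hst
  rcases le_total s t with h | h
  · rw [dist_comm, dist_eq_norm]
    linarith [hγ.norm_sub_le h, hτρ s t (by linarith)]
  · rw [dist_eq_norm]
    linarith [hγ.norm_sub_le h, hτρ t s (by linarith)]

lemma IsControlledCurve.continuous [IsFiniteMeasure τ] (hγ : IsControlledCurve τ γ w)
    (hτ : IsContinuousClock τ) : Continuous γ := by
  refine Metric.continuous_iff.2 fun t ε hε => ?_
  obtain ⟨ρ, hρ, hτρ⟩ := hτ.exists_dist_lt (E := E) hε
  exact ⟨ρ, hρ, fun s hs => hτρ hγ hs⟩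

/-- The velocity which is constant equal to `v i` on the `i`-th interval of the grid, left endpoint
excluded; it is `v 0` at all times `r ≤ 0`. -/
def gridVelocity {E : Type*} (h : ℝ) (v : ℕ → E) (r : ℝ) : E := v (⌈r / h⌉₊ - 1)

lemma gridVelocity_eq {E : Type*} {v : ℕ → E} {h : ℝ} (hh : 0 < h) {i : ℕ} {r : ℝ}
    (hr : r ∈ Ioc (i * h) ((i + 1 : ℕ) * h)) : gridVelocity h v r = v i := by
  have hceil : ⌈r / h⌉₊ = i + 1 := by
    rw [Nat.ceil_eq_iff i.succ_ne_zero, lt_div_iff₀ hh, div_le_iff₀ hh]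
    exact hr
  rw [gridVelocity, hceil, Nat.add_sub_cancel]

lemma isControlledCurve_gridVelocity [IsFiniteMeasure τ] (h : ℝ) (hv : ∀ i, ‖v i‖ ≤ 1) (x : E) :
    IsControlledCurve τ (fun t => x + ∫ r in (0 : ℝ)..t, gridVelocity h v r ∂τ)
      (gridVelocity h v) := by
  have hceil : Measurable fun r : ℝ => ⌈r / h⌉₊ := (measurable_id.div_const h).nat_ceil
  have hint : Integrable (gridVelocity h v) τ :=
    .of_bound ((StronglyMeasurable.of_discrete (f := fun k => v (k - 1))).comp_measurable
      hceil).aestronglyMeasurable 1 (.of_forall fun r => hv _)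
  refine ⟨(Measurable.of_discrete (f := fun k => v (k - 1))).comp hceil, fun r => hv _,
    fun s t hst => ?_⟩
  rw [add_sub_add_left_eq_sub, intervalIntegral.integral_interval_sub_left
    hint.intervalIntegrable hint.intervalIntegrable, intervalIntegral.integral_of_le hst]

lemma IsControlledCurve.eq_path [CompleteSpace E]
    (hγ : IsControlledCurve τ γ w) (hh : 0 ≤ h)
    (hw : ∀ i : ℕ, ∀ r ∈ Ioc (i * h) ((i + 1 : ℕ) * h), w r = v i)
    (hp : ∀ i < n, p (i + 1) = p i + gridStep τ h i • v i) (h0 : γ 0 = p 0) :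
    ∀ i : ℕ, i ≤ n → γ (i * h) = p i := by
  intro i hi
  induction i with
  | zero => simpa using h0
  | succ i ih =>
    have hstep := hγ.sub_eq (i * h) ((i + 1 : ℕ) * h) (by push_cast; linarith)
    rw [setIntegral_congr_fun measurableSet_Ioc (hw i), setIntegral_const] at hstep
    rw [← sub_add_cancel (γ _) (γ (i * h)), hstep, ih (Nat.le_of_succ_le hi), hp i hi, add_comm,
      gridStep]

lemma IsControlledCurve.apply_gridIndex_le [IsFiniteMeasure τ] (hγ : IsControlledCurve τ γ w)
    {g : E → ℝ} {K T A e : ℝ} (hg : IsBoundedLipschitz g K) (hT : 0 < T) (hA : 0 ≤ A)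
    (he : τ.real (Ioc (gridIndex T n A * (T / n)) A) ≤ e) :
    g (γ A) ≤ g (γ (gridIndex T n A * (T / n))) + K * e := by
  have := (le_abs_self _).trans (hg.norm_sub_le (γ A) (γ (gridIndex T n A * (T / n))))
  rw [dist_eq_norm] at this
  linarith [mul_le_mul_of_nonneg_left
    ((hγ.norm_sub_le (gridIndex_mul_le hT hA n)).trans he) hg.bound_nonneg]

end ControlledCurve

section CheapCurve

open ProbabilityTheory

lemma sum_setIntegral_grid {τ : Measure ℝ} {f : ℝ → ℝ} (hf : Integrable f τ) {h : ℝ} (hh : 0 ≤ h)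
    (n : ℕ) : ∑ i ∈ Finset.range n, ∫ r in Ioc (i * h) ((i + 1 : ℕ) * h), f r ∂τ =
      ∫ r in Ioc 0 (n * h), f r ∂τ := by
  have hmono (i : ℕ) : (i : ℝ) * h ≤ (i + 1 : ℕ) * h := by gcongr; exact i.le_succ
  have := intervalIntegral.sum_integral_adjacent_intervals (a := fun i : ℕ => (i : ℝ) * h) (n := n)
    fun i _ => hf.intervalIntegrable
  simpa only [intervalIntegral.integral_of_le (hmono _), Nat.cast_zero, zero_mul,
    intervalIntegral.integral_of_le (mul_nonneg n.cast_nonneg hh)] using this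

variable {E : Type*} [NormedAddCommGroup E] [NormedSpace ℝ E] [FiniteDimensional ℝ E]
  [MeasurableSpace E] [BorelSpace E] {τ : Measure ℝ} [IsFiniteMeasure τ] {T K : ℝ}
  {L : ℝ × E → E → ℝ}

lemma IsLagrangian.integrable_curve (hL : IsLagrangian L K) {γ w : ℝ → E} (hγ : Continuous γ)
    (hw : Measurable w) (hw1 : ∀ r, ‖w r‖ ≤ 1) : Integrable (fun r => L (r, γ r) (w r)) τ :=
  .of_bound (hL.continuous.measurable.comp
      ((measurable_id.prodMk hγ.measurable).prodMk hw)).aestronglyMeasurable K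
    (.of_forall fun r => (hL.isBoundedLipschitz _ (hw1 r)).norm_le _)

lemma IsControlledCurve.setIntegral_lagrangian_le {γ w : ℝ → E} (hγ : IsControlledCurve τ γ w)
    (hτ : IsContinuousClock τ) (hL : IsLagrangian L K) {n : ℕ} {p v : ℕ → E} {h e : ℝ}
    (hγp : ∀ i : ℕ, i ≤ n → γ (i * h) = p i)
    (hw : ∀ i : ℕ, ∀ r ∈ Ioc (i * h) ((i + 1 : ℕ) * h), w r = v i)
    (hh : 0 ≤ h) (he : ∀ i, gridStep τ h i ≤ e) (hhe : h ≤ e) :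
    ∫ r in Ioc 0 (n * h), L (r, γ r) (w r) ∂τ ≤
      ∑ i ∈ Finset.range n, gridStep τ h i * L (i * h, p (i + 1)) (v i) + K * e * τ.real univ := by
  have hint : Integrable (fun r => L (r, γ r) (w r)) τ :=
    hL.integrable_curve (hγ.continuous hτ) hγ.measurable hγ.norm_le
  have hstep (i : ℕ) (hi : i < n) : ∫ r in Ioc (i * h) ((i + 1 : ℕ) * h), L (r, γ r) (w r) ∂τ ≤
      gridStep τ h i * (L (i * h, p (i + 1)) (v i) + K * e) := by
    refine le_of_le_of_eq ?_ (setIntegral_const _)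
    refine setIntegral_mono_on hint.integrableOn (integrable_const _).integrableOn
      measurableSet_Ioc fun r hr => ?_
    have hdist : dist (r, γ r) (i * h, p (i + 1)) ≤ e := by
      refine max_le ((Real.dist_eq _ _).trans_le (abs_le.2 ?_)) ?_
      · have := hr.2
        push_cast at this
        constructor <;> linarith [hr.1]
      · rw [dist_comm, dist_eq_norm, ← hγp (i + 1) hi]
        exact (hγ.norm_sub_le hr.2).trans
          ((measureReal_mono (Ioc_subset_Ioc_left hr.1.le)).trans (he i))
    rw [hw i r hr]
    have := hL.le_add (r, γ r) (i * h, p (i + 1)) (hw i r hr ▸ hγ.norm_le r)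
    linarith [mul_le_mul_of_nonneg_left hdist hL.bound_nonneg]
  rw [← sum_setIntegral_grid hint hh]
  refine (Finset.sum_le_sum fun i hi => hstep i (Finset.mem_range.1 hi)).trans ?_
  simp only [mul_add, Finset.sum_add_distrib, ← Finset.sum_mul]
  have := mul_le_mul_of_nonneg_left (sum_gridStep_le (τ := τ) hh n)
    (mul_nonneg hL.bound_nonneg (hh.trans hhe))
  linarith

variable {G g : E → ℝ} {c : ℝ}

lemma exists_isControlledCurve_le_valueFn (hτ : IsContinuousClock τ) (hT : 0 < T)
    (hL : IsLagrangian L K) (hG : IsBoundedLipschitz G K) (hg : IsBoundedLipschitz g K) {A B : ℝ}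
    (hA : A ∈ Icc 0 T) (hB : B ∈ Icc 0 T) {ε : ℝ} (hε : 0 < ε) :
    ∀ᶠ n : ℕ in Filter.atTop, ∀ x, ∃ γ w, IsControlledCurve τ γ w ∧ γ T = x ∧
      ∫ r in Ioc 0 T, L (r, γ r) (w r) ∂τ + G (γ A) + g (γ B) ≤
        valueFn (gridStep τ (T / n)) (fun i x => L (i * (T / n), x))
          (pointCost (gridIndex T n A) (gridIndex T n B) G g) n x + ε := by
  obtain ⟨e, he0, he⟩ := exists_pos_mul_lt hε (K * τ.real univ + 2 * K)
  obtain ⟨ρ, hρ0, hρ⟩ := hτ e he0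
  filter_upwards [hτ.eventually_gridStep_le T he0, Filter.eventually_gt_atTop 0,
    (tendsto_const_div_atTop_nhds_zero_nat T).eventually_le_const (lt_min he0 hρ0)]
    with n hstep hn hmesh x
  have hn' : (n : ℝ) ≠ 0 := Nat.cast_ne_zero.2 hn.ne'
  have hh : 0 < T / n := by positivity
  obtain ⟨p, v, hpx, hv, hpv, hcost⟩ := exists_path_cost_eq_valueFn (gridStep_nonneg (τ := τ)
    (h := T / n)) (fun i => hL.freeze (i * (T / n)))
    (fun i => isBoundedLipschitz_pointCost (a := gridIndex T n A) (b := gridIndex T n B) hG hg i)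
    n x
  have hγ := isControlledCurve_gridVelocity (τ := τ) (T / n) hv (p 0)
  have hw (i : ℕ) (r : ℝ) (hr : r ∈ Ioc (i * (T / n)) ((i + 1 : ℕ) * (T / n))) :=
    gridVelocity_eq (v := v) hh hr
  have hγp := hγ.eq_path hh.le hw hpv (by simp)
  refine ⟨_, _, hγ, ?_, ?_⟩
  · simpa [mul_div_cancel₀ _ hn', hpx] using hγp n le_rfl
  have hrun := hγ.setIntegral_lagrangian_le hτ hL hγp hw hh.le hstep
    (hmesh.trans (min_le_left _ _))
  have hgA := hγ.apply_gridIndex_le hG hT hA.1 (n := n)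
    (hρ _ _ ((sub_gridIndex_mul_le hT hn).trans (hmesh.trans (min_le_right _ _))))
  have hgB := hγ.apply_gridIndex_le hg hT hB.1 (n := n)
    (hρ _ _ ((sub_gridIndex_mul_le hT hn).trans (hmesh.trans (min_le_right _ _))))
  rw [hγp _ (gridIndex_le hT hA.2)] at hgA
  rw [hγp _ (gridIndex_le hT hB.2)] at hgB
  rw [mul_div_cancel₀ _ hn'] at hrun
  rw [sum_pointCost (gridIndex_le hT hA.2) (gridIndex_le hT hB.2)] at hcost
  rw [← hcost]
  linarith

variable {κ : Kernel ℝ E} [IsMarkovKernel κ] {v : ℝ → E → E}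

lemma IsTransport.exists_isControlledCurve_cost_lt (htr : IsTransport τ κ v T)
    (hτ : IsContinuousClock τ) (hT : 0 < T) (hL : IsLagrangian L K) (hG : IsBoundedLipschitz G K)
    (hg : IsBoundedLipschitz g K) (hG0 : ∀ x, 0 ≤ G x) (hg0 : ∀ x, 0 ≤ g x) {A B : ℝ}
    (hA : A ∈ Icc 0 T) (hB : B ∈ Icc 0 T) {D : Set E} (hD : MeasurableSet D)
    (hc : ∫ r in Ioc 0 T, ∫ y, L (r, y) (v r y) ∂κ r ∂τ + ∫ y, G y ∂κ A + ∫ y, g y ∂κ B <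
      c * (κ T).real D) :
    ∃ γ w, IsControlledCurve τ γ w ∧ γ T ∈ D ∧
      ∫ r in Ioc 0 T, L (r, γ r) (w r) ∂τ + G (γ A) + g (γ B) < c := by
  obtain ⟨ε, hε0, hε⟩ := exists_pos_mul_lt (sub_pos.2 hc) ((κ T).real D)
  obtain ⟨n, hvalue, hcurve⟩ := ((htr.eventually_integral_valueFn_lt hτ hT hL hG hg hA hB
    (c := (c - ε) * (κ T).real D) (by linarith)).and
    (exists_isControlledCurve_le_valueFn hτ hT hL hG hg hA hB hε0)).exists
  set U := valueFn (gridStep τ (T / n)) (fun i x => L (i * (T / n), x))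
    (pointCost (gridIndex T n A) (gridIndex T n B) G g) n
  have hU0 (x : E) : 0 ≤ U x := valueFn_nonneg gridStep_nonneg (fun i => hL.freeze _)
    (isBoundedLipschitz_pointCost hG hg) (pointCost_nonneg hG0 hg0) n x
  have hUint : Integrable U (κ T) := (isBoundedLipschitz_valueFn gridStep_nonneg
    (fun i => hL.freeze _) (isBoundedLipschitz_pointCost hG hg) n).integrable
  obtain ⟨x, hxD, hx⟩ : ∃ x ∈ D, U x < c - ε := by
    by_contra! hD'
    have hconst : (c - ε) * (κ T).real D ≤ ∫ y in D, U y ∂κ T := by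
      rw [mul_comm]
      exact (setIntegral_const (c - ε)).symm.trans_le (setIntegral_mono_on
        (integrable_const _).integrableOn hUint.integrableOn hD hD')
    linarith [setIntegral_le_integral (s := D) hUint (.of_forall hU0)]
  obtain ⟨γ, w, hγ, rfl, hcost⟩ := hcurve x
  exact ⟨γ, w, hγ, hxD, by linarith⟩

end CheapCurve

section LipschitzMinorant

variable {α : Type*} {f : α → ℝ≥0∞}

lemma min_natCast_ne_top (k : ℕ) (x : α) : min (f x) (k : ℝ≥0∞) ≠ ⊤ :=
  ne_top_of_le_ne_top (ENNReal.natCast_ne_top k) (min_le_right _ _)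

variable [PseudoMetricSpace α]

/-- The infimal convolution of `min f k` with `k * dist`: as `k` grows, these functions exhaust a
lower semicontinuous `f` from below. -/
def lipschitzMinorant (f : α → ℝ≥0∞) (k : ℕ) (x : α) : ℝ :=
  ⨅ y, ((min (f y) k).toReal + k * dist x y)

lemma lipschitzMinorant_nonneg (k : ℕ) (x : α) : 0 ≤ lipschitzMinorant f k x :=
  Real.iInf_nonneg fun _ => by positivity

lemma lipschitzMinorant_le (k : ℕ) (x y : α) :
    lipschitzMinorant f k x ≤ (min (f y) k).toReal + k * dist x y :=
  ciInf_le ⟨0, by rintro _ ⟨z, rfl⟩; positivity⟩ y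

lemma lipschitzMinorant_self_le (k : ℕ) (x : α) :
    lipschitzMinorant f k x ≤ (min (f x) k).toReal := by
  simpa using lipschitzMinorant_le (f := f) k x x

lemma isBoundedLipschitz_lipschitzMinorant (k : ℕ) :
    IsBoundedLipschitz (lipschitzMinorant f k) k where
  norm_le x := by
    rw [Real.norm_of_nonneg (lipschitzMinorant_nonneg k x)]
    exact (lipschitzMinorant_self_le k x).trans
      (ENNReal.toReal_mono (ENNReal.natCast_ne_top k) (min_le_right _ _))
  norm_sub_le x y := by
    have hle (x y : α) : lipschitzMinorant f k x - lipschitzMinorant f k y ≤ k * dist x y := by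
      have : Nonempty α := ⟨x⟩
      rw [sub_le_comm]
      refine le_ciInf fun z => ?_
      have := mul_le_mul_of_nonneg_left (dist_triangle x y z) k.cast_nonneg (α := ℝ)
      linarith [lipschitzMinorant_le (f := f) k x z]
    exact abs_sub_le_iff.2 ⟨hle x y, dist_comm x y ▸ hle y x⟩

lemma monotone_lipschitzMinorant (x : α) : Monotone fun k => lipschitzMinorant f k x := by
  intro k l hkl
  have : Nonempty α := ⟨x⟩
  have hkl' : (k : ℝ≥0∞) ≤ l := Nat.cast_le.2 hkl
  refine le_ciInf fun y => (lipschitzMinorant_le k x y).trans ?_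
  have := ENNReal.toReal_mono (min_natCast_ne_top l y) (min_le_min_left (f y) hkl')
  gcongr

lemma ofReal_lipschitzMinorant_le (k : ℕ) (x : α) :
    ENNReal.ofReal (lipschitzMinorant f k x) ≤ f x :=
  (ENNReal.ofReal_le_of_le_toReal (lipschitzMinorant_self_le k x)).trans (min_le_left _ _)

lemma iSup_ofReal_lipschitzMinorant (hf : LowerSemicontinuous f) (x : α) :
    ⨆ k, ENNReal.ofReal (lipschitzMinorant f k x) = f x := by
  refine le_antisymm (iSup_le fun k => ofReal_lipschitzMinorant_le k x)
    (le_of_forall_lt fun c hc => ?_)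
  obtain ⟨m, hcm, hmx⟩ := ENNReal.lt_iff_exists_nnreal_btwn.1 hc
  obtain ⟨r, hr, hball⟩ := Metric.eventually_nhds_iff.1 (hf x m hmx)
  obtain ⟨k, hk⟩ := exists_nat_ge (max (m : ℝ) (m / r))
  have : Nonempty α := ⟨x⟩
  refine hcm.trans_le (le_iSup_of_le k ?_)
  rw [← ENNReal.ofReal_coe_nnreal]
  refine ENNReal.ofReal_le_ofReal (le_ciInf fun y => ?_)
  rcases lt_or_ge (dist y x) r with hy | hy
  · have hmin : (m : ℝ≥0∞) ≤ min (f y) k :=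
      le_min (hball hy).le (by exact_mod_cast (le_max_left _ _).trans hk)
    have := ENNReal.toReal_mono (min_natCast_ne_top k y) hmin
    rw [ENNReal.coe_toReal] at this
    linarith [mul_nonneg (k.cast_nonneg (α := ℝ)) (dist_nonneg (x := x) (y := y))]
  · have hmr : (m : ℝ) ≤ k * r := (div_le_iff₀ hr).1 ((le_max_right _ _).trans hk)
    have := mul_le_mul_of_nonneg_left hy k.cast_nonneg (α := ℝ)
    rw [dist_comm] at this
    linarith [ENNReal.toReal_nonneg (a := min (f y) k)]

end LipschitzMinorant

section Compactness

open Filter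

lemma IsBoundedLipschitz.integrable_curve {E F : Type*} [NormedAddCommGroup E]
    [NormedAddCommGroup F] {τ : Measure ℝ} [IsFiniteMeasure τ] {f : ℝ × E → F} {K : ℝ}
    (hf : IsBoundedLipschitz f K) {γ : ℝ → E} (hγ : Continuous γ) :
    Integrable (fun r => f (r, γ r)) τ :=
  .of_bound (hf.continuous.comp (continuous_id.prodMk hγ)).aestronglyMeasurable K
    (.of_forall fun _ => hf.norm_le _)

lemma tendsto_setIntegral_curve {E F : Type*} [NormedAddCommGroup E] [NormedAddCommGroup F]
    [NormedSpace ℝ F] {τ : Measure ℝ} [IsFiniteMeasure τ] {f : ℝ × E → F} (hf : Continuous f)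
    {K : ℝ} (hK : ∀ q, ‖f q‖ ≤ K) {γ : ℕ → ℝ → E} {γ' : ℝ → E} (hγ : ∀ k, Continuous (γ k)) {T : ℝ}
    (hlim : ∀ t ∈ Icc 0 T, Tendsto (fun k => γ k t) atTop (𝓝 (γ' t))) {t : ℝ} (ht : t ≤ T) :
    Tendsto (fun k => ∫ r in Ioc 0 t, f (r, γ k r) ∂τ) atTop
      (𝓝 (∫ r in Ioc 0 t, f (r, γ' r) ∂τ)) := by
  refine tendsto_integral_of_dominated_convergence (fun _ => K)
    (fun k => (hf.comp (continuous_id.prodMk (hγ k))).aestronglyMeasurable)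
    (integrable_const _) (fun k => .of_forall fun r => hK _)
    ((ae_restrict_iff' measurableSet_Ioc).2 (.of_forall fun r hr => ?_))
  exact (hf.tendsto _).comp (tendsto_const_nhds.prodMk_nhds (hlim r ⟨hr.1.le, hr.2.trans ht⟩))

variable {E : Type*} [NormedAddCommGroup E] [NormedSpace ℝ E] [MeasurableSpace E]
  {τ : Measure ℝ} [IsFiniteMeasure τ] {T R : ℝ}

lemma exists_subseq_tendsto_of_isControlledCurve [ProperSpace E] (hτ : IsContinuousClock τ)
    (hT : 0 ≤ T) {γ w : ℕ → ℝ → E} (hγ : ∀ k, IsControlledCurve τ (γ k) (w k))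
    (hR : ∀ k, ‖γ k T‖ ≤ R) :
    ∃ φ : ℕ → ℕ, StrictMono φ ∧ ∃ γ' : ℝ → E, Continuous γ' ∧
      ∀ t ∈ Icc 0 T, Tendsto (fun k => γ (φ k) t) atTop (𝓝 (γ' t)) := by
  let c (k : ℕ) : BoundedContinuousFunction (Icc 0 T) E :=
    .mkOfCompact ⟨fun t => γ k t, ((hγ k).continuous hτ).comp continuous_subtype_val⟩
  have hball (f : BoundedContinuousFunction (Icc 0 T) E) (t : Icc 0 T) (hf : f ∈ range c) :
      f t ∈ Metric.closedBall 0 (R + τ.real univ) := by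
    obtain ⟨k, rfl⟩ := hf
    have hdist := ((hγ k).norm_sub_le t.2.2).trans (measureReal_mono (subset_univ _))
    rw [mem_closedBall_zero_iff]
    change ‖γ k t‖ ≤ _
    linarith [norm_le_norm_add_norm_sub (γ k T) (γ k t), hR k]
  have hequi : Equicontinuous ((↑) : range c → Icc 0 T → E) := by
    refine fun s => Metric.equicontinuousAt_iff.2 fun ε hε => ?_
    obtain ⟨ρ, hρ, hτρ⟩ := hτ.exists_dist_lt (E := E) hε
    refine ⟨ρ, hρ, fun t ht => ?_⟩
    rintro ⟨_, k, rfl⟩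
    rw [dist_comm] at ht
    exact hτρ (hγ k) ht
  obtain ⟨f, -, φ, hφ, hf⟩ := (BoundedContinuousFunction.arzela_ascoli _
    (isCompact_closedBall 0 (R + τ.real univ)) _ hball hequi).tendsto_subseq
    fun k => subset_closure (mem_range_self (f := c) k)
  refine ⟨φ, hφ, fun t => f (projIcc 0 T hT t), f.continuous.comp continuous_projIcc,
    fun t ht => ?_⟩
  dsimp only
  rw [projIcc_of_mem hT ht]
  exact ((continuous_eval_const (F := BoundedContinuousFunction (Icc 0 T) E) _).tendsto f).comp hf

end Compactness

section Penalty

open Filter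

variable {E : Type*} [NormedAddCommGroup E]
  {W : ℕ → ℝ × E → E} {Φ : ℝ × E → ℝ≥0∞}

/-- Running cost penalizing the deviation of the velocity from the fields `W l`, plus an
approximation of `Φ`. The weights `2 ^ l` make the velocities of a sequence of curves of bounded
penalty converge along with the `W l`. -/
def penalty (W : ℕ → ℝ × E → E) (Φ : ℝ × E → ℝ≥0∞) (k : ℕ) (q : ℝ × E) (v : E) : ℝ :=
  ∑ l ∈ Finset.range k, 2 ^ l * ‖v - W l q‖ + lipschitzMinorant Φ k q

lemma mul_norm_sub_le_penalty {l k : ℕ} (hlk : l < k) (q : ℝ × E) (v : E) :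
    2 ^ l * ‖v - W l q‖ ≤ penalty W Φ k q v :=
  (Finset.single_le_sum (f := fun l => 2 ^ l * ‖v - W l q‖) (fun _ _ => by positivity)
    (Finset.mem_range.2 hlk)).trans (le_add_of_nonneg_right (lipschitzMinorant_nonneg k q))

lemma lipschitzMinorant_le_penalty {j k : ℕ} (hjk : j ≤ k) (q : ℝ × E) (v : E) :
    lipschitzMinorant Φ j q ≤ penalty W Φ k q v :=
  (monotone_lipschitzMinorant q hjk).trans (le_add_of_nonneg_left (by positivity))

lemma isLagrangian_penalty {C : ℕ → ℝ} (hW : ∀ l, IsBoundedLipschitz (W l) (C l)) (k : ℕ) :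
    IsLagrangian (penalty W Φ k) (∑ l ∈ Finset.range k, 2 ^ l * (1 + C l) + k) where
  continuous := by
    have hWc := fun l => (hW l).continuous
    have hΦc := (isBoundedLipschitz_lipschitzMinorant (f := Φ) k).continuous
    unfold penalty
    fun_prop
  nonneg q v := add_nonneg (by positivity) (lipschitzMinorant_nonneg k q)
  isBoundedLipschitz v hv := by
    refine IsBoundedLipschitz.add ?_ (isBoundedLipschitz_lipschitzMinorant k)
    refine ⟨fun q => norm_sum_le_of_le _ fun l _ => ?_, fun q q' => ?_⟩
    · rw [norm_mul, norm_norm, norm_pow, Real.norm_ofNat]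
      have := (norm_sub_le v (W l q)).trans (add_le_add hv ((hW l).norm_le q))
      gcongr
    · rw [← Finset.sum_sub_distrib, Finset.sum_mul]
      refine norm_sum_le_of_le _ fun l _ => ?_
      rw [← mul_sub, norm_mul, norm_pow, Real.norm_ofNat, mul_assoc, Real.norm_eq_abs]
      gcongr
      refine (abs_norm_sub_norm_le _ _).trans ?_
      rw [sub_sub_sub_cancel_left, norm_sub_rev]
      refine ((hW l).norm_sub_le q q').trans ?_
      gcongr
      exact le_add_of_nonneg_left zero_le_one

end Penalty

section LimitCurve

open Filter

variable {E : Type*} [NormedAddCommGroup E] [NormedSpace ℝ E] [FiniteDimensional ℝ E]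
  [MeasurableSpace E] [BorelSpace E] {τ : Measure ℝ} [IsFiniteMeasure τ] {T : ℝ}
  {W : ℕ → ℝ × E → E} {C : ℕ → ℝ} {Φ : ℝ × E → ℝ≥0∞}

namespace IsControlledCurve

variable {γ w : ℝ → E} {k : ℕ}

lemma norm_sub_setIntegral_le_setIntegral_penalty (hγ : IsControlledCurve τ γ w)
    (hτ : IsContinuousClock τ) (hW : ∀ l, IsBoundedLipschitz (W l) (C l)) {l : ℕ} (hlk : l < k)
    {t : ℝ} (ht : t ∈ Icc 0 T) :
    2 ^ l * ‖γ t - γ 0 - ∫ r in Ioc 0 t, W l (r, γ r) ∂τ‖ ≤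
      ∫ r in Ioc 0 T, penalty W Φ k (r, γ r) (w r) ∂τ := by
  have hL := isLagrangian_penalty (Φ := Φ) hW k
  have hγc := hγ.continuous hτ
  have hw : Integrable w τ := .of_bound hγ.measurable.aestronglyMeasurable 1
    (.of_forall hγ.norm_le)
  have hWint : Integrable (fun r => W l (r, γ r)) τ := (hW l).integrable_curve hγc
  have hpen : Integrable (fun r => penalty W Φ k (r, γ r) (w r)) τ :=
    hL.integrable_curve hγc hγ.measurable hγ.norm_le
  calc 2 ^ l * ‖γ t - γ 0 - ∫ r in Ioc 0 t, W l (r, γ r) ∂τ‖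
      = 2 ^ l * ‖∫ r in Ioc 0 t, (w r - W l (r, γ r)) ∂τ‖ := by
        rw [hγ.sub_eq 0 t ht.1, integral_sub hw.integrableOn hWint.integrableOn]
    _ ≤ ∫ r in Ioc 0 t, 2 ^ l * ‖w r - W l (r, γ r)‖ ∂τ := by
        rw [integral_const_mul]
        gcongr
        exact norm_integral_le_integral_norm _
    _ ≤ ∫ r in Ioc 0 t, penalty W Φ k (r, γ r) (w r) ∂τ :=
        integral_mono ((hw.sub hWint).norm.const_mul _).integrableOn hpen.integrableOn
          fun r => mul_norm_sub_le_penalty hlk _ _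
    _ ≤ ∫ r in Ioc 0 T, penalty W Φ k (r, γ r) (w r) ∂τ :=
        setIntegral_mono_set hpen.integrableOn (.of_forall fun r => hL.nonneg _ _)
          (Ioc_subset_Ioc_right ht.2).eventuallyLE

lemma setIntegral_lipschitzMinorant_le_setIntegral_penalty (hγ : IsControlledCurve τ γ w)
    (hτ : IsContinuousClock τ) (hW : ∀ l, IsBoundedLipschitz (W l) (C l)) {j : ℕ} (hjk : j ≤ k) :
    ∫ r in Ioc 0 T, lipschitzMinorant Φ j (r, γ r) ∂τ ≤
      ∫ r in Ioc 0 T, penalty W Φ k (r, γ r) (w r) ∂τ :=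
  have hγc := hγ.continuous hτ
  integral_mono ((isBoundedLipschitz_lipschitzMinorant j).integrable_curve hγc).integrableOn
    ((isLagrangian_penalty hW k).integrable_curve hγc hγ.measurable hγ.norm_le).integrableOn
    fun _ => lipschitzMinorant_le_penalty hjk _ _

end IsControlledCurve

lemma exists_limit_curve (hτ : IsContinuousClock τ) (hT : 0 ≤ T)
    (hW : ∀ l, IsBoundedLipschitz (W l) (C l)) {Γ : E → ℝ≥0∞} {g : E → ℝ} (hg : Continuous g)
    (hg0 : ∀ x, 0 ≤ g x) {A B : ℝ} (hA : A ∈ Icc 0 T) (hB : B ∈ Icc 0 T) {R c : ℝ}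
    (hcheap : ∀ k, ∃ γ w, IsControlledCurve τ γ w ∧ ‖γ T‖ ≤ R ∧
      ∫ r in Ioc 0 T, penalty W Φ k (r, γ r) (w r) ∂τ + lipschitzMinorant Γ k (γ A) + g (γ B) ≤ c) :
    ∃ γ : ℝ → E, Continuous γ ∧ (∀ j, lipschitzMinorant Γ j (γ A) + g (γ B) ≤ c) ∧
      (∀ l, ∀ t ∈ Icc 0 T, 2 ^ l * ‖γ t - γ 0 - ∫ r in Ioc 0 t, W l (r, γ r) ∂τ‖ ≤ c) ∧
      ∀ j, ∫ r in Ioc 0 T, lipschitzMinorant Φ j (r, γ r) ∂τ ≤ c := by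
  choose γ w hγ hR hcost using hcheap
  obtain ⟨φ, hφ, γ', hγ', hlim⟩ := exists_subseq_tendsto_of_isControlledCurve hτ hT hγ hR
  have hγc (k : ℕ) := (hγ (φ k)).continuous hτ
  have hpen (k : ℕ) : ∫ r in Ioc 0 T, penalty W Φ k (r, γ k r) (w k r) ∂τ ≤ c := by
    linarith [hcost k, lipschitzMinorant_nonneg (f := Γ) k (γ k A), hg0 (γ k B)]
  refine ⟨γ', hγ', fun j => ?_, fun l t ht => ?_, fun j => ?_⟩
  · refine le_of_tendsto ((((isBoundedLipschitz_lipschitzMinorant j).continuous.tendsto _).comp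
      (hlim A hA)).add ((hg.tendsto _).comp (hlim B hB))) ?_
    filter_upwards [hφ.tendsto_atTop.eventually_ge_atTop j] with k hk
    have hpen0 : 0 ≤ ∫ r in Ioc 0 T, penalty W Φ (φ k) (r, γ (φ k) r) (w (φ k) r) ∂τ :=
      integral_nonneg fun r => (isLagrangian_penalty hW (φ k)).nonneg _ _
    have := monotone_lipschitzMinorant (f := Γ) (γ (φ k) A) hk
    simp only [Function.comp_apply] at this ⊢
    linarith [hcost (φ k)]
  · refine le_of_tendsto ((((hlim t ht).sub (hlim 0 (left_mem_Icc.2 hT))).sub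
      (tendsto_setIntegral_curve (hW l).continuous (hW l).norm_le hγc hlim ht.2)).norm.const_mul
      (2 ^ l)) ?_
    filter_upwards [hφ.tendsto_atTop.eventually_gt_atTop l] with k hk
    exact ((hγ (φ k)).norm_sub_setIntegral_le_setIntegral_penalty hτ hW hk ht).trans (hpen _)
  · have hj := isBoundedLipschitz_lipschitzMinorant (f := Φ) j
    refine le_of_tendsto (tendsto_setIntegral_curve hj.continuous hj.norm_le hγc hlim le_rfl) ?_
    filter_upwards [hφ.tendsto_atTop.eventually_ge_atTop j] with k hk
    exact ((hγ (φ k)).setIntegral_lipschitzMinorant_le_setIntegral_penalty hτ hW hk).trans (hpen _)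

end LimitCurve

section Approximation

open ProbabilityTheory

variable {E : Type*} [NormedAddCommGroup E]

/-- Fields `W l` approximating `b` so well that the weighted errors, together with an infinite
penalty on the set `N`, have a lower semicontinuous majorant `Φ`. -/
structure IsApproximation (b : ℝ → E → E) (N : Set (ℝ × E)) (W : ℕ → ℝ × E → E) (C : ℕ → ℝ)
    (Φ : ℝ × E → ℝ≥0∞) : Prop where
  isBoundedLipschitz : ∀ l, IsBoundedLipschitz (W l) (C l)
  lowerSemicontinuous : LowerSemicontinuous Φ
  sum_le : ∀ k q, ∑ l ∈ Finset.range k, 2 ^ l * ‖b q.1 q.2 - W l q‖ₑ ≤ Φ q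
  eq_top : ∀ q ∈ N, Φ q = ⊤

lemma IsApproximation.ofReal_penalty_le {b : ℝ → E → E} {N : Set (ℝ × E)} {W : ℕ → ℝ × E → E}
    {C : ℕ → ℝ} {Φ : ℝ × E → ℝ≥0∞} (h : IsApproximation b N W C Φ) (k : ℕ)
    (q : ℝ × E) :
    ENNReal.ofReal (penalty W Φ k q (b q.1 q.2)) ≤ 2 * Φ q := by
  unfold penalty
  rw [ENNReal.ofReal_add (by positivity) (lipschitzMinorant_nonneg k q),
    ENNReal.ofReal_sum_of_nonneg fun l _ => by positivity, two_mul]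
  refine add_le_add ((Finset.sum_congr rfl fun l _ => ?_).trans_le (h.sum_le k q))
    (ofReal_lipschitzMinorant_le k q)
  rw [ENNReal.ofReal_mul (by positivity), ENNReal.ofReal_pow zero_le_two, ofReal_norm,
    ENNReal.ofReal_ofNat]

variable [NormedSpace ℝ E] [FiniteDimensional ℝ E] [MeasurableSpace E] [BorelSpace E]
  {b : ℝ → E → E}

lemma exists_isBoundedLipschitz_eLpNorm_sub_le (lam : Measure (ℝ × E)) [IsFiniteMeasure lam]
    {f : ℝ × E → E} (hf : MemLp f 1 lam) {ε : ℝ} (hε : 0 < ε) :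
    ∃ w C, IsBoundedLipschitz w C ∧ eLpNorm (f - w) 1 lam ≤ ENNReal.ofReal ε := by
  obtain ⟨w, hwc, hws, hw⟩ := hf.exist_eLpNorm_sub_le (by simp) le_rfl hε
  obtain ⟨C, hC⟩ := hws.lipschitzWith_of_hasCompactSupport hwc (by simp)
  obtain ⟨M, hM⟩ := hws.continuous.bounded_above_of_compact_support hwc
  refine ⟨w, max M C, ⟨fun q => (hM q).trans (le_max_left _ _), fun q q' => ?_⟩, hw⟩
  rw [← dist_eq_norm]
  exact (hC.dist_le_mul q q').trans (by gcongr; exact le_max_right _ _)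

lemma lintegral_tsum_enorm_sub_le {α : Type*} [MeasurableSpace α] {μ : Measure α} {f : α → E}
    {W : ℕ → α → E} (hf : Measurable f) (hW : ∀ l, Measurable (W l)) {ε : ℝ} (hε : 0 ≤ ε)
    (hfW : ∀ l, eLpNorm (f - W l) 1 μ ≤ ENNReal.ofReal (ε * (1 / 4) ^ l)) :
    ∫⁻ q, ∑' l, 2 ^ l * ‖f q - W l q‖ₑ ∂μ ≤ ENNReal.ofReal (2 * ε) := by
  have hm (l : ℕ) : Measurable fun q => (2 : ℝ≥0∞) ^ l * ‖f q - W l q‖ₑ :=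
    ((hf.sub (hW l)).enorm).const_mul _
  rw [lintegral_tsum fun l => (hm l).aemeasurable]
  have hterm (l : ℕ) : ∫⁻ q, 2 ^ l * ‖f q - W l q‖ₑ ∂μ ≤ ENNReal.ofReal (ε * (1 / 2) ^ l) := by
    have hl := hfW l
    rw [eLpNorm_one_eq_lintegral_enorm] at hl
    rw [lintegral_const_mul' _ _ (by simp)]
    calc (2 : ℝ≥0∞) ^ l * ∫⁻ q, ‖f q - W l q‖ₑ ∂μ
        ≤ ENNReal.ofReal (2 ^ l) * ENNReal.ofReal (ε * (1 / 4) ^ l) := by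
          rw [ENNReal.ofReal_pow zero_le_two, ENNReal.ofReal_ofNat]
          gcongr
          exact hl
      _ = ENNReal.ofReal (ε * (1 / 2) ^ l) := by
          rw [← ENNReal.ofReal_mul (by positivity), mul_left_comm, ← mul_pow]
          norm_num
  refine (ENNReal.tsum_le_tsum hterm).trans_eq ?_
  rw [← ENNReal.ofReal_tsum_of_nonneg (fun l => by positivity) (summable_geometric_two.mul_left ε),
    tsum_mul_left, tsum_geometric_two, mul_comm]

lemma exists_isApproximation (lam : Measure (ℝ × E)) [IsFiniteMeasure lam]
    (hb : Measurable (Function.uncurry b)) (hb1 : ∀ r y, ‖b r y‖ ≤ 1) {N : Set (ℝ × E)}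
    (hN : MeasurableSet N) (hN0 : lam N = 0) {ε : ℝ} (hε : 0 < ε) :
    ∃ W C Φ, IsApproximation b N W C Φ ∧ ∫⁻ q, Φ q ∂lam ≤ ENNReal.ofReal ε := by
  have hmem : MemLp (Function.uncurry b) 1 lam :=
    MemLp.of_bound hb.aestronglyMeasurable 1 (.of_forall fun q => hb1 q.1 q.2)
  choose W C hW hWb using fun l : ℕ =>
    exists_isBoundedLipschitz_eLpNorm_sub_le lam hmem (ε := ε / 4 * (1 / 4) ^ l) (by positivity)
  have hWm (l : ℕ) : Measurable (W l) := (hW l).continuous.measurable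
  let f (q : ℝ × E) : ℝ≥0∞ := ∑' l, 2 ^ l * ‖b q.1 q.2 - W l q‖ₑ + N.indicator (fun _ => ⊤) q
  have hNm : Measurable (N.indicator fun _ => (⊤ : ℝ≥0∞)) := measurable_const.indicator hN
  have hf : Measurable f :=
    (Measurable.tsum fun l => ((hb.sub (hWm l)).enorm).const_mul _).add hNm
  have hfint : ∫⁻ q, f q ∂lam ≤ ENNReal.ofReal (2 * (ε / 4)) := by
    rw [lintegral_add_right _ hNm, lintegral_indicator_const hN, hN0, mul_zero, add_zero]
    exact lintegral_tsum_enorm_sub_le hb hWm (by positivity) hWb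
  obtain ⟨Φ, hfΦ, hΦ, hΦint⟩ := exists_le_lowerSemicontinuous_lintegral_ge lam f hf
    (ENNReal.ofReal_pos.2 (half_pos hε)).ne'
  refine ⟨W, C, Φ, ⟨hW, hΦ, fun k q => ?_, fun q hq => ?_⟩, hΦint.trans ?_⟩
  · exact (ENNReal.sum_le_tsum _).trans (le_self_add.trans (hfΦ q))
  · simpa [f, hq] using hfΦ q
  · refine (add_le_add_left hfint _).trans_eq ?_
    rw [← ENNReal.ofReal_add (by positivity) (by positivity)]
    ring_nf

end Approximation

section Superposition

open ProbabilityTheory Filter Metric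

lemma eq_zero_of_forall_two_pow_mul_norm_le {E : Type*} [NormedAddCommGroup E] {x : E} {c : ℝ}
    (h : ∀ l : ℕ, 2 ^ l * ‖x‖ ≤ c) : x = 0 := by
  by_contra hx
  obtain ⟨l, hl⟩ := pow_unbounded_of_one_lt (c / ‖x‖) one_lt_two
  rw [div_lt_iff₀ (norm_pos_iff.2 hx)] at hl
  exact absurd (h l) hl.not_ge

lemma integral_lipschitzMinorant_le {α : Type*} [PseudoMetricSpace α]
    [MeasurableSpace α] [BorelSpace α] {μ : Measure α} [IsFiniteMeasure μ]
    {Γ : α → ℝ≥0∞} {c : ℝ} (hc : 0 ≤ c) (hΓ : ∫⁻ x, Γ x ∂μ ≤ ENNReal.ofReal c) (k : ℕ) :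
    ∫ x, lipschitzMinorant Γ k x ∂μ ≤ c := by
  rw [← ENNReal.ofReal_le_ofReal_iff hc, ofReal_integral_eq_lintegral_ofReal
    (isBoundedLipschitz_lipschitzMinorant k).integrable (.of_forall (lipschitzMinorant_nonneg k))]
  exact (lintegral_mono (ofReal_lipschitzMinorant_le k)).trans hΓ

lemma exists_lt_mul_measureReal_closedBall {α : Type*} [PseudoMetricSpace α]
    [MeasurableSpace α] (a : α) (μ : Measure α) [IsProbabilityMeasure μ] {c c' : ℝ}
    (h : c < c') : ∃ R, c < c' * μ.real (closedBall a R) := by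
  have htend : Tendsto (fun n : ℕ => μ (closedBall a n)) atTop (𝓝 1) := by
    have := tendsto_measure_iUnion_atTop (μ := μ) (s := fun n : ℕ => closedBall a n)
      fun i j hij => closedBall_subset_closedBall (by exact_mod_cast hij)
    rwa [iUnion_closedBall_nat a, measure_univ] at this
  have hreal : Tendsto (fun n : ℕ => c' * μ.real (closedBall a n)) atTop (𝓝 (c' * 1)) :=
    ((ENNReal.tendsto_toReal ENNReal.one_ne_top).comp htend).const_mul c'
  obtain ⟨n, hn⟩ := (hreal.eventually (lt_mem_nhds (by rwa [mul_one]))).exists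
  exact ⟨n, hn⟩

variable {E : Type*} [NormedAddCommGroup E] [NormedSpace ℝ E]

/-- An integral curve on `[0, T]` of the field `b`, in integral form, with time measured by `τ`. -/
structure IsCaratheodoryCurve (τ : Measure ℝ) (b : ℝ → E → E) (T : ℝ) (γ : ℝ → E) : Prop where
  continuous : Continuous γ
  sub_eq : ∀ t ∈ Icc 0 T, γ t - γ 0 = ∫ r in Ioc 0 t, b r (γ r) ∂τ

variable {τ : Measure ℝ} {b : ℝ → E → E} {T : ℝ} {N : Set (ℝ × E)} {W : ℕ → ℝ × E → E} {C : ℕ → ℝ}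
  {Φ : ℝ × E → ℝ≥0∞}

namespace IsApproximation

lemma two_pow_mul_norm_setIntegral_sub_le (h : IsApproximation b N W C Φ) {γ : ℝ → E} {c : ℝ}
    (hc : 0 ≤ c) (hΦ : ∫⁻ r in Ioc 0 T, Φ (r, γ r) ∂τ ≤ ENNReal.ofReal c) (l : ℕ) {t : ℝ}
    (ht : t ≤ T) : 2 ^ l * ‖∫ r in Ioc 0 t, (b r (γ r) - W l (r, γ r)) ∂τ‖ ≤ c := by
  rw [← ENNReal.ofReal_le_ofReal_iff hc, ENNReal.ofReal_mul (by positivity), ofReal_norm,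
    ENNReal.ofReal_pow zero_le_two, ENNReal.ofReal_ofNat]
  calc (2 : ℝ≥0∞) ^ l * ‖∫ r in Ioc 0 t, (b r (γ r) - W l (r, γ r)) ∂τ‖ₑ
      ≤ 2 ^ l * ∫⁻ r in Ioc 0 t, ‖b r (γ r) - W l (r, γ r)‖ₑ ∂τ := by
        gcongr
        exact enorm_integral_le_lintegral_enorm _
    _ = ∫⁻ r in Ioc 0 t, 2 ^ l * ‖b r (γ r) - W l (r, γ r)‖ₑ ∂τ :=
        (lintegral_const_mul' _ _ (by simp)).symm
    _ ≤ ∫⁻ r in Ioc 0 T, 2 ^ l * ‖b r (γ r) - W l (r, γ r)‖ₑ ∂τ :=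
        lintegral_mono_set (Ioc_subset_Ioc_right ht)
    _ ≤ ∫⁻ r in Ioc 0 T, Φ (r, γ r) ∂τ := lintegral_mono fun r =>
        (Finset.single_le_sum (f := fun l => 2 ^ l * ‖b r (γ r) - W l (r, γ r)‖ₑ)
          (fun _ _ => zero_le) (Finset.mem_range.2 l.lt_succ_self)).trans (h.sum_le (l + 1) _)
    _ ≤ ENNReal.ofReal c := hΦ

end IsApproximation

variable [FiniteDimensional ℝ E] [MeasurableSpace E] [BorelSpace E]

lemma IsApproximation.ae_notMem (h : IsApproximation b N W C Φ) {γ : ℝ → E} (hγ : Continuous γ)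
    {c : ℝ} (hΦ : ∫⁻ r in Ioc 0 T, Φ (r, γ r) ∂τ ≤ ENNReal.ofReal c) :
    ∀ᵐ r ∂τ.restrict (Ioc 0 T), (r, γ r) ∉ N := by
  filter_upwards [ae_lt_top (h.lowerSemicontinuous.measurable.comp
    (measurable_id.prodMk hγ.measurable)) (hΦ.trans_lt ENNReal.ofReal_lt_top).ne] with r hr hrN
  exact hr.ne (h.eq_top _ hrN)

variable [IsFiniteMeasure τ] {κ : Kernel ℝ E}

lemma setLIntegral_le_of_forall_lipschitzMinorant (hΦ : LowerSemicontinuous Φ) {γ : ℝ → E}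
    (hγ : Continuous γ) {c : ℝ} (t : ℝ)
    (hc : ∀ j, ∫ r in Ioc 0 t, lipschitzMinorant Φ j (r, γ r) ∂τ ≤ c) :
    ∫⁻ r in Ioc 0 t, Φ (r, γ r) ∂τ ≤ ENNReal.ofReal c := by
  have hint (j : ℕ) : Integrable (fun r => lipschitzMinorant Φ j (r, γ r)) τ :=
    (isBoundedLipschitz_lipschitzMinorant j).integrable_curve hγ
  have hm (j : ℕ) : Measurable fun r => ENNReal.ofReal (lipschitzMinorant Φ j (r, γ r)) :=
    ((isBoundedLipschitz_lipschitzMinorant j).continuous.measurable.comp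
      (measurable_id.prodMk hγ.measurable)).ennreal_ofReal
  simp only [← iSup_ofReal_lipschitzMinorant hΦ]
  rw [lintegral_iSup hm fun i j hij r =>
    ENNReal.ofReal_le_ofReal (monotone_lipschitzMinorant (r, γ r) hij)]
  refine iSup_le fun j => ?_
  rw [← ofReal_integral_eq_lintegral_ofReal (hint j).integrableOn
    (.of_forall fun r => lipschitzMinorant_nonneg j _)]
  exact ENNReal.ofReal_le_ofReal (hc j)

namespace IsApproximation

lemma setIntegral_penalty_le [IsMarkovKernel κ] (h : IsApproximation b N W C Φ)
    (hb : Measurable (Function.uncurry b)) (hb1 : ∀ r y, ‖b r y‖ ≤ 1) {ε : ℝ} (hε : 0 ≤ ε)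
    (hΦ : ∫⁻ q, Φ q ∂(τ ⊗ₘ κ) ≤ ENNReal.ofReal ε) (k : ℕ) (t : ℝ) :
    ∫ r in Ioc 0 t, ∫ y, penalty W Φ k (r, y) (b r y) ∂κ r ∂τ ≤ 2 * ε := by
  have hL := isLagrangian_penalty (Φ := Φ) h.isBoundedLipschitz k
  have hm : Measurable (Function.uncurry fun r y => penalty W Φ k (r, y) (b r y)) :=
    hL.continuous.measurable.comp (measurable_id.prodMk hb)
  have hle (r : ℝ) (y : E) := (hL.isBoundedLipschitz _ (hb1 r y)).norm_le (r, y)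
  have hint : Integrable (Function.uncurry fun r y => penalty W Φ k (r, y) (b r y)) (τ ⊗ₘ κ) :=
    .of_bound hm.aestronglyMeasurable _ (.of_forall fun q => hle q.1 q.2)
  calc ∫ r in Ioc 0 t, ∫ y, penalty W Φ k (r, y) (b r y) ∂κ r ∂τ
      ≤ ∫ r, ∫ y, penalty W Φ k (r, y) (b r y) ∂κ r ∂τ :=
        setIntegral_le_integral (integrable_integral_kernel hm hle)
          (.of_forall fun r => integral_nonneg fun y => hL.nonneg _ _)
    _ = ∫ q, penalty W Φ k q (b q.1 q.2) ∂(τ ⊗ₘ κ) := (Measure.integral_compProd hint).symm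
    _ = (∫⁻ q, ENNReal.ofReal (penalty W Φ k q (b q.1 q.2)) ∂(τ ⊗ₘ κ)).toReal :=
        integral_eq_lintegral_of_nonneg_ae (.of_forall fun q => hL.nonneg _ _)
          hm.aestronglyMeasurable
    _ ≤ (ENNReal.ofReal (2 * ε)).toReal := by
        refine ENNReal.toReal_mono ENNReal.ofReal_ne_top
          ((lintegral_mono (h.ofReal_penalty_le k)).trans ?_)
        rw [lintegral_const_mul' _ _ ENNReal.ofNat_ne_top, ENNReal.ofReal_mul zero_le_two,
          ENNReal.ofReal_ofNat]
        gcongr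
    _ = 2 * ε := ENNReal.toReal_ofReal (by positivity)

lemma isCaratheodoryCurve (h : IsApproximation b N W C Φ) (hb : Measurable (Function.uncurry b))
    (hb1 : ∀ r y, ‖b r y‖ ≤ 1) {γ : ℝ → E} (hγ : Continuous γ) {c : ℝ}
    (hW : ∀ l, ∀ t ∈ Icc 0 T, 2 ^ l * ‖γ t - γ 0 - ∫ r in Ioc 0 t, W l (r, γ r) ∂τ‖ ≤ c)
    (hΦ : ∫⁻ r in Ioc 0 T, Φ (r, γ r) ∂τ ≤ ENNReal.ofReal c) : IsCaratheodoryCurve τ b T γ where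
  continuous := hγ
  sub_eq t ht := by
    have hc : 0 ≤ c := le_trans (by positivity) (hW 0 t ht)
    have hbint : Integrable (fun r => b r (γ r)) τ :=
      .of_bound (hb.comp (measurable_id.prodMk hγ.measurable)).aestronglyMeasurable 1
        (.of_forall fun r => hb1 r _)
    refine sub_eq_zero.1 (eq_zero_of_forall_two_pow_mul_norm_le (c := 2 * c) fun l => ?_)
    have hsub := integral_sub (hbint.integrableOn (s := Ioc 0 t))
      ((h.isBoundedLipschitz l).integrable_curve hγ).integrableOn
    calc 2 ^ l * ‖γ t - γ 0 - ∫ r in Ioc 0 t, b r (γ r) ∂τ‖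
        = 2 ^ l * ‖(γ t - γ 0 - ∫ r in Ioc 0 t, W l (r, γ r) ∂τ) -
            ∫ r in Ioc 0 t, (b r (γ r) - W l (r, γ r)) ∂τ‖ := by
          rw [hsub, sub_sub_sub_cancel_right]
      _ ≤ 2 ^ l * ‖γ t - γ 0 - ∫ r in Ioc 0 t, W l (r, γ r) ∂τ‖ +
            2 ^ l * ‖∫ r in Ioc 0 t, (b r (γ r) - W l (r, γ r)) ∂τ‖ := by
          rw [← mul_add]
          gcongr
          exact norm_sub_le _ _
      _ ≤ 2 * c := by
          linarith [hW l t ht, h.two_pow_mul_norm_setIntegral_sub_le hc hΦ l ht.2]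

end IsApproximation

namespace IsTransport

variable [IsMarkovKernel κ] {Γ : E → ℝ≥0∞} {g : E → ℝ} {K A B : ℝ}

lemma exists_isControlledCurve_penalty_lt (htr : IsTransport τ κ b T) (hτ : IsContinuousClock τ)
    (hT : 0 < T) (hg : IsBoundedLipschitz g K) (hg0 : ∀ x, 0 ≤ g x) (hA : A ∈ Icc 0 T)
    (hB : B ∈ Icc 0 T) (hW : ∀ l, IsBoundedLipschitz (W l) (C l)) {k : ℕ} {R c : ℝ}
    (hc : ∫ r in Ioc 0 T, ∫ y, penalty W Φ k (r, y) (b r y) ∂κ r ∂τ +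
      ∫ y, lipschitzMinorant Γ k y ∂κ A + ∫ y, g y ∂κ B < c * (κ T).real (closedBall 0 R)) :
    ∃ γ w, IsControlledCurve τ γ w ∧ ‖γ T‖ ≤ R ∧
      ∫ r in Ioc 0 T, penalty W Φ k (r, γ r) (w r) ∂τ + lipschitzMinorant Γ k (γ A) + g (γ B) <
        c := by
  have hL := isLagrangian_penalty (Φ := Φ) hW k
  set M := ∑ l ∈ Finset.range k, 2 ^ l * (1 + C l) + k
  have hLM : IsLagrangian (penalty W Φ k) (max M (max k K)) :=
    ⟨hL.continuous, hL.nonneg, fun v hv => (hL.isBoundedLipschitz v hv).mono (le_max_left _ _)⟩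
  obtain ⟨γ, w, hγ, hγR, hcost⟩ := htr.exists_isControlledCurve_cost_lt hτ hT hLM
    ((isBoundedLipschitz_lipschitzMinorant k).mono ((le_max_left _ K).trans (le_max_right M _)))
    (hg.mono ((le_max_right (k : ℝ) K).trans (le_max_right M _))) (lipschitzMinorant_nonneg k) hg0
    hA hB measurableSet_closedBall hc
  exact ⟨γ, w, hγ, by simpa using hγR, hcost⟩

lemma exists_isCaratheodoryCurve_le (htr : IsTransport τ κ b T) (hτ : IsContinuousClock τ)
    (hT : 0 < T) (hg : IsBoundedLipschitz g K) (hg0 : ∀ x, 0 ≤ g x) (hA : A ∈ Icc 0 T)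
    (hB : B ∈ Icc 0 T) (hN : MeasurableSet N) (hN0 : (τ ⊗ₘ κ) N = 0)
    (hΓ : LowerSemicontinuous Γ) {m c : ℝ} (hm : 0 ≤ m)
    (hΓm : ∫⁻ x, Γ x ∂κ A ≤ ENNReal.ofReal m) (hc : m + ∫ x, g x ∂κ B < c) :
    ∃ γ, IsCaratheodoryCurve τ b T γ ∧ (∀ᵐ r ∂τ.restrict (Ioc 0 T), (r, γ r) ∉ N) ∧
      Γ (γ A) + ENNReal.ofReal (g (γ B)) ≤ ENNReal.ofReal c := by
  obtain ⟨ε, hε0, hε⟩ : ∃ ε > 0, m + ∫ x, g x ∂κ B + 2 * ε < c :=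
    ⟨(c - (m + ∫ x, g x ∂κ B)) / 4, by linarith, by linarith⟩
  obtain ⟨W, C, Φ, happ, hΦ⟩ :=
    exists_isApproximation (τ ⊗ₘ κ) htr.measurable htr.norm_le hN hN0 hε0
  obtain ⟨R, hR⟩ := exists_lt_mul_measureReal_closedBall 0 (κ T) hε
  obtain ⟨γ, hγ, hγAB, hγW, hγΦ⟩ := exists_limit_curve (Φ := Φ) (Γ := Γ) (R := R) (c := c) hτ hT.le
    happ.isBoundedLipschitz hg.continuous hg0 hA hB fun k => by
      have hpen := happ.setIntegral_penalty_le htr.measurable htr.norm_le hε0.le hΦ k T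
      have hΓk := integral_lipschitzMinorant_le hm hΓm k
      obtain ⟨γ, w, hγ, hγR, hcost⟩ := htr.exists_isControlledCurve_penalty_lt (Γ := Γ) (Φ := Φ)
        (k := k) hτ hT hg hg0 hA hB happ.isBoundedLipschitz (lt_of_le_of_lt (by linarith) hR)
      exact ⟨γ, w, hγ, hγR, hcost.le⟩
  have hΦγ := setLIntegral_le_of_forall_lipschitzMinorant happ.lowerSemicontinuous hγ T hγΦ
  refine ⟨γ, happ.isCaratheodoryCurve htr.measurable htr.norm_le hγ hγW hΦγ,
    happ.ae_notMem hγ hΦγ, ?_⟩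
  rw [← iSup_ofReal_lipschitzMinorant hΓ, ENNReal.iSup_add]
  refine iSup_le fun j => ?_
  rw [← ENNReal.ofReal_add (lipschitzMinorant_nonneg j _) (hg0 _)]
  exact ENNReal.ofReal_le_ofReal (hγAB j)

theorem le_lintegral_add_integral (htr : IsTransport τ κ b T) (hτ : IsContinuousClock τ)
    (hT : 0 < T) (hg : IsBoundedLipschitz g K) (hg0 : ∀ x, 0 ≤ g x) (hA : A ∈ Icc 0 T)
    (hB : B ∈ Icc 0 T) (hN : MeasurableSet N) (hN0 : (τ ⊗ₘ κ) N = 0) {f : E → ℝ≥0∞}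
    (hf : Measurable f) {c : ℝ}
    (hcurve : ∀ γ, IsCaratheodoryCurve τ b T γ → (∀ᵐ r ∂τ.restrict (Ioc 0 T), (r, γ r) ∉ N) →
      ENNReal.ofReal c ≤ f (γ A) + ENNReal.ofReal (g (γ B))) :
    ENNReal.ofReal c ≤ ∫⁻ x, f x ∂κ A + ENNReal.ofReal (∫ x, g x ∂κ B) := by
  have hgB : 0 ≤ ∫ x, g x ∂κ B := integral_nonneg hg0
  by_contra! hlt
  have hfin : ∫⁻ x, f x ∂κ A ≠ ⊤ := fun h => by simp [h] at hlt
  rw [← ENNReal.ofReal_toReal hfin, ← ENNReal.ofReal_add ENNReal.toReal_nonneg hgB,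
    ENNReal.ofReal_lt_ofReal_iff_of_nonneg (add_nonneg ENNReal.toReal_nonneg hgB)] at hlt
  set m := (∫⁻ x, f x ∂κ A).toReal
  have hm0 : 0 ≤ m := ENNReal.toReal_nonneg
  obtain ⟨ε, hε0, hε⟩ : ∃ ε > 0, m + ε + ∫ x, g x ∂κ B + ε < c :=
    ⟨(c - (m + ∫ x, g x ∂κ B)) / 3, by linarith, by linarith⟩
  obtain ⟨Γ, hfΓ, hΓ, hΓint⟩ := exists_le_lowerSemicontinuous_lintegral_ge (κ A) f hf
    (ENNReal.ofReal_pos.2 hε0).ne'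
  rw [← ENNReal.ofReal_toReal hfin, ← ENNReal.ofReal_add hm0 hε0.le] at hΓint
  obtain ⟨γ, hγ, hγN, hγAB⟩ := htr.exists_isCaratheodoryCurve_le hτ hT hg hg0 hA hB hN hN0 hΓ
    (add_nonneg hm0 hε0.le) hΓint (lt_add_of_pos_right _ hε0)
  refine (((hcurve γ hγ hγN).trans (add_le_add_left (hfΓ _) _)).trans hγAB).not_gt ?_
  exact (ENNReal.ofReal_lt_ofReal_iff_of_nonneg (by positivity)).2 hε

end IsTransport

end Superposition

section Cutoff

open Filter Metric

variable {E : Type*} [NormedAddCommGroup E] [NormedSpace ℝ E] [FiniteDimensional ℝ E]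
  [MeasurableSpace E] [BorelSpace E] {ψ : ℝ → ℝ} {R : ℝ}

/-- A smooth substitute for the norm, whose sublevel sets serve as balls: a mollification of the
norm, raised so as to dominate the norm itself. -/
def smoothNorm (x : E) : ℝ :=
  mollify (default : ContDiffBump (0 : E)) (fun y => ‖y‖) x + (default : ContDiffBump (0 : E)).rOut

lemma contDiff_smoothNorm : ContDiff ℝ (⊤ : ℕ∞) (smoothNorm : E → ℝ) :=
  (contDiff_mollify continuous_norm).add contDiff_const

lemma norm_le_smoothNorm (x : E) : ‖x‖ ≤ smoothNorm x := by
  rw [smoothNorm, ← mollify_const (φ := default) ‖x‖ x]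
  refine mollify_le_of_forall continuous_const continuous_norm fun z hz => ?_
  linarith [norm_sub_norm_le x z]

lemma smoothNorm_le_add_dist (x y : E) : smoothNorm x ≤ smoothNorm y + dist x y := by
  have h := mollify_le_of_forall (φ := (default : ContDiffBump (0 : E))) (c := dist x y)
    (x := x) (y := y) continuous_norm continuous_norm fun z _ => by
      have := norm_sub_norm_le (x - z) (y - z)
      rw [sub_sub_sub_cancel_right] at this
      rw [dist_eq_norm]
      linarith
  unfold smoothNorm
  linarith

lemma norm_fderiv_smoothNorm_le (x : E) : ‖fderiv ℝ smoothNorm x‖ ≤ 1 := by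
  simpa using norm_fderiv_le_of_lipschitz ℝ (x₀ := x) (LipschitzWith.of_le_add
    (f := (smoothNorm : E → ℝ)) smoothNorm_le_add_dist)

/-- The radial function with profile `ψ`, read inwards from radius `R`: cutoffs, and the bounds on
their derivatives, are of this form. -/
def radial (ψ : ℝ → ℝ) (R : ℝ) (x : E) : ℝ := ψ (R - smoothNorm x)

lemma contDiff_radial (hψ : ContDiff ℝ (⊤ : ℕ∞) ψ) (R : ℝ) :
    ContDiff ℝ (⊤ : ℕ∞) (radial ψ R : E → ℝ) :=
  hψ.comp (contDiff_const.sub contDiff_smoothNorm)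

lemma hasCompactSupport_radial (h0 : ∀ z ≤ 0, ψ z = 0) (R : ℝ) :
    HasCompactSupport (radial ψ R : E → ℝ) :=
  .intro (isCompact_closedBall (0 : E) R) fun x hx => h0 _ <| by
    rw [mem_closedBall_zero_iff, not_le] at hx
    linarith [norm_le_smoothNorm x]

lemma norm_fderiv_radial_le (hψ : Differentiable ℝ ψ) (R : ℝ) (x : E) :
    ‖fderiv ℝ (radial ψ R) x‖ ≤ |deriv ψ (R - smoothNorm x)| := by
  have hinner : HasFDerivAt (fun x : E => R - smoothNorm x) (-fderiv ℝ smoothNorm x) x :=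
    ((contDiff_smoothNorm.differentiable (by simp)) x).hasFDerivAt.const_sub R
  have hderiv : fderiv ℝ (radial ψ R) x = deriv ψ (R - smoothNorm x) • -fderiv ℝ smoothNorm x :=
    ((hψ _).hasDerivAt.comp_hasFDerivAt x hinner).fderiv
  rw [hderiv, norm_smul, norm_neg, Real.norm_eq_abs]
  exact mul_le_of_le_one_right (abs_nonneg _) (norm_fderiv_smoothNorm_le x)

lemma contDiff_deriv_smoothTransition : ContDiff ℝ (⊤ : ℕ∞) (deriv Real.smoothTransition) :=
  (contDiff_infty_iff_deriv.1 Real.smoothTransition.contDiff).2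

lemma deriv_smoothTransition_of_nonpos {z : ℝ} (hz : z ≤ 0) : deriv Real.smoothTransition z = 0 :=
  IsLocalMin.deriv_eq_zero <| .of_forall fun w => by
    rw [Real.smoothTransition.zero_of_nonpos hz]
    exact Real.smoothTransition.nonneg w

lemma deriv_smoothTransition_of_one_le {z : ℝ} (hz : 1 ≤ z) : deriv Real.smoothTransition z = 0 :=
  IsLocalMax.deriv_eq_zero <| .of_forall fun w => by
    rw [Real.smoothTransition.one_of_one_le hz]
    exact Real.smoothTransition.le_one w

lemma exists_abs_deriv_smoothTransition_le : ∃ C, (∀ z, |deriv Real.smoothTransition z| ≤ C) ∧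
    ∀ z, |deriv (deriv Real.smoothTransition) z| ≤ C := by
  have hsupp : HasCompactSupport (deriv Real.smoothTransition) :=
    .intro (isCompact_Icc (a := (0 : ℝ)) (b := 1)) fun z hz => by
      rcases le_or_gt z 0 with h | h
      · exact deriv_smoothTransition_of_nonpos h
      · exact deriv_smoothTransition_of_one_le (not_lt.1 fun h1 => hz ⟨h.le, h1.le⟩)
  obtain ⟨C, hC⟩ :=
    contDiff_deriv_smoothTransition.continuous.bounded_above_of_compact_support hsupp
  obtain ⟨D, hD⟩ := (contDiff_deriv_smoothTransition.continuous_deriv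
    (by simp)).bounded_above_of_compact_support hsupp.deriv
  exact ⟨max C D, fun z => (hC z).trans (le_max_left _ _), fun z => (hD z).trans (le_max_right _ _)⟩

/-- A smooth cutoff function, equal to one where `smoothNorm x ≤ R - 1` and to zero where
`R ≤ smoothNorm x`. -/
def cutoff (R : ℝ) : E → ℝ := radial Real.smoothTransition R

lemma contDiff_cutoff (R : ℝ) : ContDiff ℝ (⊤ : ℕ∞) (cutoff R : E → ℝ) :=
  contDiff_radial Real.smoothTransition.contDiff R

lemma hasCompactSupport_cutoff (R : ℝ) : HasCompactSupport (cutoff R : E → ℝ) :=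
  hasCompactSupport_radial (fun _ => Real.smoothTransition.zero_of_nonpos) R

lemma cutoff_nonneg (R : ℝ) (x : E) : 0 ≤ cutoff R x := Real.smoothTransition.nonneg _

lemma cutoff_le_one (R : ℝ) (x : E) : cutoff R x ≤ 1 := Real.smoothTransition.le_one _

lemma cutoff_eq_one {x : E} (h : smoothNorm x + 1 ≤ R) : cutoff R x = 1 :=
  Real.smoothTransition.one_of_one_le (by linarith)

lemma norm_fderiv_cutoff_le (R : ℝ) (x : E) :
    ‖fderiv ℝ (cutoff R) x‖ ≤ radial (deriv Real.smoothTransition) R x :=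
  (norm_fderiv_radial_le (Real.smoothTransition.contDiff.differentiable one_ne_zero) R x).trans_eq
    (abs_of_nonneg Real.smoothTransition.monotone.deriv_nonneg)

lemma eventually_smoothNorm_add_one_le (x : E) : ∀ᶠ n : ℕ in atTop, smoothNorm x + 1 ≤ n :=
  tendsto_natCast_atTop_atTop.eventually_ge_atTop _

lemma tendsto_cutoff (x : E) : Tendsto (fun n : ℕ => cutoff (n : ℝ) x) atTop (𝓝 1) :=
  tendsto_const_nhds.congr' <| (eventually_smoothNorm_add_one_le x).mono fun _ hn =>
    (cutoff_eq_one hn).symm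

lemma exists_contDiff_tendsto_indicator {U : Set E} (hU : IsOpen U) :
    ∃ u : ℕ → E → ℝ, (∀ n, ContDiff ℝ (⊤ : ℕ∞) (u n)) ∧ (∀ n, HasCompactSupport (u n)) ∧
      (∀ n x, ‖u n x‖ ≤ 1) ∧ ∀ x, Tendsto (fun n => u n x) atTop (𝓝 (U.indicator 1 x)) := by
  obtain ⟨f, rfl, hf, hf0⟩ := hU.exists_contDiff_support_eq (n := ⊤)
  refine ⟨fun n x => Real.smoothTransition (n * f x) * cutoff (n : ℝ) x,
    fun n => (Real.smoothTransition.contDiff.comp (contDiff_const.mul hf)).mul (contDiff_cutoff _),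
    fun n => (hasCompactSupport_cutoff _).mul_left, fun n x => ?_, fun x => ?_⟩
  · have hψ := Real.smoothTransition.nonneg (n * f x)
    rw [Real.norm_of_nonneg (mul_nonneg hψ (cutoff_nonneg _ x))]
    exact mul_le_one₀ (Real.smoothTransition.le_one _) (cutoff_nonneg _ x) (cutoff_le_one _ x)
  · by_cases hx : f x = 0
    · simp [hx, Real.smoothTransition.zero]
    · have hpos : 0 < f x := (hf0 ⟨x, rfl⟩).1.lt_of_ne' hx
      have hψ : Tendsto (fun n : ℕ => Real.smoothTransition (n * f x)) atTop (𝓝 1) :=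
        tendsto_const_nhds.congr' <| ((tendsto_natCast_atTop_atTop.atTop_mul_const
          hpos).eventually_ge_atTop 1).mono fun n hn =>
            (Real.smoothTransition.one_of_one_le hn).symm
      simpa [hx] using hψ.mul (tendsto_cutoff x)

lemma measurable_of_measurable_integral {α : Type*} [MeasurableSpace α] {μ : α → Measure E}
    [∀ a, IsFiniteMeasure (μ a)]
    (h : ∀ u : E → ℝ, ContDiff ℝ (⊤ : ℕ∞) u → HasCompactSupport u →
      Measurable fun a => ∫ x, u x ∂μ a) : Measurable μ := by
  have hopen (U : Set E) (hU : IsOpen U) : Measurable fun a => μ a U := by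
    obtain ⟨u, hu, hsupp, hu1, hlim⟩ := exists_contDiff_tendsto_indicator hU
    have hreal : Measurable fun a => (μ a).real U := by
      refine measurable_of_tendsto_metrizable (f := fun n a => ∫ x, u n x ∂μ a)
        (fun n => h _ (hu n) (hsupp n)) (tendsto_pi_nhds.2 fun a => ?_)
      rw [← integral_indicator_one hU.measurableSet]
      exact tendsto_integral_of_dominated_convergence (fun _ => 1)
        (fun n => (hu n).continuous.aestronglyMeasurable) (integrable_const _)
        (fun n => .of_forall (hu1 n)) (.of_forall hlim)
    simpa using hreal.ennreal_ofReal
  exact .measure_of_isPiSystem BorelSpace.measurable_eq isPiSystem_isOpen hopen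
    (hopen univ isOpen_univ)

end Cutoff

section Mass

open Filter ProbabilityTheory

section Telescoping

variable {τ : Measure ℝ} [IsFiniteMeasure τ] {F : ℝ → ℝ} {Q T t : ℝ}

lemma le_add_of_forall_le_add_gridStep_sq {h ε : ℝ} (hh : 0 ≤ h) (hQ : 0 ≤ Q) (hε0 : 0 ≤ ε)
    (hε : ∀ i, gridStep τ h i ≤ ε) (n : ℕ)
    (hF : ∀ i < n, F ((i + 1 : ℕ) * h) ≤ F (i * h) + Q * gridStep τ h i ^ 2) :
    F (n * h) ≤ F 0 + Q * ε * τ.real univ := by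
  have hsum := Finset.sum_range_sub (fun i : ℕ => F (i * h)) n
  have hstep : ∑ i ∈ Finset.range n, (F ((i + 1 : ℕ) * h) - F (i * h)) ≤
      ∑ i ∈ Finset.range n, Q * ε * gridStep τ h i :=
    Finset.sum_le_sum fun i hi => by
      have hsq : Q * gridStep τ h i ^ 2 ≤ Q * ε * gridStep τ h i := by
        rw [sq, ← mul_assoc]
        gcongr
        exacts [gridStep_nonneg i, hε i]
      linarith [hF i (Finset.mem_range.1 hi)]
  have htotal := mul_le_mul_of_nonneg_left (sum_gridStep_le (τ := τ) hh n) (mul_nonneg hQ hε0)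
  rw [← Finset.mul_sum] at hstep
  simp only [Nat.cast_zero, zero_mul] at hsum
  linarith

lemma IsContinuousClock.le_of_forall_le_add_sq (hτ : IsContinuousClock τ) (hQ : 0 ≤ Q)
    (hF : ∀ s t, 0 ≤ s → s ≤ t → t ≤ T → F t ≤ F s + Q * τ.real (Ioc s t) ^ 2)
    (ht : t ∈ Icc 0 T) : F t ≤ F 0 := by
  have happrox : ∀ ε > 0, F t ≤ F 0 + Q * ε * τ.real univ := fun ε hε => by
    obtain ⟨n, hn0, hn⟩ := ((eventually_gt_atTop 0).and (hτ.eventually_gridStep_le t hε)).exists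
    have hnt : n * (t / n) = t := mul_div_cancel₀ _ (Nat.cast_ne_zero.2 hn0.ne')
    have hh : 0 ≤ t / n := div_nonneg ht.1 n.cast_nonneg
    have key := le_add_of_forall_le_add_gridStep_sq (F := F) hh hQ hε.le hn n fun i hi =>
      hF _ _ (by positivity) (by gcongr; simp) <|
        (mul_le_mul_of_nonneg_right (Nat.cast_le.2 hi) hh).trans (hnt.trans_le ht.2)
    rwa [hnt] at key
  have hlim : Tendsto (fun ε : ℝ => F 0 + Q * ε * τ.real univ) (𝓝[>] 0)
      (𝓝 (F 0 + Q * 0 * τ.real univ)) :=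
    (Continuous.tendsto (by fun_prop) 0).mono_left nhdsWithin_le_nhds
  simpa using ge_of_tendsto hlim (eventually_nhdsWithin_of_forall happrox)

end Telescoping

lemma smoothTransition_sub_le {C : ℝ} (hC : ∀ z, |deriv (deriv Real.smoothTransition) z| ≤ C)
    (z δ : ℝ) : Real.smoothTransition (z - δ) ≤
      Real.smoothTransition z - δ * deriv Real.smoothTransition (z - δ) + C * δ ^ 2 := by
  have hd : Differentiable ℝ fun z => -Real.smoothTransition z :=
    (Real.smoothTransition.contDiff.differentiable one_ne_zero).neg
  have hlip (x y : ℝ) : ‖deriv Real.smoothTransition x - deriv Real.smoothTransition y‖ ≤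
      C * ‖x - y‖ :=
    convex_univ.norm_image_sub_le_of_norm_deriv_le
      (fun z _ => contDiff_deriv_smoothTransition.differentiable (by simp) z) (fun z _ => hC z)
      (mem_univ y) (mem_univ x)
  have hC0 : 0 ≤ C := (abs_nonneg _).trans (hC 0)
  have htaylor := taylor_le_of_norm_fderiv_sub_le hd hC0 (fun x y => by
    refine ContinuousLinearMap.opNorm_le_bound _ (by positivity) fun v => ?_
    rw [sub_apply, fderiv_eq_smul_deriv, fderiv_eq_smul_deriv, ← smul_sub, norm_smul, mul_comm,
      deriv.fun_neg, deriv.fun_neg, neg_sub_neg, norm_sub_rev]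
    exact mul_le_mul_of_nonneg_right (hlip x y) (norm_nonneg v)) (z - δ) (-δ)
  simp only [sub_neg_eq_add, sub_add_cancel, fderiv_fun_neg, map_neg, neg_apply,
    fderiv_eq_smul_deriv, smul_eq_mul, norm_neg, Real.norm_eq_abs, sq_abs] at htaylor
  linarith

variable {E : Type*} [NormedAddCommGroup E] [NormedSpace ℝ E] [FiniteDimensional ℝ E]
  [MeasurableSpace E] [BorelSpace E]

lemma measurableSet_smoothNorm_le (R : ℝ) : MeasurableSet {x : E | smoothNorm x ≤ R} :=
  (isClosed_le contDiff_smoothNorm.continuous continuous_const).measurableSet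

lemma tendsto_integral_mul_cutoff {μ : Measure E} {u : E → ℝ} (hu : Integrable u μ) :
    Tendsto (fun n : ℕ => ∫ x, u x * cutoff (n : ℝ) x ∂μ) atTop (𝓝 (∫ x, u x ∂μ)) :=
  tendsto_integral_of_dominated_convergence (fun x => ‖u x‖)
    (fun n => hu.aestronglyMeasurable.mul (contDiff_cutoff _).continuous.aestronglyMeasurable)
    hu.norm (fun n => .of_forall fun x => by
      rw [norm_mul, Real.norm_of_nonneg (cutoff_nonneg _ x)]
      exact mul_le_of_le_one_right (norm_nonneg _) (cutoff_le_one _ x))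
    (.of_forall fun x => by simpa using (tendsto_cutoff x).const_mul (u x))

section FiniteMeasure

variable (R : ℝ) (μ : Measure E) [IsFiniteMeasure μ]

lemma integrable_cutoff : Integrable (cutoff R) μ :=
  (contDiff_cutoff R).continuous.integrable_of_hasCompactSupport (hasCompactSupport_cutoff R)

lemma integrable_radial_deriv_smoothTransition :
    Integrable (radial (deriv Real.smoothTransition) R) μ :=
  (contDiff_radial contDiff_deriv_smoothTransition R).continuous.integrable_of_hasCompactSupport
    (hasCompactSupport_radial (fun _ => deriv_smoothTransition_of_nonpos) R)

lemma measureReal_smoothNorm_le_le :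
    μ.real {x | smoothNorm x ≤ R} ≤ ∫ x, cutoff (R + 1) x ∂μ := by
  rw [← integral_indicator_one (measurableSet_smoothNorm_le R)]
  refine integral_mono ((integrable_const (1 : ℝ)).indicator (measurableSet_smoothNorm_le R))
    (integrable_cutoff _ μ) fun x => ?_
  refine indicator_le' (g := cutoff (R + 1)) (fun x hx => ?_) (fun x _ => cutoff_nonneg _ x) x
  exact (cutoff_eq_one (add_le_add_left hx 1)).ge

lemma integral_cutoff_sub_le {C : ℝ} (hC : ∀ z, |deriv (deriv Real.smoothTransition) z| ≤ C)
    {δ : ℝ} (hδ : 0 ≤ δ) :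
    ∫ y, cutoff (R - δ) y ∂μ ≤ ∫ y, cutoff R y ∂μ
      - δ * ∫ y, radial (deriv Real.smoothTransition) (R - δ) y ∂μ
      + C * δ ^ 2 * μ.real {x | smoothNorm x ≤ R} := by
  have hderiv := (integrable_radial_deriv_smoothTransition (R - δ) μ).const_mul δ
  have hball : Integrable ({x : E | smoothNorm x ≤ R}.indicator fun _ => C * δ ^ 2) μ :=
    (integrable_const _).indicator (measurableSet_smoothNorm_le R)
  have hle (x : E) : cutoff (R - δ) x ≤ cutoff R x
      - δ * radial (deriv Real.smoothTransition) (R - δ) x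
      + {x : E | smoothNorm x ≤ R}.indicator (fun _ => C * δ ^ 2) x := by
    simp only [cutoff, radial, sub_right_comm R δ]
    by_cases hx : smoothNorm x ≤ R
    · rw [indicator_of_mem (show x ∈ {x : E | smoothNorm x ≤ R} from hx)]
      exact smoothTransition_sub_le hC _ δ
    · rw [indicator_of_notMem (show x ∉ {x : E | smoothNorm x ≤ R} from hx)]
      rw [not_le] at hx
      rw [Real.smoothTransition.zero_of_nonpos (by linarith),
        Real.smoothTransition.zero_of_nonpos (by linarith),
        deriv_smoothTransition_of_nonpos (by linarith)]
      simp
  calc ∫ y, cutoff (R - δ) y ∂μ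
      ≤ ∫ y, (cutoff R y - δ * radial (deriv Real.smoothTransition) (R - δ) y
        + {x : E | smoothNorm x ≤ R}.indicator (fun _ => C * δ ^ 2) y) ∂μ :=
        integral_mono (integrable_cutoff _ μ) (((integrable_cutoff R μ).sub hderiv).add hball) hle
    _ = _ := by
        rw [integral_add (f := fun y => cutoff R y - _) ((integrable_cutoff R μ).sub hderiv) hball,
          integral_sub (integrable_cutoff R μ) hderiv, integral_const_mul,
          integral_indicator_const _ (measurableSet_smoothNorm_le R), smul_eq_mul,
          mul_comm (μ.real _)]

end FiniteMeasure

end Mass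

section LocalTransport

open Filter ProbabilityTheory

variable {E : Type*} [NormedAddCommGroup E] [NormedSpace ℝ E] [MeasurableSpace E]
  {τ : Measure ℝ} {κ : Kernel ℝ E} {b : ℝ → E → E} {T : ℝ}

/-- A curve of finite measures solving the continuity equation for the velocity field `b`, bounded
by one, when time is measured by `τ`, and taking no new values outside `[0, T]`. The test functions
are compactly supported, so that conservation of mass is not part of the notion. -/
structure IsLocalTransport (τ : Measure ℝ) (κ : Kernel ℝ E) (b : ℝ → E → E) (T : ℝ) : Prop where
  measurable : Measurable (Function.uncurry b)
  norm_le : ∀ r y, ‖b r y‖ ≤ 1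
  bounded : ∀ u : E → ℝ, ContDiff ℝ (⊤ : ℕ∞) u → HasCompactSupport u →
    ∃ C, ∀ t, |∫ y, u y ∂κ t| ≤ C
  clamped : ∀ t, ∃ s ∈ Icc 0 T, κ t = κ s
  integral_sub : ∀ u : E → ℝ, ContDiff ℝ (⊤ : ℕ∞) u → HasCompactSupport u →
    ∀ s t, 0 ≤ s → s ≤ t → t ≤ T →
      ∫ y, u y ∂κ t - ∫ y, u y ∂κ s = ∫ r in Ioc s t, ∫ y, fderiv ℝ u y (b r y) ∂κ r ∂τ

namespace IsLocalTransport

variable [∀ t, IsFiniteMeasure (κ t)]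

lemma exists_measureReal_smoothNorm_le_le [FiniteDimensional ℝ E] [BorelSpace E]
    (h : IsLocalTransport τ κ b T) (R : ℝ) :
    ∃ M, ∀ t, (κ t).real {x | smoothNorm x ≤ R} ≤ M := by
  obtain ⟨M, hM⟩ := h.bounded (cutoff (R + 1)) (contDiff_cutoff _) (hasCompactSupport_cutoff _)
  exact ⟨M, fun t => (measureReal_smoothNorm_le_le R (κ t)).trans ((le_abs_self _).trans (hM t))⟩

variable [IsFiniteMeasure τ]

lemma abs_integral_sub_le (h : IsLocalTransport τ κ b T) {u : E → ℝ}
    (hu : ContDiff ℝ (⊤ : ℕ∞) u) (hsupp : HasCompactSupport u) {B : Set E} {C M : ℝ}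
    (hM : ∀ t, (κ t).real B ≤ M) (hC : ∀ x, ‖fderiv ℝ u x‖ ≤ C) (hB : ∀ x ∉ B, fderiv ℝ u x = 0)
    {s t : ℝ} (hs : 0 ≤ s) (hst : s ≤ t) (ht : t ≤ T) :
    |∫ y, u y ∂κ t - ∫ y, u y ∂κ s| ≤ C * M * τ.real (Ioc s t) := by
  have hC0 : 0 ≤ C := (norm_nonneg _).trans (hC 0)
  rw [h.integral_sub u hu hsupp s t hs hst ht, ← Real.norm_eq_abs]
  refine norm_setIntegral_le_of_norm_le_const (measure_lt_top τ _) fun r _ => ?_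
  rw [← setIntegral_eq_integral_of_forall_compl_eq_zero (s := B) fun x hx => by simp [hB x hx]]
  refine (norm_setIntegral_le_of_norm_le_const (C := C) (measure_lt_top _ _) fun y _ => ?_).trans
    (mul_le_mul_of_nonneg_left (hM r) hC0)
  exact ((fderiv ℝ u y).le_of_opNorm_le_of_le (hC y) (h.norm_le r y)).trans_eq (mul_one C)

variable [FiniteDimensional ℝ E] [BorelSpace E] {C M R R' s t : ℝ}

lemma integral_radial_deriv_smoothTransition_le (h : IsLocalTransport τ κ b T)
    (hC : ∀ z, |deriv (deriv Real.smoothTransition) z| ≤ C)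
    (hM : ∀ t, (κ t).real {x | smoothNorm x ≤ R} ≤ M) (hR' : R' ≤ R)
    (hs : 0 ≤ s) (hst : s ≤ t) (ht : t ≤ T) :
    ∫ y, radial (deriv Real.smoothTransition) R' y ∂κ t ≤
      ∫ y, radial (deriv Real.smoothTransition) R' y ∂κ s + C * M * τ.real (Ioc s t) := by
  have hdiff := contDiff_deriv_smoothTransition.differentiable (by simp)
  have hzero : ∀ z < 0, deriv (deriv Real.smoothTransition) z = 0 := fun z hz => by
    have : deriv Real.smoothTransition =ᶠ[𝓝 z] fun _ => 0 :=
      eventually_of_mem (Iic_mem_nhds hz) fun _ => deriv_smoothTransition_of_nonpos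
    rw [this.deriv_eq, deriv_const]
  have key := h.abs_integral_sub_le (contDiff_radial contDiff_deriv_smoothTransition R')
    (hasCompactSupport_radial (fun _ => deriv_smoothTransition_of_nonpos) R') hM
    (fun x => (norm_fderiv_radial_le hdiff R' x).trans (hC _))
    (fun x hx => norm_le_zero_iff.1 <| (norm_fderiv_radial_le hdiff R' x).trans_eq <| by
      have hlt : R < smoothNorm x := not_le.1 hx
      rw [hzero _ (by linarith), abs_zero]) hs hst ht
  linarith [le_of_abs_le key]

/-- The ball shrinks at unit speed, at least as fast as mass can enter it. -/
lemma integral_cutoff_le (h : IsLocalTransport τ κ b T)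
    (hC : ∀ z, |deriv (deriv Real.smoothTransition) z| ≤ C)
    (hM : ∀ t, (κ t).real {x | smoothNorm x ≤ R} ≤ M) (hR' : R' ≤ R)
    (hs : 0 ≤ s) (hst : s ≤ t) (ht : t ≤ T) :
    ∫ y, cutoff (R' - τ.real (Ioc s t)) y ∂κ t ≤
      ∫ y, cutoff R' y ∂κ s + 2 * (C * M) * τ.real (Ioc s t) ^ 2 := by
  set δ := τ.real (Ioc s t)
  set w : E → ℝ := radial (deriv Real.smoothTransition) (R' - δ)
  have hδ : 0 ≤ δ := measureReal_nonneg
  have hC0 : 0 ≤ C := (abs_nonneg _).trans (hC 0)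
  have hM0 : 0 ≤ M := measureReal_nonneg.trans (hM 0)
  have hspace : ∫ y, cutoff (R' - δ) y ∂κ s ≤
      ∫ y, cutoff R' y ∂κ s - δ * ∫ y, w y ∂κ s + C * δ ^ 2 * M := by
    refine (integral_cutoff_sub_le R' (κ s) hC hδ).trans ?_
    gcongr
    exact (measureReal_mono fun x hx => hx.trans hR').trans (hM s)
  have htime : ∫ y, cutoff (R' - δ) y ∂κ t - ∫ y, cutoff (R' - δ) y ∂κ s ≤
      (∫ y, w y ∂κ s + C * M * δ) * δ := by
    rw [h.integral_sub _ (contDiff_cutoff _) (hasCompactSupport_cutoff _) s t hs hst ht]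
    refine (Real.le_norm_self _).trans <|
      norm_setIntegral_le_of_norm_le_const (measure_lt_top τ _) fun r hr => ?_
    calc ‖∫ y, fderiv ℝ (cutoff (R' - δ)) y (b r y) ∂κ r‖ ≤ ∫ y, w y ∂κ r :=
          norm_integral_le_of_norm_le (integrable_radial_deriv_smoothTransition _ _) <|
            .of_forall fun y => ((fderiv ℝ (cutoff _) y).le_of_opNorm_le_of_le
              (norm_fderiv_cutoff_le _ y) (h.norm_le r y)).trans_eq (mul_one _)
      _ ≤ ∫ y, w y ∂κ s + C * M * τ.real (Ioc s r) :=
          h.integral_radial_deriv_smoothTransition_le hC hM (by linarith) hs hr.1.le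
            (hr.2.trans ht)
      _ ≤ ∫ y, w y ∂κ s + C * M * δ := by
          gcongr
          exact measureReal_mono (Ioc_subset_Ioc_right hr.2)
  linarith

lemma measureReal_univ_le (h : IsLocalTransport τ κ b T) (hτ : IsContinuousClock τ) (t : ℝ) :
    (κ t).real univ ≤ (κ 0).real univ := by
  obtain ⟨t, ht, heq⟩ := h.clamped t
  rw [heq]
  obtain ⟨C, -, hC⟩ := exists_abs_deriv_smoothTransition_le
  have hC0 : 0 ≤ C := (abs_nonneg _).trans (hC 0)
  have hball (R : ℝ) : ∫ y, cutoff (R - τ.real univ) y ∂κ t ≤ (κ 0).real univ := by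
    obtain ⟨M, hM⟩ := h.exists_measureReal_smoothNorm_le_le R
    have hM0 : 0 ≤ M := measureReal_nonneg.trans (hM 0)
    have hshrink := hτ.le_of_forall_le_add_sq (Q := 2 * (C * M)) (by positivity)
      (F := fun r => ∫ y, cutoff (R - τ.real (Ioc 0 r)) y ∂κ r) (fun s t hs hst ht => by
        have := h.integral_cutoff_le hC hM
          (sub_le_self R (measureReal_nonneg (μ := τ) (s := Ioc 0 s))) hs hst ht
        rwa [sub_sub, ← measureReal_union (Ioc_disjoint_Ioc_of_le le_rfl) measurableSet_Ioc,
          Ioc_union_Ioc_eq_Ioc hs hst] at this) ht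
    calc ∫ y, cutoff (R - τ.real univ) y ∂κ t ≤ ∫ y, cutoff (R - τ.real (Ioc 0 t)) y ∂κ t :=
          integral_mono (integrable_cutoff _ _) (integrable_cutoff _ _) fun y =>
            Real.smoothTransition.monotone <| by
              have := measureReal_mono (μ := τ) (subset_univ (Ioc 0 t))
              linarith
      _ ≤ ∫ y, cutoff (R - τ.real (Ioc 0 0)) y ∂κ 0 := hshrink
      _ ≤ ∫ _, (1 : ℝ) ∂κ 0 :=
          integral_mono (integrable_cutoff _ _) (integrable_const _) (cutoff_le_one _)
      _ = (κ 0).real univ := by simp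
  have hlim := tendsto_integral_mul_cutoff (integrable_const (1 : ℝ)) (μ := κ t)
  simp only [one_mul, integral_const, smul_eq_mul, mul_one] at hlim
  exact le_of_tendsto' hlim fun n => by simpa using hball (n + τ.real univ)

lemma isFiniteKernel (h : IsLocalTransport τ κ b T) (hτ : IsContinuousClock τ) :
    IsFiniteKernel κ :=
  ⟨κ 0 univ, measure_lt_top _ _, fun t =>
    (ENNReal.toReal_le_toReal (measure_ne_top _ _) (measure_ne_top _ _)).1
      (h.measureReal_univ_le hτ t)⟩

end IsLocalTransport

end LocalTransport

section MassConservation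

open Filter ProbabilityTheory

lemma tendsto_integral_integral_kernel {α β : Type*} [MeasurableSpace α] [MeasurableSpace β]
    {τ : Measure α} [IsFiniteMeasure τ] {κ : Kernel α β} [IsFiniteKernel κ] {f : ℕ → α → β → ℝ}
    {g : α → β → ℝ} {D : ℝ} (hf : ∀ n, Measurable (Function.uncurry (f n)))
    (hD : ∀ n a x, ‖f n a x‖ ≤ D) (hlim : ∀ a x, Tendsto (fun n => f n a x) atTop (𝓝 (g a x))) :
    Tendsto (fun n => ∫ a, ∫ x, f n a x ∂κ a ∂τ) atTop (𝓝 (∫ a, ∫ x, g a x ∂κ a ∂τ)) := by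
  refine tendsto_integral_of_dominated_convergence (fun a => D * (κ a).real univ)
    (fun n => ((hf n).stronglyMeasurable.integral_kernel_prod_right (κ := κ)).aestronglyMeasurable)
    ?_ (fun n => .of_forall fun a => norm_integral_le_of_norm_le_const (.of_forall (hD n a)))
    (.of_forall fun a => ?_)
  · refine .const_mul (.of_bound (κ.measurable_coe .univ).ennreal_toReal.aestronglyMeasurable
      κ.bound.toReal (.of_forall fun a => ?_)) D
    rw [Real.norm_of_nonneg ENNReal.toReal_nonneg]
    exact ENNReal.toReal_mono κ.bound_ne_top (κ.measure_le_bound a univ)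
  · exact tendsto_integral_of_dominated_convergence (fun _ => D)
      (fun n => ((hf n).comp measurable_prodMk_left).aestronglyMeasurable) (integrable_const D)
      (fun n => .of_forall (hD n a)) (.of_forall (hlim a))

variable {E : Type*} [NormedAddCommGroup E] [NormedSpace ℝ E] [FiniteDimensional ℝ E]
  [MeasurableSpace E] [BorelSpace E] {u : E → ℝ} {K : ℝ}

lemma norm_fderiv_mul_cutoff_le (hu : Differentiable ℝ u) (huK : IsBoundedLipschitz u K) {C : ℝ}
    (hC : ∀ z, |deriv Real.smoothTransition z| ≤ C) (R : ℝ) (x : E) :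
    ‖fderiv ℝ (fun y => u y * cutoff R y) x‖ ≤ K * C + K := by
  have hcut : ‖fderiv ℝ (cutoff R) x‖ ≤ C :=
    (norm_fderiv_cutoff_le R x).trans ((le_abs_self _).trans (hC _))
  rw [fderiv_fun_mul (hu x) ((contDiff_cutoff R).differentiable (by simp) x)]
  refine (norm_add_le _ _).trans (add_le_add ?_ ?_)
  · rw [norm_smul]
    exact mul_le_mul (huK.norm_le x) hcut (norm_nonneg _) huK.bound_nonneg
  · rw [norm_smul, Real.norm_of_nonneg (cutoff_nonneg R x)]
    exact (mul_le_of_le_one_left (norm_nonneg _) (cutoff_le_one R x)).trans (huK.norm_fderiv_le x)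

lemma tendsto_fderiv_mul_cutoff (u : E → ℝ) (x : E) :
    Tendsto (fun n : ℕ => fderiv ℝ (fun y => u y * cutoff (n : ℝ) y) x) atTop
      (𝓝 (fderiv ℝ u x)) := by
  refine tendsto_const_nhds.congr' ?_
  filter_upwards [eventually_gt_atTop ⌈smoothNorm x + 1⌉₊] with n hn
  have hn' : smoothNorm x + 1 < n := Nat.lt_of_ceil_lt hn
  refine EventuallyEq.fderiv_eq ?_
  filter_upwards [(isOpen_lt (contDiff_smoothNorm.continuous.add continuous_const)
    continuous_const).mem_nhds hn'] with y hy
  rw [cutoff_eq_one (le_of_lt hy), mul_one]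

namespace IsLocalTransport

variable {τ : Measure ℝ} {κ : Kernel ℝ E} {b : ℝ → E → E} {T : ℝ} [IsFiniteMeasure τ]

lemma integral_sub_of_isBoundedLipschitz [IsFiniteKernel κ] (h : IsLocalTransport τ κ b T)
    (hu : ContDiff ℝ (⊤ : ℕ∞) u) (huK : IsBoundedLipschitz u K) {s t : ℝ} (hs : 0 ≤ s)
    (hst : s ≤ t) (ht : t ≤ T) :
    ∫ y, u y ∂κ t - ∫ y, u y ∂κ s = ∫ r in Ioc s t, ∫ y, fderiv ℝ u y (b r y) ∂κ r ∂τ := by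
  obtain ⟨C, hC, -⟩ := exists_abs_deriv_smoothTransition_le
  have hu_cut (n : ℕ) : ContDiff ℝ (⊤ : ℕ∞) fun y => u y * cutoff (n : ℝ) y :=
    hu.mul (contDiff_cutoff _)
  have hleft := (tendsto_integral_mul_cutoff (huK.integrable (μ := κ t))).sub
    (tendsto_integral_mul_cutoff (huK.integrable (μ := κ s)))
  have hright := tendsto_integral_integral_kernel (τ := τ.restrict (Ioc s t)) (κ := κ)
    (f := fun n r y => fderiv ℝ (fun y => u y * cutoff (n : ℝ) y) y (b r y))
    (fun n => measurable_fderiv_apply (hu_cut n) measurable_snd h.measurable)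
    (fun n r y => (ContinuousLinearMap.le_of_opNorm_le_of_le _
      (norm_fderiv_mul_cutoff_le (hu.differentiable (by simp)) huK hC n y) (h.norm_le r y)))
    (fun r y => ((ContinuousLinearMap.apply ℝ ℝ (b r y)).continuous.tendsto _).comp
      (tendsto_fderiv_mul_cutoff u y))
  refine tendsto_nhds_unique (hleft.congr fun n => ?_) hright
  exact h.integral_sub _ (hu_cut n) (hasCompactSupport_cutoff _).mul_left s t hs hst ht

lemma measureReal_univ_eq [IsFiniteKernel κ] (h : IsLocalTransport τ κ b T) {t : ℝ}
    (ht : t ∈ Icc 0 T) : (κ t).real univ = (κ 0).real univ := by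
  have hone : IsBoundedLipschitz (fun _ : E => (1 : ℝ)) 1 := ⟨by simp, by simp⟩
  simpa [sub_eq_zero] using
    h.integral_sub_of_isBoundedLipschitz contDiff_const hone le_rfl ht.1 ht.2

lemma isMarkovKernel [IsFiniteKernel κ] (h : IsLocalTransport τ κ b T) {S : ℝ} (hS : S ∈ Icc 0 T)
    (hprob : IsProbabilityMeasure (κ S)) : IsMarkovKernel κ where
  isProbabilityMeasure t := by
    obtain ⟨t, ht, heq⟩ := h.clamped t
    rw [heq, isProbabilityMeasure_iff_real, h.measureReal_univ_eq ht, ← h.measureReal_univ_eq hS,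
      probReal_univ]

lemma isTransport [IsFiniteKernel κ] (h : IsLocalTransport τ κ b T) : IsTransport τ κ b T where
  measurable := h.measurable
  norm_le := h.norm_le
  integral_sub _ _ hu huK _ _ := h.integral_sub_of_isBoundedLipschitz hu huK

end IsLocalTransport

end MassConservation

section WeakSolution

open Filter ProbabilityTheory

variable {E : Type*} [NormedAddCommGroup E] [NormedSpace ℝ E] [MeasurableSpace E]
  {V : ℝ → E → E} {T : ℝ} {ν : ℝ → Measure E}

/-- A weak solution on `[0, T]` of the continuity equation with velocity field `V`, in the integral
form of `IsMeasureSolution`, on a general normed space. -/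
def IsWeakSolution (V : ℝ → E → E) (T : ℝ) (ν : ℝ → Measure E) : Prop :=
  ∀ u : E → ℝ, ContDiff ℝ (⊤ : ℕ∞) u → HasCompactSupport u →
    ∀ s ∈ Icc 0 T, ∀ t ∈ Icc 0 T,
      ∫ x, u x ∂ν t - ∫ x, u x ∂ν s = ∫ r in s..t, ∫ x, fderiv ℝ u x (V r x) ∂ν r

lemma continuousOn_of_sub_eq_integral {G f : ℝ → ℝ}
    (h : ∀ s ∈ Icc 0 T, ∀ t ∈ Icc 0 T, G t - G s = ∫ r in s..t, f r) :
    ContinuousOn G (Icc 0 T) := by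
  intro t₀ ht₀
  have hT : 0 ≤ T := ht₀.1.trans ht₀.2
  have h0 : (0 : ℝ) ∈ Icc 0 T := left_mem_Icc.2 hT
  have hT' : T ∈ Icc 0 T := right_mem_Icc.2 hT
  suffices ContinuousOn G (Icc 0 T) from this t₀ ht₀
  by_cases hf : IntervalIntegrable f volume 0 T
  · have hcont := intervalIntegral.continuousOn_primitive_interval' hf left_mem_uIcc
    rw [uIcc_of_le hT] at hcont
    exact (hcont.const_add (G 0)).congr fun t ht => (eq_add_of_sub_eq' (h 0 h0 t ht))
  -- The integral of `f` over a non-integrable interval is zero by convention; then `G` is constant.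
  have hG : G T = G 0 := sub_eq_zero.1 ((h 0 h0 T hT').trans (intervalIntegral.integral_undef hf))
  refine (continuousOn_const (c := G 0)).congr fun t ht => ?_
  by_cases h1 : IntervalIntegrable f volume 0 t
  · have h2 : ¬ IntervalIntegrable f volume t T := fun h2 => hf (h1.trans h2)
    rw [← hG]
    exact (sub_eq_zero.1 ((h t ht T hT').trans (intervalIntegral.integral_undef h2))).symm
  · exact sub_eq_zero.1 ((h 0 h0 t ht).trans (intervalIntegral.integral_undef h1))

namespace IsWeakSolution

lemma congr (h : IsWeakSolution V T ν) {ν' : ℝ → Measure E} (heq : ∀ t ∈ Icc 0 T, ν' t = ν t) :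
    IsWeakSolution V T ν' := fun u hu huc s hs t ht => by
  rw [heq s hs, heq t ht, h u hu huc s hs t ht]
  exact intervalIntegral.integral_congr fun r hr => by
    simp only [heq r (uIcc_subset_Icc hs ht hr)]

lemma exists_clamped_kernel [FiniteDimensional ℝ E] [BorelSpace E] [∀ t, IsFiniteMeasure (ν t)]
    (h : IsWeakSolution V T ν) (hT : 0 ≤ T) :
    ∃ κ : Kernel ℝ E, (∀ t ∈ Icc 0 T, κ t = ν t) ∧ ∀ t, ∃ s ∈ Icc 0 T, κ t = κ s := by
  refine ⟨⟨fun t => ν (projIcc 0 T hT t), measurable_of_measurable_integral fun u hu huc => ?_⟩,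
    fun t ht => ?_, fun t => ⟨projIcc 0 T hT t, (projIcc 0 T hT t).2, ?_⟩⟩
  · have hcont := continuousOn_of_sub_eq_integral (h u hu huc)
    exact (hcont.domRestrict.comp continuous_projIcc).measurable
  · simp only [Kernel.coe_mk, projIcc_of_mem hT ht]
  · simp only [Kernel.coe_mk, projIcc_val]

end IsWeakSolution

end WeakSolution

section Clock

open Filter ProbabilityTheory

lemma isSFiniteKernel_of_isFiniteMeasure {α β : Type*} [MeasurableSpace α] [MeasurableSpace β]
    (κ : Kernel α β) [∀ a, IsFiniteMeasure (κ a)] : IsSFiniteKernel κ := by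
  classical
  let s (n : ℕ) : Set α := {a | ⌊(κ a).real univ⌋₊ = n}
  have hs (n : ℕ) : MeasurableSet (s n) :=
    (Nat.measurable_floor.comp (κ.measurable_coe .univ).ennreal_toReal) (measurableSet_singleton n)
  refine ⟨fun n => Kernel.piecewise (hs n) κ 0, fun n => ?_, ?_⟩
  · refine ⟨ENNReal.ofReal (n + 1), ENNReal.ofReal_lt_top, fun a => ?_⟩
    rw [Kernel.piecewise_apply']
    split_ifs with ha
    · rw [← ENNReal.ofReal_toReal (measure_ne_top (κ a) univ), ← show _ = n from ha]
      exact ENNReal.ofReal_le_ofReal (Nat.lt_floor_add_one _).le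
    · simp
  · ext a t ht
    rw [Kernel.sum_apply' _ _ ht, tsum_eq_single ⌊(κ a).real univ⌋₊ fun n hn => ?_,
      Kernel.piecewise_apply', if_pos (show a ∈ s _ from rfl)]
    rw [Kernel.piecewise_apply', if_neg fun h => hn h.symm, zero_apply,
      Measure.coe_zero, Pi.zero_apply]

lemma measurable_essSup_kernel {α β : Type*} [MeasurableSpace α] [MeasurableSpace β]
    {κ : Kernel α β} [IsSFiniteKernel κ] {f : α → β → ℝ≥0∞} (hf : Measurable (Function.uncurry f)) :
    Measurable fun a => essSup (f a) (κ a) := by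
  refine measurable_of_Iic fun c => ?_
  have hset : MeasurableSet {p : α × β | c < f p.1 p.2} := measurableSet_lt measurable_const hf
  convert! Kernel.measurable_kernel_prodMk_left (κ := κ) hset (measurableSet_singleton 0) using 1
  ext a
  have hpre : Prod.mk a ⁻¹' {p : α × β | c < f p.1 p.2} = {x | ¬ f a x ≤ c} := by ext x; simp
  simp only [mem_preimage, mem_Iic, mem_singleton_iff, hpre]
  exact ⟨fun h => ae_iff.1 ((ENNReal.ae_le_essSup _).mono fun x hx => hx.trans h),
    fun h => essSup_le_of_ae_le _ (ae_iff.2 h)⟩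

variable {m : ℝ → ℝ≥0} {T : ℝ}

/-- The Lebesgue measure on `[0, T]` with density `m`: measured by it, speeds below `m` are at most
one. -/
def clock (m : ℝ → ℝ≥0) (T : ℝ) : Measure ℝ :=
  (volume.restrict (Icc 0 T)).withDensity fun t => (m t : ℝ≥0∞)

lemma isFiniteMeasure_clock (hmT : ∫⁻ t in Icc 0 T, m t < ⊤) : IsFiniteMeasure (clock m T) :=
  isFiniteMeasure_withDensity hmT.ne

lemma isContinuousClock_clock (hmT : ∫⁻ t in Icc 0 T, m t < ⊤) :
    IsContinuousClock (clock m T) := by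
  intro ε hε
  obtain ⟨δ, hδ, h⟩ := exists_pos_setLIntegral_lt_of_measure_lt hmT.ne
    (ENNReal.ofReal_pos.2 hε).ne'
  obtain ⟨ρ, hρ0, hρ⟩ := ENNReal.lt_iff_exists_nnreal_btwn.1 hδ
  refine ⟨ρ, by exact_mod_cast hρ0, fun s t hst => ENNReal.toReal_le_of_le_ofReal hε.le ?_⟩
  rw [clock, withDensity_apply _ measurableSet_Ioc]
  refine (h _ (lt_of_le_of_lt ?_ hρ)).le
  calc volume.restrict (Icc 0 T) (Ioc s t) ≤ volume (Ioc s t) := Measure.restrict_apply_le _ _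
    _ = ENNReal.ofReal (t - s) := Real.volume_Ioc
    _ ≤ ENNReal.ofReal ρ := ENNReal.ofReal_le_ofReal hst
    _ = ρ := ENNReal.ofReal_coe_nnreal

lemma ae_restrict_of_ae_clock (hm : Measurable m) (hm1 : ∀ r, 1 ≤ m r) {p : ℝ → Prop}
    {s : Set ℝ} (hs : MeasurableSet s) (hsT : s ⊆ Icc 0 T)
    (h : ∀ᵐ r ∂(clock m T).restrict s, p r) : ∀ᵐ r ∂volume.restrict s, p r := by
  rw [clock, restrict_withDensity hs, Measure.restrict_restrict hs, inter_eq_left.2 hsT,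
    ae_withDensity_iff hm.coe_nnreal_ennreal] at h
  filter_upwards [h] with r hr
  exact hr (ENNReal.coe_ne_zero.2 (one_pos.trans_le (hm1 r)).ne')

lemma setIntegral_clock {F : Type*} [NormedAddCommGroup F] [NormedSpace ℝ F] (hm : Measurable m)
    (f : ℝ → F) {s t : ℝ} (hs : 0 ≤ s) (ht : t ≤ T) :
    ∫ r in Ioc s t, f r ∂clock m T = ∫ r in Ioc s t, m r • f r := by
  have hsub : Ioc s t ⊆ Icc 0 T := fun r hr => ⟨hs.trans hr.1.le, hr.2.trans ht⟩
  rw [clock, setIntegral_withDensity_eq_setIntegral_smul hm _ measurableSet_Ioc,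
    Measure.restrict_restrict measurableSet_Ioc, inter_eq_left.2 hsub]

end Clock

section SlowField

open Filter ProbabilityTheory

variable {E : Type*} [NormedAddCommGroup E] {V : ℝ → E → E} {m : ℝ → ℝ≥0} {T : ℝ}

section

variable [NormedSpace ℝ E]

/-- The field `V` in the time scale of `clock m T`, truncated where its speed exceeds `m`. -/
def slowField (V : ℝ → E → E) (m : ℝ → ℝ≥0) (r : ℝ) (y : E) : E :=
  if ‖V r y‖ ≤ m r then (m r)⁻¹ • V r y else 0

lemma norm_slowField_le (r : ℝ) (y : E) : ‖slowField V m r y‖ ≤ 1 := by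
  unfold slowField
  split_ifs with h
  · rw [NNReal.smul_def, norm_smul, NNReal.coe_inv, norm_inv, NNReal.norm_eq]
    exact inv_mul_le_one_of_le₀ h (m r).2
  · simp

lemma smul_slowField {r : ℝ} {y : E} (hm : m r ≠ 0) (h : ‖V r y‖ ≤ m r) :
    m r • slowField V m r y = V r y := by
  rw [slowField, if_pos h, smul_inv_smul₀ hm]

lemma measurable_slowField [MeasurableSpace E] [BorelSpace E]
    (hV : Measurable (Function.uncurry V)) (hm : Measurable m) :
    Measurable (Function.uncurry (slowField V m)) := by
  have hm' : Measurable fun p : ℝ × E => m p.1 := hm.comp measurable_fst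
  exact (hm'.inv.smul hV).ite (measurableSet_le hV.norm hm'.coe_nnreal_real) measurable_const

end

variable [MeasurableSpace E] {κ : Kernel ℝ E}

/-- The function `m ≥ 1` is integrable on `[0, T]` and bounds the speed of the field `V` almost
everywhere along the curve of measures `κ`, so that time may be measured by `clock m T`. -/
structure IsSpeedBound (V : ℝ → E → E) (κ : Kernel ℝ E) (T : ℝ) (m : ℝ → ℝ≥0) : Prop where
  measurable : Measurable m
  one_le : ∀ r, 1 ≤ m r
  lintegral_lt_top : ∫⁻ t in Icc 0 T, m t < ⊤
  ae_norm_le : ∀ᵐ t ∂volume.restrict (Icc 0 T), ∀ᵐ x ∂κ t, ‖V t x‖ ≤ m t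

lemma exists_isSpeedBound [BorelSpace E] [IsSFiniteKernel κ] (hV : Measurable (Function.uncurry V))
    (hbound : (∫⁻ t in Icc 0 T, ⨆ x, (‖V t x‖₊ : ℝ≥0∞)) < ⊤) : ∃ m, IsSpeedBound V κ T m := by
  -- The supremum itself need not be measurable in time.
  set a : ℝ → ℝ≥0∞ := fun t => essSup (fun x => (‖V t x‖₊ : ℝ≥0∞)) (κ t)
  have ha : Measurable a := measurable_essSup_kernel hV.nnnorm.coe_nnreal_ennreal
  have haT : ∫⁻ t in Icc 0 T, a t < ⊤ :=
    (lintegral_mono fun t => essSup_le_of_ae_le _ (.of_forall fun x =>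
      le_iSup (fun x => (‖V t x‖₊ : ℝ≥0∞)) x)).trans_lt hbound
  refine ⟨fun t => (a t).toNNReal + 1, ha.ennreal_toNNReal.add_const 1, fun r => le_add_self, ?_,
    ?_⟩
  · calc ∫⁻ t in Icc 0 T, (((a t).toNNReal + 1 : ℝ≥0) : ℝ≥0∞) ≤ ∫⁻ t in Icc 0 T, (a t + 1) := by
          refine lintegral_mono fun t => ?_
          rw [ENNReal.coe_add, ENNReal.coe_one]
          gcongr
          exact ENNReal.coe_toNNReal_le_self
      _ < ⊤ := by
          rw [lintegral_add_right _ measurable_const]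
          simp [haT]
  · filter_upwards [ae_lt_top ha haT.ne] with t ht
    filter_upwards [ENNReal.ae_le_essSup fun x => (‖V t x‖₊ : ℝ≥0∞)] with x hx
    have hle : ‖V t x‖₊ ≤ (a t).toNNReal :=
      ENNReal.coe_le_coe.1 (hx.trans_eq (ENNReal.coe_toNNReal ht.ne).symm)
    exact NNReal.coe_le_coe.2 (hle.trans (le_add_of_nonneg_right zero_le_one))

namespace IsSpeedBound

lemma ne_zero (h : IsSpeedBound V κ T m) (r : ℝ) : m r ≠ 0 := (one_pos.trans_le (h.one_le r)).ne'

lemma measurableSet_lt_norm [BorelSpace E] (h : IsSpeedBound V κ T m)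
    (hV : Measurable (Function.uncurry V)) :
    MeasurableSet {p : ℝ × E | (m p.1 : ℝ) < ‖V p.1 p.2‖} :=
  measurableSet_lt (h.measurable.comp measurable_fst).coe_nnreal_real hV.norm

lemma compProd_clock_eq_zero [BorelSpace E] (h : IsSpeedBound V κ T m)
    (hV : Measurable (Function.uncurry V)) :
    (clock m T ⊗ₘ κ) {p : ℝ × E | (m p.1 : ℝ) < ‖V p.1 p.2‖} = 0 := by
  rw [measure_eq_zero_iff_ae_notMem]
  refine Measure.ae_compProd_of_ae_ae (h.measurableSet_lt_norm hV).compl ?_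
  filter_upwards [(withDensity_absolutelyContinuous _ _).ae_le h.ae_norm_le] with t ht
  filter_upwards [ht] with x hx
  exact hx.not_gt

variable [NormedSpace ℝ E]

lemma isCaratheodoryCurve (h : IsSpeedBound V κ T m) {γ : ℝ → E}
    (hγ : IsCaratheodoryCurve (clock m T) (slowField V m) T γ)
    (hspeed : ∀ᵐ r ∂(clock m T).restrict (Ioc 0 T), ‖V r (γ r)‖ ≤ m r) :
    IsCaratheodoryCurve volume V T γ where
  continuous := hγ.continuous
  sub_eq t ht := by
    rw [hγ.sub_eq t ht, setIntegral_clock h.measurable _ le_rfl ht.2]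
    have hae := ae_restrict_of_ae_clock h.measurable h.one_le measurableSet_Ioc
      Ioc_subset_Icc_self hspeed
    refine integral_congr_ae ?_
    filter_upwards [ae_restrict_of_ae_restrict_of_subset (Ioc_subset_Ioc_right ht.2) hae] with r hr
    exact smul_slowField (h.ne_zero r) hr

lemma isLocalTransport [BorelSpace E] (h : IsSpeedBound V κ T m)
    (hV : Measurable (Function.uncurry V)) (hκ : IsWeakSolution V T fun t => κ t)
    (hclamp : ∀ t, ∃ s ∈ Icc 0 T, κ t = κ s) :
    IsLocalTransport (clock m T) κ (slowField V m) T where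
  measurable := measurable_slowField hV h.measurable
  norm_le := norm_slowField_le
  bounded u hu huc := by
    obtain ⟨C, hC⟩ := isCompact_Icc.exists_bound_of_continuousOn
      (continuousOn_of_sub_eq_integral (hκ u hu huc))
    refine ⟨C, fun t => ?_⟩
    obtain ⟨s, hs, hst⟩ := hclamp t
    exact hst ▸ hC s hs
  clamped := hclamp
  integral_sub u hu huc s t hs hst ht := by
    rw [hκ u hu huc s ⟨hs, hst.trans ht⟩ t ⟨hs.trans hst, ht⟩,
      setIntegral_clock h.measurable _ hs ht, intervalIntegral.integral_of_le hst]
    refine integral_congr_ae ?_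
    have hsub : Ioc s t ⊆ Icc 0 T := fun r hr => ⟨hs.trans hr.1.le, hr.2.trans ht⟩
    filter_upwards [ae_restrict_of_ae_restrict_of_subset hsub h.ae_norm_le] with r hr
    rw [NNReal.smul_def, ← integral_smul]
    refine integral_congr_ae ?_
    filter_upwards [hr] with y hy
    rw [← map_smul, ← NNReal.smul_def, smul_slowField (h.ne_zero r) hy]

end IsSpeedBound

end SlowField

section Uniqueness

open Filter ProbabilityTheory

lemma le_of_forall_isBoundedLipschitz_integral_le {α : Type*} [PseudoMetricSpace α]
    [MeasurableSpace α] [BorelSpace α] {μ ν : Measure α} [IsFiniteMeasure μ] [IsFiniteMeasure ν]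
    (h : ∀ (g : α → ℝ) (K : ℝ), IsBoundedLipschitz g K → (∀ x, 0 ≤ g x) →
      ∫ x, g x ∂μ ≤ ∫ x, g x ∂ν) : μ ≤ ν := by
  have hclosed {F : Set α} (hF : IsClosed F) : μ F ≤ ν F := by
    have hpos (n : ℕ) : (0 : ℝ) < 1 / (n + 1) := Nat.one_div_pos_of_nat
    have hlim (ρ : Measure α) [IsFiniteMeasure ρ] := tendsto_integral_thickenedIndicator_of_isClosed
      ρ hF hpos tendsto_one_div_add_atTop_nhds_zero_nat
    refine (ENNReal.toReal_le_toReal (measure_ne_top _ _) (measure_ne_top _ _)).1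
      (le_of_tendsto_of_tendsto' (hlim μ) (hlim ν) fun n =>
        h _ (max 1 ((1 / (n + 1 : ℝ)).toNNReal⁻¹ : ℝ≥0)) ⟨fun x => ?_, fun x y => ?_⟩
          fun x => NNReal.coe_nonneg _)
    · rw [NNReal.norm_eq]
      exact le_max_of_le_left (thickenedIndicator_le_one (hpos n) F x)
    · rw [← dist_eq_norm]
      exact ((lipschitzWith_thickenedIndicator (hpos n) F).dist_le_mul x y).trans
        (mul_le_mul_of_nonneg_right (le_max_right _ _) dist_nonneg)
  refine Measure.le_iff.2 fun s hs => ?_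
  rw [hs.measure_eq_iSup_isClosed_of_ne_top (measure_ne_top μ s)]
  exact iSup₂_le fun F hFs => iSup_le fun hF => (hclosed hF).trans (measure_mono hFs)

variable {E : Type*} [NormedAddCommGroup E] [NormedSpace ℝ E] [FiniteDimensional ℝ E]
  [MeasurableSpace E] [BorelSpace E] {V : ℝ → E → E} {T S A B : ℝ} {ν : ℝ → Measure E}
  [∀ t, IsFiniteMeasure (ν t)]

namespace IsWeakSolution

lemma exists_isTransport (h : IsWeakSolution V T ν) (hV : Measurable (Function.uncurry V))
    (hbound : (∫⁻ t in Icc 0 T, ⨆ x, (‖V t x‖₊ : ℝ≥0∞)) < ⊤) (hS : S ∈ Icc 0 T)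
    [hprob : IsProbabilityMeasure (ν S)] :
    ∃ (κ : Kernel ℝ E) (m : ℝ → ℝ≥0), (∀ t ∈ Icc 0 T, κ t = ν t) ∧ IsMarkovKernel κ ∧
      IsSpeedBound V κ T m ∧ IsTransport (clock m T) κ (slowField V m) T := by
  obtain ⟨κ, hκν, hclamp⟩ := h.exists_clamped_kernel (hS.1.trans hS.2)
  have hfin (t : ℝ) : IsFiniteMeasure (κ t) := by
    obtain ⟨s, hs, hts⟩ := hclamp t
    rw [hts, hκν s hs]
    infer_instance
  have := isSFiniteKernel_of_isFiniteMeasure κ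
  obtain ⟨m, hm⟩ := exists_isSpeedBound (κ := κ) hV hbound
  have := isFiniteMeasure_clock hm.lintegral_lt_top
  have hloc := hm.isLocalTransport hV (h.congr hκν) hclamp
  have := hloc.isFiniteKernel (isContinuousClock_clock hm.lintegral_lt_top)
  exact ⟨κ, m, hκν, hloc.isMarkovKernel hS (by rwa [hκν S hS]), hm, hloc.isTransport⟩

lemma isProbabilityMeasure (h : IsWeakSolution V T ν) (hV : Measurable (Function.uncurry V))
    (hbound : (∫⁻ t in Icc 0 T, ⨆ x, (‖V t x‖₊ : ℝ≥0∞)) < ⊤) (hS : S ∈ Icc 0 T)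
    [IsProbabilityMeasure (ν S)] (hB : B ∈ Icc 0 T) : IsProbabilityMeasure (ν B) := by
  obtain ⟨κ, -, hκν, hκ, -⟩ := h.exists_isTransport hV hbound hS
  rw [← hκν B hB]
  infer_instance

theorem le_lintegral_add_integral (h : IsWeakSolution V T ν) (hV : Measurable (Function.uncurry V))
    (hbound : (∫⁻ t in Icc 0 T, ⨆ x, (‖V t x‖₊ : ℝ≥0∞)) < ⊤) (hT : 0 < T) (hA : A ∈ Icc 0 T)
    (hB : B ∈ Icc 0 T) [IsProbabilityMeasure (ν A)] {f : E → ℝ≥0∞} (hf : Measurable f)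
    {g : E → ℝ} {K c : ℝ} (hg : IsBoundedLipschitz g K) (hg0 : ∀ x, 0 ≤ g x)
    (hcurve : ∀ γ, IsCaratheodoryCurve volume V T γ →
      ENNReal.ofReal c ≤ f (γ A) + ENNReal.ofReal (g (γ B))) :
    ENNReal.ofReal c ≤ ∫⁻ x, f x ∂ν A + ENNReal.ofReal (∫ x, g x ∂ν B) := by
  obtain ⟨κ, m, hκν, hκ, hm, htr⟩ := h.exists_isTransport hV hbound hA
  have := isFiniteMeasure_clock hm.lintegral_lt_top
  rw [← hκν A hA, ← hκν B hB]
  exact htr.le_lintegral_add_integral (isContinuousClock_clock hm.lintegral_lt_top) hT hg hg0 hA hB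
    (hm.measurableSet_lt_norm hV) (hm.compProd_clock_eq_zero hV) hf fun γ hγ hγN =>
      hcurve γ (hm.isCaratheodoryCurve hγ (hγN.mono fun r hr => not_lt.1 hr))

lemma integral_comp_le (h : IsWeakSolution V T ν) (hV : Measurable (Function.uncurry V))
    (hbound : (∫⁻ t in Icc 0 T, ⨆ x, (‖V t x‖₊ : ℝ≥0∞)) < ⊤) (hT : 0 < T) (hA : A ∈ Icc 0 T)
    (hB : B ∈ Icc 0 T) [IsProbabilityMeasure (ν A)] {Φ : E → E} (hΦ : Measurable Φ)
    (hcurve : ∀ γ, IsCaratheodoryCurve volume V T γ → Φ (γ A) = γ B) {g : E → ℝ} {K : ℝ}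
    (hg : IsBoundedLipschitz g K) (hg0 : ∀ x, 0 ≤ g x) :
    ∫ x, g (Φ x) ∂ν A ≤ ∫ x, g x ∂ν B := by
  have hgK (x : E) : 0 ≤ K - g x := sub_nonneg.2 ((le_abs_self _).trans (hg.norm_le x))
  have hint : Integrable (fun x => g (Φ x)) (ν A) := hg.integrable_comp hΦ
  have hnonneg : 0 ≤ ∫ x, (K - g (Φ x)) ∂ν A := integral_nonneg fun x => hgK (Φ x)
  have hle := h.le_lintegral_add_integral hV hbound hT hA hB (c := K)
    (f := fun x => ENNReal.ofReal (K - g (Φ x)))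
    ((hg.continuous.measurable.comp hΦ).const_sub K).ennreal_ofReal hg hg0 fun γ hγ => by
      rw [hcurve γ hγ, ← ENNReal.ofReal_add (hgK _) (hg0 _), sub_add_cancel]
  rw [← ofReal_integral_eq_lintegral_ofReal (f := fun x => K - g (Φ x))
      ((integrable_const K).sub hint) (.of_forall fun x => hgK (Φ x)),
    ← ENNReal.ofReal_add hnonneg (integral_nonneg hg0),
    ENNReal.ofReal_le_ofReal_iff (add_nonneg hnonneg (integral_nonneg hg0)),
    integral_sub (integrable_const K) hint, integral_const, probReal_univ, one_smul] at hle
  linarith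

theorem eq_map (h : IsWeakSolution V T ν) (hV : Measurable (Function.uncurry V))
    (hbound : (∫⁻ t in Icc 0 T, ⨆ x, (‖V t x‖₊ : ℝ≥0∞)) < ⊤) (hT : 0 < T) (hA : A ∈ Icc 0 T)
    (hB : B ∈ Icc 0 T) [IsProbabilityMeasure (ν A)] {Φ : E → E} (hΦ : Measurable Φ)
    (hcurve : ∀ γ, IsCaratheodoryCurve volume V T γ → Φ (γ A) = γ B) :
    ν B = (ν A).map Φ := by
  have := h.isProbabilityMeasure hV hbound hA hB
  have := Measure.isProbabilityMeasure_map (μ := ν A) hΦ.aemeasurable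
  refine (Measure.eq_of_le_of_isProbabilityMeasure
    (le_of_forall_isBoundedLipschitz_integral_le fun g K hg hg0 => ?_)).symm
  rw [integral_map hΦ.aemeasurable hg.continuous.aestronglyMeasurable]
  exact h.integral_comp_le hV hbound hT hA hB hΦ hcurve hg hg0

end IsWeakSolution

end Uniqueness

section ChainRule

open Filter

lemma absolutelyContinuousOnInterval_of_dist_le {F G : Type*} [PseudoMetricSpace F]
    [PseudoMetricSpace G] {f : ℝ → F} {φ : ℝ → G} {a b : ℝ}
    (hφ : AbsolutelyContinuousOnInterval φ a b)
    (h : ∀ x ∈ uIcc a b, ∀ y ∈ uIcc a b, dist (f x) (f y) ≤ dist (φ x) (φ y)) :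
    AbsolutelyContinuousOnInterval f a b := by
  refine squeeze_zero' (Eventually.of_forall fun I => Finset.sum_nonneg fun i _ => dist_nonneg)
    ?_ hφ
  refine Eventually.filter_mono inf_le_right (eventually_principal.2 fun I hI => ?_)
  exact Finset.sum_le_sum fun i hi => h _ (hI.1 i hi).1 _ (hI.1 i hi).2

variable {E : Type*} [NormedAddCommGroup E] [NormedSpace ℝ E]

lemma absolutelyContinuousOnInterval_comp_integral {F : Type*} [PseudoMetricSpace F] {v : ℝ → E}
    {a b : ℝ} (hv : IntervalIntegrable v volume a b) {u : E → F} {L : ℝ≥0} (hu : LipschitzWith L u)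
    (x₀ : E) : AbsolutelyContinuousOnInterval (fun t => u (x₀ + ∫ r in a..t, v r)) a b := by
  refine absolutelyContinuousOnInterval_of_dist_le
    ((hv.norm.absolutelyContinuousOnInterval_intervalIntegral left_mem_uIcc).const_mul L)
    fun x hx y hy => (hu.dist_le_mul _ _).trans ?_
  have hint {t : ℝ} (ht : t ∈ uIcc a b) : IntervalIntegrable v volume a t :=
    hv.mono_set (uIcc_subset_uIcc_left ht)
  rw [Real.dist_eq, ← mul_sub, abs_mul, NNReal.abs_eq, dist_eq_norm, add_sub_add_left_eq_sub,
    intervalIntegral.integral_interval_sub_left (hint hx).norm (hint hy).norm,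
    intervalIntegral.integral_interval_sub_left (hint hx) (hint hy)]
  exact mul_le_mul_of_nonneg_left intervalIntegral.norm_integral_le_abs_integral_norm L.2

lemma integral_fderiv_apply_eq_sub [CompleteSpace E] {γ v : ℝ → E} {a b : ℝ}
    (hv : IntervalIntegrable v volume a b)
    (hγ : ∀ t ∈ uIcc a b, γ t - γ a = ∫ r in a..t, v r) {u : E → ℝ} (hu : Differentiable ℝ u)
    {L : ℝ≥0} (hL : LipschitzWith L u) :
    ∫ r in a..b, fderiv ℝ u (γ r) (v r) = u (γ b) - u (γ a) := by
  set Γ : ℝ → E := fun t => γ a + ∫ r in a..t, v r with hΓ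
  have hΓγ {t : ℝ} (ht : t ∈ uIcc a b) : Γ t = γ t := by
    simp only [hΓ, ← hγ t ht, add_sub_cancel]
  have hftc := (absolutelyContinuousOnInterval_comp_integral hv hL (γ a)).integral_deriv_eq_sub
  rw [← hΓγ left_mem_uIcc, ← hΓγ right_mem_uIcc]
  refine (intervalIntegral.integral_congr_ae ?_).trans hftc
  filter_upwards [hv.ae_hasDerivAt_integral] with r hr hrab
  have hr' := uIoc_subset_uIcc hrab
  have hderiv : HasDerivAt Γ (v r) r := (hr hr' a left_mem_uIcc).const_add (γ a)
  rw [← hΓγ hr']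
  exact ((hu (Γ r)).hasFDerivAt.comp_hasDerivAt r hderiv).deriv.symm

end ChainRule

section Flow

lemma integrable_uncurry_of_enorm_le {α β F : Type*} [MeasurableSpace α] [MeasurableSpace β]
    [NormedAddCommGroup F] {τ : Measure α} {μ : Measure β} [IsFiniteMeasure μ]
    {f : α → β → F} (hf : AEStronglyMeasurable (Function.uncurry f) (τ.prod μ)) {M : α → ℝ≥0∞}
    (hfM : ∀ a x, ‖f a x‖ₑ ≤ M a) (hM : ∫⁻ a, M a ∂τ < ⊤) :
    Integrable (Function.uncurry f) (τ.prod μ) := by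
  refine ⟨hf, (lintegral_prod _ hf.enorm).trans_lt ?_⟩
  calc ∫⁻ a, ∫⁻ x, ‖f a x‖ₑ ∂μ ∂τ ≤ ∫⁻ a, M a * μ univ ∂τ :=
        lintegral_mono fun a => (lintegral_mono (hfM a)).trans_eq (lintegral_const _)
    _ = (∫⁻ a, M a ∂τ) * μ univ := lintegral_mul_const' _ _ (measure_ne_top _ _)
    _ < ⊤ := ENNReal.mul_lt_top hM (measure_lt_top _ _)

variable {E : Type*} [NormedAddCommGroup E] [NormedSpace ℝ E] {V : ℝ → E → E} {T S : ℝ}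

namespace IsCaratheodoryCurve

variable {τ : Measure ℝ} {γ : ℝ → E}

lemma congr (hγ : IsCaratheodoryCurve τ V T γ) {γ' : ℝ → E} (hγ' : Continuous γ')
    (heq : EqOn γ' γ (Icc 0 T)) : IsCaratheodoryCurve τ V T γ' where
  continuous := hγ'
  sub_eq t ht := by
    rw [heq ht, heq ⟨le_rfl, ht.1.trans ht.2⟩, hγ.sub_eq t ht]
    exact setIntegral_congr_fun measurableSet_Ioc fun r hr => by
      simp only [heq ⟨hr.1.le, hr.2.trans ht.2⟩]

variable [MeasurableSpace E] [BorelSpace E]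

lemma intervalIntegrable (hγ : IsCaratheodoryCurve volume V T γ)
    [SecondCountableTopology E] (hV : Measurable (Function.uncurry V))
    (hbound : (∫⁻ t in Icc 0 T, ⨆ x, (‖V t x‖₊ : ℝ≥0∞)) < ⊤) {s t : ℝ} (hs : s ∈ Icc 0 T)
    (ht : t ∈ Icc 0 T) : IntervalIntegrable (fun r => V r (γ r)) volume s t := by
  rw [intervalIntegrable_iff]
  refine IntegrableOn.mono_set (t := Icc 0 T) ⟨?_, ?_⟩
    (uIoc_subset_uIcc.trans (uIcc_subset_Icc hs ht))
  · exact (hV.comp (measurable_id.prodMk hγ.continuous.measurable)).aestronglyMeasurable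
  · exact lt_of_le_of_lt (lintegral_mono fun r => le_iSup (fun x => (‖V r x‖₊ : ℝ≥0∞)) (γ r)) hbound

lemma integral_fderiv_apply_eq_sub [FiniteDimensional ℝ E]
    (hγ : IsCaratheodoryCurve volume V T γ) (hV : Measurable (Function.uncurry V))
    (hbound : (∫⁻ t in Icc 0 T, ⨆ x, (‖V t x‖₊ : ℝ≥0∞)) < ⊤) {u : E → ℝ}
    (hu : Differentiable ℝ u) {L : ℝ≥0} (hL : LipschitzWith L u) {s t : ℝ} (hs : s ∈ Icc 0 T)
    (ht : t ∈ Icc 0 T) : ∫ r in s..t, fderiv ℝ u (γ r) (V r (γ r)) = u (γ t) - u (γ s) := by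
  have hint {a b : ℝ} := hγ.intervalIntegrable hV hbound (s := a) (t := b)
  refine _root_.integral_fderiv_apply_eq_sub (hint hs ht) (fun r hr => ?_) hu hL
  have hr' := uIcc_subset_Icc hs ht hr
  have h0 : (0 : ℝ) ∈ Icc 0 T := ⟨le_rfl, hs.1.trans hs.2⟩
  rw [← sub_sub_sub_cancel_right _ _ (γ 0), hγ.sub_eq r hr', hγ.sub_eq s hs,
    ← intervalIntegral.integral_of_le hr'.1, ← intervalIntegral.integral_of_le hs.1,
    intervalIntegral.integral_interval_sub_left (hint h0 hr') (hint h0 hs)]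

end IsCaratheodoryCurve

/-- The curve through `x` at time `S` of the field `V` exists, is unique on `[0, T]`, and its value
at time `t` is `Y t x`; nothing is asked of `Y` outside `[0, T]`. -/
structure IsFlowFrom (V : ℝ → E → E) (T S : ℝ) (Y : ℝ → E → E) : Prop where
  exists_curve : ∀ x, ∃ γ, IsCaratheodoryCurve volume V T γ ∧ γ S = x
  apply_eq : ∀ γ, IsCaratheodoryCurve volume V T γ → ∀ t ∈ Icc 0 T, Y t (γ S) = γ t

namespace IsFlowFrom

variable {Y : ℝ → E → E}

lemma isCaratheodoryCurve_projIcc (h : IsFlowFrom V T S Y) (hT : 0 ≤ T) (x : E) :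
    IsCaratheodoryCurve volume V T fun t => Y (projIcc 0 T hT t) x := by
  obtain ⟨γ, hγ, rfl⟩ := h.exists_curve x
  have heq (t : ℝ) := h.apply_eq γ hγ _ (projIcc 0 T hT t).2
  simp only [heq]
  exact hγ.congr (hγ.continuous.comp (continuous_subtype_val.comp continuous_projIcc))
    fun t ht => by simp only [projIcc_of_mem hT ht]

lemma apply_self (h : IsFlowFrom V T S Y) (hS : S ∈ Icc 0 T) : Y S = id := funext fun x => by
  obtain ⟨γ, hγ, rfl⟩ := h.exists_curve x
  exact h.apply_eq γ hγ S hS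

end IsFlowFrom

variable [FiniteDimensional ℝ E] [MeasurableSpace E] [BorelSpace E]

lemma isWeakSolution_map (hV : Measurable (Function.uncurry V))
    (hbound : (∫⁻ t in Icc 0 T, ⨆ x, (‖V t x‖₊ : ℝ≥0∞)) < ⊤) {μ : Measure E} [IsFiniteMeasure μ]
    {Y : ℝ → E → E} (hYm : ∀ t, Measurable (Y t))
    (hY : ∀ x, IsCaratheodoryCurve volume V T fun t => Y t x) :
    IsWeakSolution V T fun t => μ.map (Y t) := by
  intro u hu huc s hs t ht
  obtain ⟨L, hL⟩ := (hu.of_le (m := 1) (by simp)).lipschitzWith_of_hasCompactSupport huc (by simp)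
  obtain ⟨C, hC⟩ := huc.exists_bound_of_continuous hu.continuous
  have hui (r : ℝ) : Integrable (fun x => u (Y r x)) μ :=
    .of_bound (hu.continuous.measurable.comp (hYm r)).aestronglyMeasurable C
      (.of_forall fun x => hC _)
  have hYj : Measurable (Function.uncurry Y) :=
    measurable_uncurry_of_continuous_of_measurable (fun x => (hY x).continuous) hYm
  have hint : Integrable (Function.uncurry fun r x => fderiv ℝ u (Y r x) (V r (Y r x)))
      ((volume.restrict (uIoc s t)).prod μ) := by
    refine integrable_uncurry_of_enorm_le (M := fun r => L * ⨆ x, (‖V r x‖₊ : ℝ≥0∞))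
      (measurable_fderiv_apply hu hYj (hV.comp (measurable_fst.prodMk hYj))).aestronglyMeasurable
      (fun r x => ?_) ?_
    · refine ((fderiv ℝ u (Y r x)).le_opENorm _).trans (mul_le_mul' ?_ ?_)
      · exact ENNReal.coe_le_coe.2 (norm_fderiv_le_of_lipschitz ℝ hL)
      · exact le_iSup (fun x => (‖V r x‖₊ : ℝ≥0∞)) (Y r x)
    · rw [lintegral_const_mul' _ _ ENNReal.coe_ne_top]
      exact ENNReal.mul_lt_top ENNReal.coe_lt_top ((lintegral_mono_set
        (uIoc_subset_uIcc.trans (uIcc_subset_Icc hs ht))).trans_lt hbound)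
  have hmap (r : ℝ) : ∫ x, fderiv ℝ u x (V r x) ∂μ.map (Y r) =
      ∫ x, fderiv ℝ u (Y r x) (V r (Y r x)) ∂μ :=
    integral_map (hYm r).aemeasurable (measurable_fderiv_apply hu measurable_id
      (hV.comp measurable_prodMk_left)).aestronglyMeasurable
  simp only [hmap]
  rw [integral_map (hYm t).aemeasurable hu.continuous.aestronglyMeasurable,
    integral_map (hYm s).aemeasurable hu.continuous.aestronglyMeasurable,
    intervalIntegral_integral_swap hint, ← integral_sub (hui t) (hui s)]
  exact integral_congr_ae (.of_forall fun x =>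
    ((hY x).integral_fderiv_apply_eq_sub hV hbound (hu.differentiable (by simp)) hL hs ht).symm)

namespace IsFlowFrom

lemma isWeakSolution_map {Y : ℝ → E → E} (h : IsFlowFrom V T S Y)
    (hV : Measurable (Function.uncurry V))
    (hbound : (∫⁻ t in Icc 0 T, ⨆ x, (‖V t x‖₊ : ℝ≥0∞)) < ⊤) (hT : 0 ≤ T)
    (hYm : ∀ t ∈ Icc 0 T, Measurable (Y t)) {μ : Measure E} [IsFiniteMeasure μ] :
    IsWeakSolution V T fun t => μ.map (Y t) :=
  (_root_.isWeakSolution_map (μ := μ) hV hbound (fun t => hYm _ (projIcc 0 T hT t).2)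
    (h.isCaratheodoryCurve_projIcc hT)).congr fun t ht => by simp only [projIcc_of_mem hT ht]

end IsFlowFrom

end Flow

theorem stmt11_general {E : Type*} [NormedAddCommGroup E] [NormedSpace ℝ E]
    [FiniteDimensional ℝ E] [MeasurableSpace E] [BorelSpace E] {T S : ℝ} {V : ℝ → E → E}
    (hV : Measurable (Function.uncurry V))
    (hbound : (∫⁻ t in Icc 0 T, ⨆ x, (‖V t x‖₊ : ℝ≥0∞)) < ⊤) {Y : ℝ → E → E}
    (hY : IsFlowFrom V T S Y) (hYm : ∀ t ∈ Icc 0 T, Measurable (Y t)) (hS : S ∈ Icc 0 T)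
    (μ : Measure E) [IsProbabilityMeasure μ] :
    IsWeakSolution V T (fun t => μ.map (Y t)) ∧ μ.map (Y S) = μ ∧
      ∀ ν : ℝ → Measure E, (∀ t, IsFiniteMeasure (ν t)) → IsWeakSolution V T ν → ν S = μ →
        ∀ t ∈ Icc 0 T, ν t = μ.map (Y t) := by
  have hT : 0 ≤ T := hS.1.trans hS.2
  have hmap : μ.map (Y S) = μ := by rw [hY.apply_self hS, Measure.map_id]
  refine ⟨hY.isWeakSolution_map hV hbound hT hYm, hmap, fun ν _ hν hνS t ht => ?_⟩
  subst hνS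
  obtain rfl | hTpos := hT.eq_or_lt
  · obtain rfl : t = S := (le_antisymm ht.2 ht.1).trans (le_antisymm hS.1 hS.2)
    exact hmap.symm
  · exact hν.eq_map hV hbound hTpos hS ht (hYm t ht) fun γ hγ => hY.apply_eq γ hγ t ht

section EuclideanFlow

variable {d : ℕ} {T : ℝ} {hT : 0 ≤ T}
  {V : ℝ → EuclideanSpace ℝ (Fin d) → EuclideanSpace ℝ (Fin d)}

lemma isSolution_iff {γ : C(Icc (0 : ℝ) T, EuclideanSpace ℝ (Fin d))} :
    IsSolution T hT V γ ↔ IsCaratheodoryCurve volume V T fun t => γ (projIcc 0 T hT t) := by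
  have hsub (t : Icc (0 : ℝ) T) :
      (γ (projIcc 0 T hT t) - γ (projIcc 0 T hT 0) =
        ∫ s in Ioc 0 (t : ℝ), V s (γ (projIcc 0 T hT s))) ↔
      γ t - γ ⟨0, left_mem_Icc.2 hT⟩ = ∫ s in (0 : ℝ)..t, V s (γ (projIcc 0 T hT s)) := by
    rw [projIcc_val, projIcc_left, intervalIntegral.integral_of_le t.2.1]
  exact ⟨fun h => ⟨γ.continuous.comp continuous_projIcc, fun t ht => (hsub ⟨t, ht⟩).2 (h ⟨t, ht⟩)⟩,
    fun h t => (hsub t).1 (h.sub_eq t t.2)⟩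

lemma IsFlow.isFlowFrom {X : ℝ → ℝ → EuclideanSpace ℝ (Fin d) → EuclideanSpace ℝ (Fin d)}
    (hX : IsFlow T hT V X) {S : ℝ} (hS : S ∈ Icc 0 T) : IsFlowFrom V T S (X S) where
  exists_curve x := by
    obtain ⟨γ, hγ, hγS, -⟩ := hX S hS x
    exact ⟨_, isSolution_iff.1 hγ, by rw [projIcc_of_mem hT hS, hγS]⟩
  apply_eq γ hγ t ht := by
    obtain ⟨γ', -, -, hXγ', huniq⟩ := hX S hS (γ S)
    have hcont : Continuous fun r : Icc 0 T => γ r := hγ.continuous.comp continuous_subtype_val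
    rw [hXγ' ⟨t, ht⟩, ← huniq ⟨fun r => γ r, hcont⟩ (isSolution_iff.2 ?_) rfl, ContinuousMap.coe_mk]
    exact hγ.congr (hcont.comp continuous_projIcc) fun t ht => by
      simp only [ContinuousMap.coe_mk, projIcc_of_mem hT ht]

end EuclideanFlow

/-- if the ODE is uniquely solved by a flow `X`, then for each
`S ∈ [0,T]` and each probability measure `μ`, the curve `μ_t = (X_S^t)_♯ μ`
is the unique nonnegative-measure-valued solution of the continuity equation
with value `μ` at time `S`. -/
theorem stmt11 (d : ℕ) (T : ℝ) (hT : 0 ≤ T)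
    (V : ℝ → EuclideanSpace ℝ (Fin d) → EuclideanSpace ℝ (Fin d))
    (hV : Measurable (Function.uncurry V))
    (hbound : (∫⁻ t in Set.Icc (0:ℝ) T, ⨆ x, (‖V t x‖₊ : ℝ≥0∞)) < ⊤)
    (X : ℝ → ℝ → EuclideanSpace ℝ (Fin d) → EuclideanSpace ℝ (Fin d))
    (hX : IsFlow T hT V X)
    (hXmeas : ∀ s t : ℝ, Measurable (X s t))
    (S : ℝ) (hS : S ∈ Set.Icc (0:ℝ) T)
    (μ : Measure (EuclideanSpace ℝ (Fin d))) (hμ : IsProbabilityMeasure μ) :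
    IsMeasureSolution T V (fun t => Measure.map (X S t) μ) ∧
    Measure.map (X S S) μ = μ ∧
    ∀ ν : ℝ → Measure (EuclideanSpace ℝ (Fin d)),
      (∀ t, IsFiniteMeasure (ν t)) → IsMeasureSolution T V ν → ν S = μ →
      ∀ t ∈ Set.Icc (0:ℝ) T, ν t = Measure.map (X S t) μ := by
  exact stmt11_general hV hbound (hX.isFlowFrom hS) (fun t _ => hXmeas S t) hS μ
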